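/- arXiv:1512.09174 — 2 statements merged into one kernel-verified Lean document; each statement's English description precedes it below -/
import Mathlib

section
/- Suppose f satisfies (H) and (H') with constants μ, β, σ > 0, and moreover -π/2 < f'(0) < 0 and β < σ/(2 + μ/σ). Then the equation x'(t) = f(x(t-1)) has at least two distinct SOP solutions p and q (q is not a time translate of p). Moreover each of p, q has minimal period equal to z'' - z for some three consecutive zeros z < z' < z'' of it (consecutive meaning it has no zeros in (z, z') ∪ (z', z'')). -/
/-!
Cycles are fixed points of a return map on the convex compact set of nondecreasing Lipschitz
profiles on `[-1, 0]` vanishing at `-1`: a profile generates a solution which is positive up to a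
first zero `z`, and minus its segment on `[z, z + 1]` is again a profile; the half-return is applied
twice, the second time for the reflected nonlinearity `v ↦ -g (-v)`.

Suppose first that `g v = -v` near `0`. Then the zero profile is strictly attracting, and the
hypothesis on `β`, `σ`, `μ` provides a `θ` such that the profiles with `φ 0 ≥ β + μ θ` and
`φ (-1 + θ) ≥ β` are mapped strictly into themselves. Schauder's theorem on this region gives one
cycle. Between the two attracting regions there is a second fixed point; it comes from Schauder's
theorem for the return map augmented by a scalar unknown. The Schauder–Tychonoff theorem is reduced
to Brouwer's by a partition of unity, and Brouwer's theorem follows from the absence of `C¹`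
retractions of the ball onto the sphere.

For general `f`, write `f x = -x q x` and replace `q` by `1` near `0` by means of a cutoff that is
affine in `log |x|`. The two cycles of the approximations obey uniform bounds and subconverge to
solutions of the equation for `f`. A limit vanishes only if the heights of the cycles tend to `0`;
the rescaled cycles then converge to a nonzero periodic solution of `y'(t) = -k y(t - 1)` with `k` a
convex combination of `1` and `-f'(0)`, because the logarithmic cutoff is asymptotically scale
invariant. As `0 < k < π/2`, the characteristic function `λ + k e^{-λ}` has no imaginary root, so
all Fourier coefficients of a periodic solution vanish. Hence both limits are cycles of `f`, and
the levels at `0` and `-1 + θ` survive in the limit and tell the two apart.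
-/

open Set Filter

/-- Hypotheses (H): `f` is continuous, satisfies the negative feedback condition,
and is differentiable on a neighborhood of `0` with `f'(0) < 0`. -/
def HypH (f : ℝ → ℝ) : Prop :=
  Continuous f ∧ (∀ x : ℝ, x ≠ 0 → x * f x < 0) ∧
    (∀ᶠ y in nhds (0 : ℝ), DifferentiableAt ℝ f y) ∧ deriv f 0 < 0

/-- A solution on `[-1,∞)` of the delay equation `x'(t) = f (x (t-1))`. -/
def IsSolOn (f x : ℝ → ℝ) : Prop :=
  ContinuousOn x (Ici (-1)) ∧ ∀ t : ℝ, 0 < t → HasDerivAt x (f (x (t - 1))) t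

/-- Membership in the set `K`: `φ(-1) = 0`, `φ` nondecreasing on `[-1,0]`,
continuous there, and `|φ| ≤ M`. -/
def MemK (M : ℝ) (φ : ℝ → ℝ) : Prop :=
  ContinuousOn φ (Icc (-1) 0) ∧ φ (-1) = 0 ∧ MonotoneOn φ (Icc (-1) 0) ∧
    ∀ s ∈ Icc (-1 : ℝ) 0, |φ s| ≤ M

/-- `T` is the minimal (positive) period of `p`. -/
def MinPeriod {α : Type*} (p : ℝ → α) (T : ℝ) : Prop :=
  0 < T ∧ (∀ t, p (t + T) = p t) ∧
    ∀ T' : ℝ, 0 < T' → (∀ t, p (t + T') = p t) → T ≤ T'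

/-- A slowly oscillating periodic (SOP) solution of `x'(t) = f (x (t-1))`:
a nonconstant periodic differentiable solution any two of whose distinct
zeros are separated by more than `1`. -/
def IsSOP (f p : ℝ → ℝ) : Prop :=
  (∀ t : ℝ, HasDerivAt p (f (p (t - 1))) t) ∧
    (∃ T : ℝ, 0 < T ∧ ∀ t, p (t + T) = p t) ∧
    (∃ t s : ℝ, p t ≠ p s) ∧
    ∀ z z' : ℝ, p z = 0 → p z' = 0 → z ≠ z' → 1 < |z - z'|

/-- A Kaplan–Yorke solution: an SOP solution of minimal period `4`
satisfying `x(t) = -x(t-2)`. -/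
def IsKY (f x : ℝ → ℝ) : Prop :=
  IsSOP f x ∧ MinPeriod x 4 ∧ ∀ t : ℝ, x t = -x (t - 2)

/-- Hypotheses (H') with constants `μ, β, σ`. -/
def HypH' (f : ℝ → ℝ) (μ β σ : ℝ) : Prop :=
  (∀ x : ℝ, |f x| ≤ μ) ∧ ∀ x : ℝ, β ≤ |x| → σ ≤ |f x|

/-- Hypotheses (H'') with constants `a, c, δ, γ`. -/
def HypH'' (f : ℝ → ℝ) (a c δ γ : ℝ) : Prop :=
  (∀ x : ℝ, f (-x) = -f x) ∧ (∀ x ∈ Icc (0 : ℝ) (2 * a), |f x| ≤ γ) ∧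
    (∀ x ∈ Icc a (2 * a - c), f x = -γ) ∧ ∀ x ∈ Icc (2 * a) γ, f x = -δ

/-- The minimal period of `p` equals `z'' - z` for three consecutive zeros
`z < z' < z''` of `p`. -/
def PeriodThreeZeros (p : ℝ → ℝ) : Prop :=
  ∃ z z' z'' : ℝ, z < z' ∧ z' < z'' ∧ p z = 0 ∧ p z' = 0 ∧ p z'' = 0 ∧
    (∀ t, t ∈ Ioo z z' ∪ Ioo z' z'' → p t ≠ 0) ∧ MinPeriod p (z'' - z)

section Determinant

variable {K V ι : Type*} [Field K] [AddCommGroup V] [Module K V] [FiniteDimensional K V]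

lemma exists_polynomial_eval_eq_det_one_add_smul (A : V →ₗ[K] V) :
    ∃ P : Polynomial K, P.natDegree ≤ Module.finrank K V ∧
      ∀ t : K, P.eval t = LinearMap.det (1 + t • A) := by
  let b := Module.finBasis K V
  have heval : ∀ (M : Matrix (Fin (Module.finrank K V)) (Fin (Module.finrank K V)) K) (t : K),
      (((Polynomial.X : Polynomial K) • M.map Polynomial.C +
        (1 : Matrix _ _ K).map Polynomial.C).det).eval t = (1 + t • M).det := fun M t => by
    rw [← Polynomial.coe_evalRingHom, RingHom.map_det]
    congr 1
    ext i j
    obtain rfl | hij := eq_or_ne i j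
    · simp [add_comm, mul_comm t]
    · simp [hij, mul_comm t]
  refine ⟨_, (Polynomial.natDegree_det_X_add_C_le (LinearMap.toMatrix b b A) 1).trans_eq
    (Fintype.card_fin _), fun t => ?_⟩
  rw [heval, ← LinearMap.det_toMatrix b, map_add, map_smul, LinearMap.toMatrix_one]

lemma exists_det_one_add_eq_sum_det_one_add_smul {s : Finset ι} {v : ι → K}
    (hv : InjOn v s) (hs : s.card = Module.finrank K V + 1) :
    ∃ c : ι → K, ∑ j ∈ s, c j = 1 ∧ ∀ A : V →ₗ[K] V,
      LinearMap.det (1 + A) = ∑ j ∈ s, c j * LinearMap.det (1 + v j • A) := by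
  classical
  have hne : s.Nonempty := Finset.card_pos.1 (by omega)
  refine ⟨fun j => (Lagrange.basis s v j).eval 1, ?_, fun A => ?_⟩
  · simpa [Polynomial.eval_finsetSum] using
      congrArg (Polynomial.eval 1) (Lagrange.sum_basis hv hne)
  · obtain ⟨P, hdeg, hP⟩ := exists_polynomial_eval_eq_det_one_add_smul A
    have hlt : P.degree < s.card :=
      (Polynomial.degree_le_of_natDegree_le hdeg).trans_lt (by exact_mod_cast by omega)
    calc LinearMap.det (1 + A) = P.eval 1 := by rw [hP, one_smul]
      _ = (Lagrange.interpolate s v fun j => P.eval (v j)).eval 1 := by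
        rw [← Lagrange.eq_interpolate hv hlt]
      _ = ∑ j ∈ s, (Lagrange.basis s v j).eval 1 * LinearMap.det (1 + v j • A) := by
        simp [Lagrange.interpolate_apply, Polynomial.eval_finsetSum, hP, mul_comm]

end Determinant

section Brouwer

/-! ### Brouwer's fixed point theorem -/

section NormedSpace

variable {E F : Type*} [NormedAddCommGroup E] [NormedSpace ℝ E] [FiniteDimensional ℝ E]
  [NormedAddCommGroup F]

lemma det_one_add_pos_of_norm_lt_one {A : E →L[ℝ] E} (hA : ‖A‖ < 1) :
    0 < (1 + A).det := by
  have hcont : Continuous fun s : ℝ => (1 + s • A).det :=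
    ContinuousLinearMap.continuous_det.comp (by fun_prop)
  by_contra! hneg
  obtain ⟨s, hs, hdet⟩ : ∃ s ∈ Icc (0 : ℝ) 1, (1 + s • A).det = 0 := by
    refine intermediate_value_Icc' zero_le_one hcont.continuousOn ⟨by simpa using hneg, ?_⟩
    simp [ContinuousLinearMap.det]
  have hunit : IsUnit (1 - -(s • A)) := isUnit_one_sub_of_norm_lt_one <| by
    rw [norm_neg, norm_smul, Real.norm_of_nonneg hs.1]
    exact (mul_le_of_le_one_left (norm_nonneg A) hs.2).trans_lt hA
  rw [sub_neg_eq_add] at hunit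
  exact ((hunit.map ContinuousLinearMap.toLinearMapRingHom).map LinearMap.det).ne_zero hdet

lemma lipschitzWith_indicator_of_eqOn_frontier {s : Set E} {f : E → F} {C : NNReal}
    (hf : LipschitzOnWith C f s) (hs : IsClosed s) (h0 : EqOn f 0 (frontier s)) :
    LipschitzWith C (s.indicator f) := by
  have hmixed : ∀ x ∈ s, ∀ y ∉ s, dist (f x) 0 ≤ C * dist x y := fun x hx y hy => by
    obtain ⟨z, hz, hdist⟩ := exists_mem_frontier_infDist_compl_eq_dist hx
      (fun h => hy (h ▸ mem_univ y))
    calc dist (f x) 0 = dist (f x) (f z) := by rw [h0 hz, Pi.zero_apply]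
      _ ≤ C * dist x z := hf.dist_le_mul x hx z (hs.frontier_subset hz)
      _ ≤ C * dist x y := by
        rw [← hdist]
        gcongr
        exact Metric.infDist_le_dist_of_mem hy
  refine LipschitzWith.of_dist_le_mul fun x y => ?_
  by_cases hx : x ∈ s <;> by_cases hy : y ∈ s
  · simpa only [indicator_of_mem, hx, hy] using hf.dist_le_mul x hx y hy
  · simpa only [indicator_of_mem hx, indicator_of_notMem hy] using hmixed x hx y hy
  · simpa only [indicator_of_notMem hx, indicator_of_mem hy, dist_comm] using hmixed y hy x hx
  · simpa only [indicator_of_notMem hx, indicator_of_notMem hy, dist_self] using by positivity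

lemma bijOn_id_add_of_lipschitzOnWith {s : Set E} {h : E → E} {C : NNReal}
    (hh : LipschitzOnWith C h s) (hC : C < 1) (hs : IsClosed s) (h0 : EqOn h 0 (frontier s)) :
    BijOn (id + h) s s := by
  rcases subsingleton_or_nontrivial E with hE | hE
  · rw [Subsingleton.elim (id + h) id]
    exact bijOn_id s
  let G : E → E := fun x => x + s.indicator h x
  have hG : ApproximatesLinearOn G
      ((ContinuousLinearEquiv.refl ℝ E : E ≃L[ℝ] E) : E →L[ℝ] E) univ C := by
    rw [ApproximatesLinearOn.approximatesLinearOn_iff_lipschitzOnWith, lipschitzOnWith_univ]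
    convert lipschitzWith_indicator_of_eqOn_frontier hh hs h0
    ext x
    simp [G]
  have hlt : Subsingleton E ∨
      C < ‖((ContinuousLinearEquiv.refl ℝ E).symm : E →L[ℝ] E)‖₊⁻¹ := Or.inr (by
    simpa [ContinuousLinearMap.nnnorm_id] using hC)
  have hbij : Function.Bijective G :=
    ⟨injOn_univ.1 (hG.injOn hlt), hG.surjective hlt⟩
  have hcompl : BijOn G sᶜ sᶜ :=
    (bijOn_id sᶜ).congr fun x hx => by simp [G, indicator_of_notMem hx]
  have hbijOn : BijOn G s s := by simpa only [compl_compl] using hcompl.compl hbij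
  exact hbijOn.congr fun x hx => by simp only [G, indicator_of_mem hx, Pi.add_apply, id]

section Measure

open MeasureTheory

variable [MeasurableSpace E] [BorelSpace E] (ν : Measure E) [ν.IsAddHaarMeasure]
  {s : Set E} {h : E → E} {A : E → E →L[ℝ] E}

lemma setIntegral_det_one_add_of_norm_le {C : ℝ} (hs : IsClosed s) (hconv : Convex ℝ s)
    (hA : ∀ x ∈ s, HasFDerivWithinAt h (A x) s x) (hAC : ∀ x ∈ s, ‖A x‖ ≤ C) (hC : C < 1)
    (h0 : EqOn h 0 (frontier s)) : ∫ x in s, (1 + A x).det ∂ν = ν.real s := by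
  have hlip : LipschitzOnWith C.toNNReal h s := hconv.lipschitzOnWith_of_nnnorm_hasFDerivWithin_le
    hA fun x hx => NNReal.le_toNNReal_of_coe_le (hAC x hx)
  have hbij : BijOn (id + h) s s :=
    bijOn_id_add_of_lipschitzOnWith hlip (Real.toNNReal_lt_one.2 hC) hs h0
  have hvol := integral_image_eq_integral_abs_det_fderiv_smul ν hs.measurableSet
    (fun x hx => (hasFDerivWithinAt_id x s).add (hA x hx)) hbij.injOn (fun _ => (1 : ℝ))
  rw [hbij.image_eq] at hvol
  calc ∫ x in s, (1 + A x).det ∂ν = ∫ x in s, |(1 + A x).det| • (1 : ℝ) ∂ν := by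
        refine setIntegral_congr_fun hs.measurableSet fun x hx => ?_
        have hdet := det_one_add_pos_of_norm_lt_one ((hAC x hx).trans_lt hC)
        simp only [smul_eq_mul, mul_one, abs_of_pos hdet]
    _ = ∫ _ in s, (1 : ℝ) ∂ν := hvol.symm
    _ = ν.real s := by simp

/-- The integral of `det (1 + t A)` is the volume of `s` for all small `t`, and it is a polynomial
in `t`. -/
lemma setIntegral_det_one_add_eq_measureReal (hs : IsCompact s) (hconv : Convex ℝ s)
    (hA : ∀ x ∈ s, HasFDerivWithinAt h (A x) s x) (hcont : ContinuousOn A s)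
    (h0 : EqOn h 0 (frontier s)) : ∫ x in s, (1 + A x).det ∂ν = ν.real s := by
  obtain ⟨C, hC⟩ := hs.exists_bound_of_continuousOn hcont
  let v : ℕ → ℝ := fun j => ((j : ℝ) + 1 + |C|)⁻¹
  have hv : Function.Injective v := fun i j hij => by simpa [v] using hij
  obtain ⟨c, hc, hdet⟩ := exists_det_one_add_eq_sum_det_one_add_smul (V := E)
    (s := Finset.range (Module.finrank ℝ E + 1)) hv.injOn (Finset.card_range _)
  have hsmall : ∀ j, ∫ x in s, (1 + v j • A x).det ∂ν = ν.real s := fun j => by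
    have hj : (0 : ℝ) < j + 1 + |C| := by positivity
    refine setIntegral_det_one_add_of_norm_le ν (C := v j * |C|) hs.isClosed hconv
      (fun x hx => (hA x hx).const_smul (v j)) (fun x hx => ?_) ?_ fun x hx => ?_
    · rw [norm_smul, Real.norm_of_nonneg (inv_pos.2 hj).le]
      gcongr
      exact (hC x hx).trans (le_abs_self C)
    · rw [inv_mul_lt_one₀ hj]
      linarith [(Nat.cast_nonneg j : (0 : ℝ) ≤ j)]
    · simp only [Pi.smul_apply, h0 hx, Pi.zero_apply, smul_zero]
  have hint : ∀ j, IntegrableOn (fun x => (1 + v j • A x).det) s ν := fun j =>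
    (ContinuousLinearMap.continuous_det.comp_continuousOn (by fun_prop)).integrableOn_compact hs
  calc ∫ x in s, (1 + A x).det ∂ν
      = ∫ x in s, ∑ j ∈ Finset.range (Module.finrank ℝ E + 1),
          c j * (1 + v j • A x).det ∂ν := by
        congr 1 with x
        exact hdet (A x)
    _ = ∑ j ∈ Finset.range (Module.finrank ℝ E + 1), c j * ν.real s := by
        rw [integral_finsetSum _ fun j _ => (hint j).const_mul (c j)]
        simp only [integral_const_mul, hsmall]
    _ = ν.real s := by rw [← Finset.sum_mul, hc, one_mul]

end Measure

end NormedSpace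

section InnerProductSpace

variable {E : Type*} [NormedAddCommGroup E] [InnerProductSpace ℝ E] [FiniteDimensional ℝ E]

lemma det_eq_zero_of_eventually_norm_eq {g : E → E} {g' : E →L[ℝ] E} {x : E} {ρ : ℝ}
    (hg : HasFDerivAt g g' x) (hρ : ρ ≠ 0) (hnorm : ∀ᶠ y in nhds x, ‖g y‖ = ρ) :
    g'.det = 0 := by
  have horth : ∀ v, inner ℝ (g x) (g' v) = 0 := fun v => by
    have hconst : HasFDerivAt (fun y => ‖g y‖ ^ 2) (0 : E →L[ℝ] ℝ) x :=
      (hasFDerivAt_const (ρ ^ 2) x).congr_of_eventuallyEq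
        (hnorm.mono fun y hy => by simp only [hy])
    simpa using congrArg (fun L : E →L[ℝ] ℝ => L v) (hg.norm_sq.unique hconst)
  by_contra hdet
  obtain ⟨v, hv⟩ : ∃ v, g' v = g x := (LinearMap.equivOfDetNeZero _ hdet).surjective (g x)
  have hzero : ‖g x‖ = 0 := by simpa [hv] using horth v
  exact hρ (hnorm.self_of_nhds.symm.trans hzero)

lemma not_contDiff_retraction_onto_sphere {g : E → E} {ρ : ℝ} (hρ : 0 < ρ)
    (hg : ContDiff ℝ 1 g) (hnorm : ∀ x, ‖g x‖ = ρ) : ¬ EqOn g id (Metric.sphere 0 ρ) := by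
  intro hid
  borelize E
  let ν : MeasureTheory.Measure E := MeasureTheory.volume
  have hderiv : ∀ x, HasFDerivAt g (fderiv ℝ g x) x := fun x =>
    (hg.differentiable one_ne_zero x).hasFDerivAt
  have hvol := setIntegral_det_one_add_eq_measureReal ν (isCompact_closedBall (0 : E) ρ)
    (convex_closedBall 0 ρ)
    (fun x _ => ((hderiv x).sub (hasFDerivAt_id x)).hasFDerivWithinAt)
    ((hg.continuous_fderiv one_ne_zero).sub continuous_const).continuousOn fun x hx => by
      rw [frontier_closedBall _ hρ.ne'] at hx
      simp [hid hx]
  have hsingular : ∀ x, (1 + (fderiv ℝ g x - ContinuousLinearMap.id ℝ E)).det = 0 := fun x => by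
    rw [← ContinuousLinearMap.one_def, add_sub_cancel]
    exact det_eq_zero_of_eventually_norm_eq (hderiv x) hρ.ne' (Eventually.of_forall hnorm)
  have hpos : 0 < ν.real (Metric.closedBall (0 : E) ρ) := ENNReal.toReal_pos
    (Metric.measure_closedBall_pos ν 0 hρ).ne' (isCompact_closedBall 0 ρ).measure_lt_top.ne
  simp only [hsingular, MeasureTheory.integral_zero] at hvol
  exact hpos.ne hvol

/-- Otherwise the direction of `x - F x` would be a retraction onto a large sphere. -/
lemma exists_fixedPoint_of_contDiff_of_hasCompactSupport {F : E → E} (hF : ContDiff ℝ 1 F)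
    (hsupp : HasCompactSupport F) : ∃ x, F x = x := by
  by_contra! hfix
  have hne : ∀ x, x - F x ≠ 0 := fun x => sub_ne_zero.2 (hfix x).symm
  obtain ⟨ρ, hρ, hsub⟩ : ∃ ρ : ℝ, 0 < ρ ∧ tsupport F ⊆ Metric.ball 0 ρ := by
    obtain ⟨ρ, h⟩ := hsupp.isCompact.isBounded.subset_ball_lt 0 0
    exact ⟨ρ, h⟩
  refine not_contDiff_retraction_onto_sphere hρ
    (g := fun x => (ρ * ‖x - F x‖⁻¹) • (x - F x)) ?_ (fun x => ?_) fun x hx => ?_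
  · have hsub : ContDiff ℝ 1 fun x => x - F x := contDiff_id.sub hF
    exact (contDiff_const.mul
      ((hsub.norm ℝ hne).inv fun x => norm_ne_zero_iff.2 (hne x))).smul hsub
  · simpa [abs_of_pos hρ] using norm_smul_inv_norm' (𝕜 := ℝ) hρ.le (hne x)
  · have hFx : F x = 0 := image_eq_zero_of_notMem_tsupport fun h =>
      (mem_ball_zero_iff.1 (hsub h)).ne (mem_sphere_zero_iff_norm.1 hx)
    simp only [hFx, sub_zero, mem_sphere_zero_iff_norm.1 hx, mul_inv_cancel₀ hρ.ne', one_smul, id]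

lemma exists_fixedPoint_of_continuous_of_hasCompactSupport {F : E → E} (hF : Continuous F)
    (hsupp : HasCompactSupport F) : ∃ x, F x = x := by
  by_contra! hfix
  obtain ⟨δ, hδ, hle⟩ : ∃ δ > 0, ∀ x ∈ tsupport F, δ ≤ dist x (F x) :=
    hsupp.isCompact.exists_forall_le' (by fun_prop) fun x _ => dist_pos.2 (hfix x).symm
  obtain ⟨G, hG, hGF, hGsupp⟩ := hF.exists_contDiff_approx 1 (ε := fun _ => δ) continuous_const
    fun _ => hδ
  obtain ⟨x, hx⟩ := exists_fixedPoint_of_contDiff_of_hasCompactSupport hG (hsupp.mono hGsupp)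
  by_cases hFx : F x = 0
  · have hGx : G x = 0 := of_not_not fun h => hGsupp h hFx
    exact hfix x (hFx.trans (hGx.symm.trans hx))
  · have hlt := hGF x
    rw [hx] at hlt
    exact hlt.not_ge (hle x (subset_tsupport F hFx))

lemma exists_lipschitzWith_one_retraction {K : Set E} (hne : K.Nonempty) (hK : IsClosed K)
    (hconv : Convex ℝ K) :
    ∃ P : E → E, LipschitzWith 1 P ∧ (∀ x, P x ∈ K) ∧ EqOn P id K := by
  choose P hPK hmin using exists_norm_eq_iInf_of_complete_convex hne hK.isComplete hconv
  have hobtuse : ∀ x, ∀ y ∈ K, inner ℝ (x - P x) (y - P x) ≤ 0 := fun x =>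
    (norm_eq_iInf_iff_real_inner_le_zero hconv (hPK x)).1 (hmin x)
  refine ⟨P, LipschitzWith.of_dist_le_mul fun x y => ?_, hPK, fun x hx => ?_⟩
  · have hsq : ‖P x - P y‖ * ‖P x - P y‖ ≤ ‖x - y‖ * ‖P x - P y‖ := by
      calc ‖P x - P y‖ * ‖P x - P y‖
          = inner ℝ (x - y) (P x - P y) + inner ℝ (x - P x) (P y - P x) +
              inner ℝ (y - P y) (P x - P y) := by
            rw [← real_inner_self_eq_norm_mul_norm, ← neg_sub (P x) (P y), inner_neg_right,
              ← sub_eq_add_neg, ← inner_sub_left, ← inner_add_left]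
            congr 1
            abel
        _ ≤ inner ℝ (x - y) (P x - P y) := by
            linarith [hobtuse x (P y) (hPK y), hobtuse y (P x) (hPK x)]
        _ ≤ ‖x - y‖ * ‖P x - P y‖ := real_inner_le_norm _ _
    rw [NNReal.coe_one, one_mul, dist_eq_norm, dist_eq_norm]
    by_contra! hlt
    exact hsq.not_gt (mul_lt_mul_of_pos_right hlt ((norm_nonneg _).trans_lt hlt))
  · exact (sub_eq_zero.1 (real_inner_self_nonpos.1 (hobtuse x x hx))).symm

lemma exists_fixedPoint_of_isCompact_convex_innerProductSpace {K : Set E} (hne : K.Nonempty)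
    (hK : IsCompact K) (hconv : Convex ℝ K) {f : E → E} (hf : ContinuousOn f K)
    (hmaps : MapsTo f K K) : ∃ x ∈ K, f x = x := by
  obtain ⟨P, hPlip, hPK, hPid⟩ := exists_lipschitzWith_one_retraction hne hK.isClosed hconv
  obtain ⟨ρ, hρ, hKρ⟩ : ∃ ρ : ℝ, 0 < ρ ∧ K ⊆ Metric.closedBall 0 ρ := by
    obtain ⟨ρ, h⟩ := hK.isBounded.subset_closedBall_lt 0 0
    exact ⟨ρ, h⟩
  let χ : ContDiffBump (0 : E) := ⟨ρ, ρ + 1, hρ, lt_add_one ρ⟩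
  obtain ⟨x, hx⟩ := exists_fixedPoint_of_continuous_of_hasCompactSupport
    (F := fun x => χ x • f (P x))
    (χ.continuous.smul (hf.comp_continuous hPlip.continuous hPK)) χ.hasCompactSupport.smul_right
  have hfP : f (P x) ∈ K := hmaps (hPK x)
  have hχx : χ x = 1 := by
    refine χ.one_of_mem_closedBall (mem_closedBall_zero_iff.2 ?_)
    calc ‖x‖ = χ x * ‖f (P x)‖ := by
          rw [← Real.norm_of_nonneg χ.nonneg, ← norm_smul, hx]
      _ ≤ ‖f (P x)‖ := mul_le_of_le_one_left (norm_nonneg _) χ.le_one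
      _ ≤ ρ := mem_closedBall_zero_iff.1 (hKρ hfP)
  have hfx : f (P x) = x := by simpa only [hχx, one_smul] using hx
  have hxK : x ∈ K := hfx ▸ hfP
  exact ⟨x, hxK, by rwa [hPid hxK] at hfx⟩

end InnerProductSpace

theorem exists_fixedPoint_of_isCompact_convex_finiteDimensional {E : Type*} [AddCommGroup E]
    [TopologicalSpace E] [IsTopologicalAddGroup E] [T2Space E] [Module ℝ E] [ContinuousSMul ℝ E]
    [FiniteDimensional ℝ E] {K : Set E} (hne : K.Nonempty) (hK : IsCompact K)
    (hconv : Convex ℝ K) {f : E → E} (hf : ContinuousOn f K) (hmaps : MapsTo f K K) :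
    ∃ x ∈ K, f x = x := by
  let e : E ≃L[ℝ] EuclideanSpace ℝ (Fin (Module.finrank ℝ E)) := toEuclidean
  have hsymm : MapsTo e.symm (e '' K) K := by
    rintro _ ⟨x, hx, rfl⟩
    rwa [e.symm_apply_apply]
  obtain ⟨_, ⟨x, hx, rfl⟩, hfix⟩ := exists_fixedPoint_of_isCompact_convex_innerProductSpace
    (f := e ∘ f ∘ e.symm) (hne.image e) (hK.image e.continuous)
    (hconv.linear_image e.toLinearMap)
    (e.continuous.comp_continuousOn (hf.comp e.symm.continuous.continuousOn hsymm))
    ((mapsTo_image e K).comp (hmaps.comp hsymm))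
  exact ⟨x, hx, e.injective (by simpa using hfix)⟩

end Brouwer

section SchauderTychonoff

/-! ### The fixed point theorem of Schauder and Tychonoff -/

variable {E : Type*} [AddCommGroup E] [TopologicalSpace E] [IsTopologicalAddGroup E] [T2Space E]
  {K : Set E}

lemma exists_partition_of_unity_sub_mem (hK : IsCompact K) {U : Set E} (hU : IsOpen U)
    (h0 : (0 : E) ∈ U) :
    ∃ (c : Finset K) (g : c → E → ℝ), (∀ i, ContinuousOn (g i) K) ∧
      (∀ x ∈ K, (fun i => g i x) ∈ stdSimplex ℝ c) ∧
      ∀ x ∈ K, ∀ i, g i x ≠ 0 → x - (i : K) ∈ U := by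
  classical
  have : CompactSpace K := isCompact_iff_compactSpace.1 hK
  let V : K → Set K := fun c => {x | (x : E) - c ∈ U}
  have hV : ∀ c, IsOpen (V c) := fun c =>
    hU.preimage (continuous_subtype_val.sub continuous_const)
  obtain ⟨c, hc⟩ := isCompact_univ.elim_finite_subcover V hV
    fun x _ => mem_iUnion.2 ⟨x, by simpa [V] using h0⟩
  obtain ⟨g, hg⟩ := PartitionOfUnity.exists_isSubordinate isClosed_univ
    (fun i : c => V i) (fun i => hV i) (hc.trans (by simp [iUnion_subtype]))
  refine ⟨c, fun i x => if hx : x ∈ K then g i ⟨x, hx⟩ else 0, fun i => ?_, fun x hx => ?_,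
    fun x hx i hi => ?_⟩
  · rw [continuousOn_iff_continuous_domRestrict, domRestrict_dite]
    exact (g i).continuous
  · refine ⟨fun i => ?_, ?_⟩
    · simpa only [dif_pos hx] using g.nonneg i ⟨x, hx⟩
    · simpa only [dif_pos hx, finsum_eq_sum_of_fintype] using g.sum_eq_one (mem_univ ⟨x, hx⟩)
  · simp only [dif_pos hx] at hi
    exact hg i (subset_tsupport _ hi)

variable [Module ℝ E] [ContinuousSMul ℝ E]

lemma exists_map_sub_mem_of_isCompact_convex (hne : K.Nonempty) (hK : IsCompact K)
    (hconv : Convex ℝ K) {f : E → E} (hf : ContinuousOn f K) (hmaps : MapsTo f K K) {U : Set E}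
    (hU : IsOpen U) (h0 : (0 : E) ∈ U) (hUconv : Convex ℝ U) : ∃ x ∈ K, f x - x ∈ U := by
  obtain ⟨c, g, hgcont, hg, hgU⟩ := exists_partition_of_unity_sub_mem hK hU h0
  let Φ : (c → ℝ) → E := fun w => ∑ i, w i • ((i : K) : E)
  have hΦ : MapsTo Φ (stdSimplex ℝ c) K := fun w hw =>
    hconv.sum_mem (fun i _ => hw.1 i) hw.2 fun i _ => i.1.2
  have hfΦ : MapsTo (f ∘ Φ) (stdSimplex ℝ c) K := hmaps.comp hΦ
  have hfΦcont : ContinuousOn (f ∘ Φ) (stdSimplex ℝ c) :=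
    hf.comp (by fun_prop) hΦ
  obtain ⟨x₀, hx₀⟩ := hne
  obtain ⟨w, hw, hfix⟩ := exists_fixedPoint_of_isCompact_convex_finiteDimensional
    ⟨_, hg x₀ hx₀⟩ (isCompact_stdSimplex ℝ c) (convex_stdSimplex ℝ c)
    (f := fun w i => g i (f (Φ w))) (continuousOn_pi.2 fun i => (hgcont i).comp hfΦcont hfΦ)
    fun w hw => hg _ (hfΦ hw)
  refine ⟨Φ w, hΦ hw, ?_⟩
  have hsub : f (Φ w) - Φ w = ∑ i, w i • (f (Φ w) - ((i : K) : E)) := by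
    simp only [smul_sub, Finset.sum_sub_distrib, ← Finset.sum_smul, hw.2, one_smul, Φ]
  rw [hsub, ← finsum_eq_sum_of_fintype]
  refine hUconv.finsum_mem hw.1 (by rw [finsum_eq_sum_of_fintype, hw.2]) fun i hi => ?_
  exact hgU _ (hfΦ hw) i (congrFun hfix i ▸ hi)

variable [LocallyConvexSpace ℝ E]

theorem exists_fixedPoint_of_isCompact_convex (hne : K.Nonempty) (hK : IsCompact K)
    (hconv : Convex ℝ K) {f : E → E} (hf : ContinuousOn f K) (hmaps : MapsTo f K K) :
    ∃ x ∈ K, f x = x := by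
  have hclosed : IsClosed ((fun x => f x - x) '' K) :=
    (hK.image_of_continuousOn (hf.sub continuousOn_id)).isClosed
  have hmem : (0 : E) ∈ closure ((fun x => f x - x) '' K) := by
    refine (mem_closure_iff_nhds_basis
      (LocallyConvexSpace.convex_open_basis_zero ℝ E)).2 fun U hU => ?_
    obtain ⟨x, hx, hxU⟩ := exists_map_sub_mem_of_isCompact_convex hne hK hconv hf hmaps
      hU.2.1 hU.1 hU.2.2
    exact ⟨f x - x, mem_image_of_mem _ hx, hxU⟩
  obtain ⟨x, hx, hfx⟩ := hclosed.closure_eq ▸ hmem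
  exact ⟨x, hx, sub_eq_zero.1 hfx⟩

/-- Schauder's theorem is applied to pairs `(x, u)`, where the scalar `u` pulls `x` towards `a` or
`e` and is itself updated by adding `c`. -/
lemma exists_fixedPoint_or_segment {R : E → E} {c : E → ℝ} {a e : E} (hK : IsCompact K)
    (hconv : Convex ℝ K) (hR : ContinuousOn R K) (hmaps : MapsTo R K K) (hc : ContinuousOn c K)
    (ha : a ∈ K) (he : e ∈ K) :
    ∃ y ∈ K, (y = a ∧ c y ≤ 0) ∨ (y = e ∧ 0 ≤ c y) ∨
      c y = 0 ∧ ∃ t ∈ Ico (0 : ℝ) 1, y = R y + t • (a - R y) ∨ y = R y + t • (e - R y) := by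
  let χ : E × ℝ → E := fun p => p.1 + max 0 (-p.2) • (a - p.1) + max 0 p.2 • (e - p.1)
  have hχ_neg {x : E} {u : ℝ} (hu : u ≤ 0) : χ (x, u) = x + (-u) • (a - x) := by simp [χ, hu]
  have hχ_pos {x : E} {u : ℝ} (hu : 0 ≤ u) : χ (x, u) = x + u • (e - x) := by simp [χ, hu]
  have hχ : MapsTo χ (K ×ˢ Icc (-1 : ℝ) 1) K := by
    rintro ⟨x, u⟩ ⟨hx, hu⟩
    rcases le_total u 0 with hu0 | hu0
    · rw [hχ_neg hu0]
      exact hconv.add_smul_sub_mem hx ha ⟨neg_nonneg.2 hu0, by linarith [hu.1]⟩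
    · rw [hχ_pos hu0]
      exact hconv.add_smul_sub_mem hx he ⟨hu0, hu.2⟩
  have hχcont : ContinuousOn χ (K ×ˢ Icc (-1 : ℝ) 1) := by fun_prop
  obtain ⟨⟨x, u⟩, ⟨hx, hu⟩, hfix⟩ := exists_fixedPoint_of_isCompact_convex
    (K := K ×ˢ Icc (-1 : ℝ) 1) ⟨(a, 0), ha, by simp⟩ (hK.prod isCompact_Icc)
    (hconv.prod (convex_Icc (-1 : ℝ) 1))
    (f := fun p => (R (χ p), max (-1) (min 1 (p.2 + c (χ p)))))
    ((hR.comp hχcont hχ).prodMk <| continuousOn_const.sup <| continuousOn_const.inf <|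
      continuousOn_snd.add (hc.comp hχcont hχ))
    fun p hp => ⟨hmaps (hχ hp), le_max_left _ _, max_le (by simp) (min_le_left _ _)⟩
  obtain ⟨hRy, hclamp⟩ : R (χ (x, u)) = x ∧ max (-1) (min 1 (u + c (χ (x, u)))) = u :=
    Prod.ext_iff.1 hfix
  refine ⟨χ (x, u), hχ ⟨hx, hu⟩, ?_⟩
  rw [hRy]
  rcases hu.1.eq_or_lt with rfl | hu_gt
  · refine .inl ⟨by simp [hχ_neg], ?_⟩
    grind
  rcases hu.2.eq_or_lt with rfl | hu_lt
  · refine .inr <| .inl ⟨by simp [hχ_pos], ?_⟩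
    grind
  refine .inr <| .inr ⟨by grind, ?_⟩
  rcases le_total u 0 with hu0 | hu0
  · exact ⟨-u, ⟨neg_nonneg.2 hu0, by linarith⟩, .inl (hχ_neg hu0)⟩
  · exact ⟨u, ⟨hu0, hu_lt⟩, .inr (hχ_pos hu0)⟩

theorem exists_fixedPoint_between_levels {R : E → E} {W : E → ℝ} {s b : ℝ} {a e : E}
    (hK : IsCompact K) (hconv : Convex ℝ K) (hR : ContinuousOn R K) (hmaps : MapsTo R K K)
    (hW : ContinuousOn W K) (hsb : s < b) (hlow : ∀ x ∈ K, W x ≤ s → W (R x) < s)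
    (hhigh : ∀ x ∈ K, b ≤ W x → b < W (R x)) (ha : a ∈ K) (hWa : W a ≤ s) (he : e ∈ K)
    (hWe : b ≤ W e)
    (hdown : ∀ x ∈ K, s < W (R x) → ∀ t ∈ Ioo (0 : ℝ) 1, W (R x + t • (a - R x)) < W (R x))
    (hup : ∀ x ∈ K, W (R x) < b → ∀ t ∈ Ioo (0 : ℝ) 1, W (R x) < W (R x + t • (e - R x))) :
    ∃ x ∈ K, R x = x ∧ s < W x ∧ W x < b := by
  obtain ⟨y, hy, ⟨rfl, hc⟩ | ⟨rfl, hc⟩ | ⟨hc, t, ht, hseg⟩⟩ := exists_fixedPoint_or_segment hK hconv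
    hR hmaps (c := fun x => max s (min b (W x)) - W (R x))
    ((continuousOn_const.sup (continuousOn_const.inf hW)).sub (hW.comp hR hmaps)) ha he
  · rw [min_eq_right (hWa.trans hsb.le), max_eq_left hWa] at hc
    linarith [hlow y hy hWa]
  · rw [min_eq_left hWe, max_eq_right hsb.le] at hc
    linarith [hhigh y hy hWe]
  have hs : s < W y := by
    by_contra! h
    have hyR := hlow y hy h
    rw [min_eq_right (h.trans hsb.le), max_eq_left h] at hc
    linarith
  have hb : W y < b := by
    by_contra! h
    have hyR := hhigh y hy h
    rw [min_eq_left h, max_eq_right hsb.le] at hc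
    linarith
  have hWR : W (R y) = W y := by
    rw [min_eq_right hb.le, max_eq_right hs.le] at hc
    linarith
  refine ⟨y, hy, ?_, hs, hb⟩
  rcases ht.1.eq_or_lt with rfl | ht0
  · simp only [zero_smul, add_zero, or_self] at hseg
    exact hseg.symm
  rcases hseg with h | h
  · have := hdown y hy (hWR ▸ hs) t ⟨ht0, ht.2⟩
    rw [← h] at this
    exact absurd hWR this.ne'
  · have := hup y hy (hWR ▸ hb) t ⟨ht0, ht.2⟩
    rw [← h] at this
    exact absurd hWR this.ne

end SchauderTychonoff

section FunctionSpace

/-! ### Compact sets of continuous functions in the topology of pointwise convergence -/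

variable {X Y : Type*} [TopologicalSpace X] [TopologicalSpace.SeparableSpace X]
  [TopologicalSpace Y] [T2Space Y] [FirstCountableTopology Y] {K : Set (X → Y)}

/-- A continuous function is determined by its values on a countable dense set. -/
lemma firstCountableTopology_of_isCompact_of_continuous (hK : IsCompact K)
    (hcont : ∀ φ ∈ K, Continuous φ) : FirstCountableTopology K := by
  have : CompactSpace K := isCompact_iff_compactSpace.1 hK
  obtain ⟨s, hs, hdense⟩ := TopologicalSpace.exists_countable_dense X
  have : Countable s := hs.to_subtype
  let r : K → s → Y := fun φ i => (φ : X → Y) i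
  have hr : Continuous r :=
    continuous_pi fun i => (continuous_apply (i : X)).comp continuous_subtype_val
  have hinj : Function.Injective r := fun φ ψ h => Subtype.ext <|
    Continuous.ext_on hdense (hcont _ φ.2) (hcont _ ψ.2) fun i hi => congrFun h ⟨i, hi⟩
  exact (hr.isClosedEmbedding hinj).isInducing.firstCountableTopology

lemma isSeqCompact_of_isCompact_of_continuous (hK : IsCompact K)
    (hcont : ∀ φ ∈ K, Continuous φ) : IsSeqCompact K := by
  have : CompactSpace K := isCompact_iff_compactSpace.1 hK
  have := firstCountableTopology_of_isCompact_of_continuous hK hcont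
  exact isSeqCompact_iff_isSeqCompact_univ.2 isSeqCompact_univ

lemma continuousOn_of_isCompact_of_continuous {Z : Type*} [TopologicalSpace Z] (hK : IsCompact K)
    (hcont : ∀ φ ∈ K, Continuous φ) {F : (X → Y) → Z}
    (hF : ∀ (φs : ℕ → X → Y) (φ : X → Y), (∀ n, φs n ∈ K) → φ ∈ K →
      (∀ t, Tendsto (fun n => φs n t) atTop (nhds (φ t))) →
        Tendsto (fun n => F (φs n)) atTop (nhds (F φ))) : ContinuousOn F K := by
  have := firstCountableTopology_of_isCompact_of_continuous hK hcont
  refine continuousOn_iff_continuous_domRestrict.2 (continuous_iff_seqContinuous.2 fun φs φ h => ?_)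
  exact hF (fun n => φs n) φ (fun n => (φs n).2) φ.2
    (tendsto_pi_nhds.1 (continuous_subtype_val.continuousAt.tendsto.comp h))

end FunctionSpace

lemma isCompact_setOf_lipschitzWith_mapsTo {X Y : Type*} [PseudoEMetricSpace X]
    [PseudoEMetricSpace Y] (L : NNReal) {C : Set Y} (hC : IsCompact C) :
    IsCompact {φ : X → Y | LipschitzWith L φ ∧ ∀ t, φ t ∈ C} := by
  convert (isCompact_univ_pi fun _ : X => hC).inter_left (isClosed_setOfPred_lipschitzWith L)
    using 1
  ext φ
  simp [Set.mem_pi]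

lemma tendsto_apply_of_lipschitzWith {X Y ι : Type*} [PseudoMetricSpace X] [PseudoMetricSpace Y]
    {l : Filter ι} {φ : ι → X → Y} {ψ : X → Y} {L : NNReal} {t : X}
    (hlip : ∀ n, LipschitzWith L (φ n)) (hlim : Tendsto (fun n => φ n t) l (nhds (ψ t)))
    {τ : ι → X} (hτ : Tendsto τ l (nhds t)) :
    Tendsto (fun n => φ n (τ n)) l (nhds (ψ t)) := by
  refine hlim.congr_dist (squeeze_zero (fun n => dist_nonneg)
    (fun n => (hlip n).dist_le_mul t (τ n)) ?_)
  simpa [dist_comm] using (tendsto_iff_dist_tendsto_zero.1 hτ).const_mul (L : ℝ)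

namespace DelayEquation

/-! ### Profiles -/

/-- Profiles on `[-1,0]`: nondecreasing, `L`-Lipschitz, vanishing at `-1`. They are the initial
functions of slowly oscillating solutions, and are encoded as functions on `ℝ`, extended by
constants outside `[-1,0]`. -/
structure IsProfile (L : ℝ) (φ : ℝ → ℝ) : Prop where
  mono : Monotone φ
  left : ∀ t ≤ -1, φ t = 0
  right : ∀ t, 0 ≤ t → φ t = φ 0
  lip : ∀ s t, s ≤ t → φ t - φ s ≤ L * (t - s)

section IsProfile

variable {L : ℝ} {φ : ℝ → ℝ}

lemma IsProfile.nonneg (h : IsProfile L φ) (t : ℝ) : 0 ≤ φ t := by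
  rw [← h.left (min t (-1)) (min_le_right _ _)]
  exact h.mono (min_le_left _ _)

lemma IsProfile.le_zero (h : IsProfile L φ) (t : ℝ) : φ t ≤ φ 0 := by
  rw [← h.right (max t 0) (le_max_right _ _)]
  exact h.mono (le_max_left _ _)

lemma IsProfile.le_mul (h : IsProfile L φ) {t : ℝ} (ht : -1 ≤ t) : φ t ≤ L * (t + 1) := by
  have := h.lip (-1) t ht
  rwa [h.left (-1) le_rfl, sub_zero, sub_neg_eq_add] at this

lemma IsProfile.le_const (h : IsProfile L φ) (t : ℝ) : φ t ≤ L := by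
  simpa using (h.le_zero t).trans (h.le_mul (by norm_num))

lemma IsProfile.const_nonneg (h : IsProfile L φ) : 0 ≤ L := (h.nonneg 0).trans (h.le_const 0)

lemma IsProfile.lipschitzWith (h : IsProfile L φ) : LipschitzWith L.toNNReal φ := by
  refine LipschitzWith.of_le_add_mul' L fun s t => ?_
  rcases le_total t s with hts | hst
  · rw [Real.dist_eq, abs_of_nonneg (sub_nonneg.2 hts)]
    linarith [h.lip t s hts]
  · linarith [h.mono hst, mul_nonneg h.const_nonneg (dist_nonneg (x := s) (y := t))]

lemma IsProfile.continuous (h : IsProfile L φ) : Continuous φ := h.lipschitzWith.continuous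

lemma IsProfile.weaken (h : IsProfile L φ) {L' : ℝ} (hL : L ≤ L') : IsProfile L' φ :=
  ⟨h.mono, h.left, h.right, fun s t hst => (h.lip s t hst).trans
    (mul_le_mul_of_nonneg_right hL (sub_nonneg.2 hst))⟩

lemma isProfile_zero (hL : 0 ≤ L) : IsProfile L 0 :=
  ⟨monotone_const, fun _ _ => rfl, fun _ _ => rfl,
    fun s t hst => by simpa using mul_nonneg hL (sub_nonneg.2 hst)⟩

lemma projIcc_sub_projIcc_le {a b s t : ℝ} (hab : a ≤ b) (hst : s ≤ t) :
    (projIcc a b hab t : ℝ) - projIcc a b hab s ≤ t - s := by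
  have h := (LipschitzWith.projIcc hab).dist_le_mul t s
  rw [NNReal.coe_one, one_mul, Subtype.dist_eq, Real.dist_eq, Real.dist_eq,
    abs_of_nonneg (sub_nonneg.2 hst)] at h
  exact (le_abs_self _).trans h

/-- The largest profile with Lipschitz constant `L`. -/
noncomputable def ramp (L t : ℝ) : ℝ := L * (projIcc (-1 : ℝ) 0 (by norm_num) t + 1)

lemma ramp_of_mem (L : ℝ) {t : ℝ} (ht : t ∈ Icc (-1 : ℝ) 0) : ramp L t = L * (t + 1) := by
  rw [ramp, projIcc_of_mem _ ht]

lemma isProfile_ramp (hL : 0 ≤ L) : IsProfile L (ramp L) where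
  mono s t hst := mul_le_mul_of_nonneg_left
    (by simpa using monotone_projIcc (by norm_num : (-1 : ℝ) ≤ 0) hst) hL
  left t ht := by simp [ramp, projIcc_of_le_left _ ht]
  right t ht := by simp [ramp, projIcc_of_right_le _ ht]
  lip s t hst := by
    rw [ramp, ramp, ← mul_sub, add_sub_add_right_eq_sub]
    refine mul_le_mul_of_nonneg_left ?_ hL
    exact projIcc_sub_projIcc_le _ hst

lemma convex_setOf_isProfile (L : ℝ) : Convex ℝ {φ | IsProfile L φ} := by
  intro φ hφ ψ hψ a b ha hb hab
  refine ⟨(hφ.mono.const_smul ha).add (hψ.mono.const_smul hb), fun t ht => ?_, fun t ht => ?_,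
    fun s t hst => ?_⟩
  · simp [hφ.left t ht, hψ.left t ht]
  · simp [hφ.right t ht, hψ.right t ht]
  · have h1 := mul_le_mul_of_nonneg_left (hφ.lip s t hst) ha
    have h2 := mul_le_mul_of_nonneg_left (hψ.lip s t hst) hb
    calc (a • φ + b • ψ) t - (a • φ + b • ψ) s = a * (φ t - φ s) + b * (ψ t - ψ s) := by
          simp only [Pi.add_apply, Pi.smul_apply, smul_eq_mul]; ring
      _ ≤ (a + b) * (L * (t - s)) := by linarith
      _ = L * (t - s) := by rw [hab, one_mul]

lemma isCompact_setOf_isProfile (L : ℝ) : IsCompact {φ | IsProfile L φ} := by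
  refine (isCompact_setOf_lipschitzWith_mapsTo L.toNNReal (isCompact_Icc (a := 0) (b := L)))
    |>.of_isClosed_subset ?_ fun φ hφ => ⟨hφ.lipschitzWith, fun t => ⟨hφ.nonneg t, hφ.le_const t⟩⟩
  have h : {φ : ℝ → ℝ | IsProfile L φ} = {φ | (∀ s t, s ≤ t → φ s ≤ φ t) ∧ (∀ t ≤ -1, φ t = 0) ∧
      (∀ t, 0 ≤ t → φ t = φ 0) ∧ ∀ s t, s ≤ t → φ t - φ s ≤ L * (t - s)} :=
    ext fun φ => ⟨fun h => ⟨fun _ _ hst => h.mono hst, h.left, h.right, h.lip⟩,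
      fun h => ⟨fun s t => h.1 s t, h.2.1, h.2.2.1, h.2.2.2⟩⟩
  simp only [h, ofPred_and, ofPred_forall]
  refine .inter ?_ <| .inter ?_ <| .inter ?_ ?_
  · exact isClosed_iInter fun s => isClosed_iInter fun t => isClosed_iInter fun _ =>
      isClosed_le (continuous_apply s) (continuous_apply t)
  · exact isClosed_biInter fun t _ => isClosed_eq (continuous_apply t) continuous_const
  · exact isClosed_biInter fun t _ => isClosed_eq (continuous_apply t) (continuous_apply 0)
  · exact isClosed_iInter fun s => isClosed_iInter fun t => isClosed_iInter fun _ =>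
      isClosed_le ((continuous_apply t).sub (continuous_apply s)) continuous_const

end IsProfile

/-! ### The initial value problem -/

/-- `x` solves the delay equation `x'(t) = g (x (t-1))` for `t > 0`. -/
structure IsSolution (g x : ℝ → ℝ) : Prop where
  cont : Continuous x
  deriv : ∀ t, 0 < t → HasDerivAt x (g (x (t - 1))) t

/-- Method of steps: `steps g φ k` is the solution with initial function `φ` up to time `k`. -/
noncomputable def steps (g φ : ℝ → ℝ) : ℕ → ℝ → ℝ
  | 0 => φ
  | k + 1 => fun t => φ (min t 0) + ∫ s in (0 : ℝ)..(max t 0), g (steps g φ k (s - 1))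

/-- The solution of `x'(t) = g (x (t-1))`, `t ≥ 0`, with `x = φ` on `(-∞, 0]`. -/
noncomputable def solution (g φ : ℝ → ℝ) (t : ℝ) : ℝ := steps g φ ⌈t⌉₊ t

section Solution

variable {g φ : ℝ → ℝ}

lemma continuous_steps (hg : Continuous g) (hφ : Continuous φ) (k : ℕ) :
    Continuous (steps g φ k) := by
  induction k with
  | zero => exact hφ
  | succ k ih =>
    have h1 : Continuous fun s => g (steps g φ k (s - 1)) := by fun_prop
    have h2 : Continuous fun t => ∫ s in (0 : ℝ)..t, g (steps g φ k (s - 1)) :=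
      intervalIntegral.continuous_primitive (fun a b => h1.intervalIntegrable a b) 0
    have h3 : Continuous fun t : ℝ => max t 0 := by fun_prop
    exact (hφ.comp (by fun_prop)).add (h2.comp h3)

lemma steps_succ_eq_of_le (k : ℕ) : ∀ t ≤ (k : ℝ), steps g φ (k + 1) t = steps g φ k t := by
  induction k with
  | zero =>
    intro t ht
    have ht' : t ≤ 0 := by simpa using ht
    simp [steps, ht']
  | succ k ih =>
    intro t ht
    change φ (min t 0) + ∫ s in (0 : ℝ)..(max t 0), g (steps g φ (k + 1) (s - 1))
      = φ (min t 0) + ∫ s in (0 : ℝ)..(max t 0), g (steps g φ k (s - 1))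
    congr 1
    refine intervalIntegral.integral_congr fun s hs => ?_
    rw [uIcc_of_le (le_max_right _ _)] at hs
    have : s ≤ (k : ℝ) + 1 := hs.2.trans (max_le (by exact_mod_cast ht) (by positivity))
    rw [ih (s - 1) (by linarith)]

lemma steps_eq_of_le {k m : ℕ} (hkm : k ≤ m) {t : ℝ} (ht : t ≤ k) :
    steps g φ m t = steps g φ k t := by
  induction m, hkm using Nat.le_induction with
  | base => rfl
  | succ m hm ih =>
    rw [steps_succ_eq_of_le m t (ht.trans (by exact_mod_cast hm)), ih]

lemma solution_eq_steps {k : ℕ} {t : ℝ} (ht : t ≤ k) : solution g φ t = steps g φ k t :=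
  (steps_eq_of_le (Nat.ceil_le.2 ht) (Nat.le_ceil t)).symm

lemma solution_of_nonpos {t : ℝ} (ht : t ≤ 0) : solution g φ t = φ t :=
  solution_eq_steps (k := 0) (by simpa using ht)

lemma continuous_solution (hg : Continuous g) (hφ : Continuous φ) :
    Continuous (solution g φ) := by
  rw [continuous_iff_continuousAt]
  intro t
  have h : solution g φ =ᶠ[nhds t] steps g φ (⌈t⌉₊ + 1) := by
    have : t < (⌈t⌉₊ + 1 : ℕ) := by push_cast; linarith [Nat.le_ceil t]
    filter_upwards [eventually_lt_nhds this] with s hs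
    exact solution_eq_steps hs.le
  exact ((continuous_steps hg hφ _).continuousAt).congr h.symm

lemma solution_eq_integral {t : ℝ} (ht : 0 ≤ t) :
    solution g φ t = φ 0 + ∫ s in (0 : ℝ)..t, g (solution g φ (s - 1)) := by
  rw [solution_eq_steps (k := ⌈t⌉₊ + 1) (by push_cast; linarith [Nat.le_ceil t])]
  change φ (min t 0) + ∫ s in (0 : ℝ)..(max t 0), g (steps g φ ⌈t⌉₊ (s - 1)) = _
  rw [min_eq_right ht, max_eq_left ht]
  congr 1
  refine intervalIntegral.integral_congr fun s hs => ?_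
  rw [uIcc_of_le ht] at hs
  rw [solution_eq_steps (k := ⌈t⌉₊) (by linarith [hs.2, Nat.le_ceil t])]

end Solution

lemma hasDerivAt_of_eq_add_integral {x y : ℝ → ℝ} {c t : ℝ} (hy : Continuous y)
    (hx : ∀ᶠ u in nhds t, x u = c + ∫ s in (0 : ℝ)..u, y s) : HasDerivAt x (y t) t :=
  ((intervalIntegral.integral_hasDerivAt_right (hy.intervalIntegrable _ _)
    hy.stronglyMeasurable.stronglyMeasurableAtFilter hy.continuousAt).const_add c)
    |>.congr_of_eventuallyEq hx

lemma isSolution_solution {g φ : ℝ → ℝ} (hg : Continuous g) (hφ : Continuous φ) :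
    IsSolution g (solution g φ) where
  cont := continuous_solution hg hφ
  deriv t ht := by
    have hc := continuous_solution hg hφ
    refine hasDerivAt_of_eq_add_integral (y := fun s => g (solution g φ (s - 1))) (c := φ 0)
      (by fun_prop) ?_
    filter_upwards [eventually_gt_nhds ht] with s hs
    exact solution_eq_integral hs.le

section IsSolution

variable {g x : ℝ → ℝ}

lemma IsSolution.continuous_rhs (h : IsSolution g x) (hg : Continuous g) :
    Continuous fun s => g (x (s - 1)) := by
  have := h.cont
  fun_prop

lemma IsSolution.eq_integral (h : IsSolution g x) (hg : Continuous g) {t : ℝ} (ht : 0 ≤ t) :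
    x t = x 0 + ∫ s in (0 : ℝ)..t, g (x (s - 1)) := by
  rw [intervalIntegral.integral_eq_sub_of_hasDerivAt_of_le ht h.cont.continuousOn
    (fun s hs => h.deriv s hs.1) ((h.continuous_rhs hg).intervalIntegrable _ _)]
  ring

lemma IsSolution.lipschitzOnWith (h : IsSolution g x) {μ : ℝ} (hbdd : ∀ v, |g v| ≤ μ) :
    LipschitzOnWith μ.toNNReal x (Ici 0) := by
  rw [← closure_Ioi, lipschitzOnWith_closure_iff h.cont.continuousOn]
  refine (convex_Ioi 0).lipschitzOnWith_of_nnnorm_hasDerivWithin_le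
    (fun t ht => (h.deriv t ht).hasDerivWithinAt) fun t _ => ?_
  rw [← NNReal.coe_le_coe, coe_nnnorm]
  exact (hbdd _).trans (Real.le_coe_toNNReal μ)

lemma IsSolution.tendsto (hg : Continuous g) {M : ℝ} (hM : ∀ v, |g v| ≤ M) {xs : ℕ → ℝ → ℝ}
    (hs : ∀ n, IsSolution g (xs n)) (h : IsSolution g x)
    (h0 : ∀ t ∈ Icc (-1 : ℝ) 0, Tendsto (fun n => xs n t) atTop (nhds (x t))) (t : ℝ)
    (ht : -1 ≤ t) : Tendsto (fun n => xs n t) atTop (nhds (x t)) := by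
  suffices H : ∀ k : ℕ, ∀ t : ℝ, -1 ≤ t → t ≤ k → Tendsto (fun n => xs n t) atTop (nhds (x t)) from
    H ⌈t⌉₊ t ht (Nat.le_ceil t)
  intro k
  induction k with
  | zero => exact fun t h1 h2 => h0 t ⟨h1, by simpa using h2⟩
  | succ k ih =>
    intro t h1 h2
    rcases le_total t 0 with h3 | h3
    · exact h0 t ⟨h1, h3⟩
    · rw [h.eq_integral hg h3]
      simp_rw [fun n => (hs n).eq_integral hg h3]
      refine (h0 0 (by simp)).add ?_
      refine intervalIntegral.tendsto_integral_filter_of_dominated_convergence (fun _ => M)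
        (Eventually.of_forall fun n => ((hs n).continuous_rhs hg).aestronglyMeasurable)
        (Eventually.of_forall fun n => Eventually.of_forall fun s _ => hM _)
        (intervalIntegrable_const) (Eventually.of_forall fun s hs' => ?_)
      rw [uIoc_of_le h3] at hs'
      push_cast at h2
      exact (hg.tendsto _).comp (ih (s - 1) (by linarith [hs'.1]) (by linarith [hs'.2]))

lemma IsSolution.unique {y : ℝ → ℝ} (hg : Continuous g) (hy : IsSolution g y)
    (hx : IsSolution g x) (h0 : ∀ t ∈ Icc (-1 : ℝ) 0, y t = x t) (t : ℝ)
    (ht : -1 ≤ t) : y t = x t := by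
  suffices H : ∀ k : ℕ, ∀ t : ℝ, -1 ≤ t → t ≤ k → y t = x t from H ⌈t⌉₊ t ht (Nat.le_ceil t)
  intro k
  induction k with
  | zero => exact fun t h1 h2 => h0 t ⟨h1, by simpa using h2⟩
  | succ k ih =>
    intro t h1 h2
    rcases le_total t 0 with h3 | h3
    · exact h0 t ⟨h1, h3⟩
    · rw [hy.eq_integral hg h3, hx.eq_integral hg h3, h0 0 (by simp)]
      congr 1
      refine intervalIntegral.integral_congr fun s hs => ?_
      rw [uIcc_of_le h3] at hs
      push_cast at h2
      simp only [ih (s - 1) (by linarith [hs.1]) (by linarith [hs.2])]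

end IsSolution

/-- The first zero on `[0, ∞)` of a function positive at `0`, encoded as the first time `t ≥ 0` at
which `x t ≤ 0`; if there is no such time, then it is `0`. -/
noncomputable def firstZero (x : ℝ → ℝ) : ℝ := sInf {t | 0 ≤ t ∧ x t ≤ 0}

lemma firstZero_spec {x : ℝ → ℝ} (hc : Continuous x) (h0 : 0 < x 0) {Z : ℝ} (hZ : 0 ≤ Z)
    (hxZ : x Z ≤ 0) : 0 < firstZero x ∧ firstZero x ≤ Z ∧ x (firstZero x) = 0 ∧
      ∀ t, 0 ≤ t → t < firstZero x → 0 < x t := by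
  set S := {t | 0 ≤ t ∧ x t ≤ 0}
  have hbb : BddBelow S := ⟨0, fun t ht => ht.1⟩
  have hcl : IsClosed S := (isClosed_le continuous_const continuous_id).inter
    (isClosed_le hc continuous_const)
  have hmem : firstZero x ∈ S := hcl.csInf_mem ⟨Z, hZ, hxZ⟩ hbb
  have hpos : ∀ t, 0 ≤ t → t < firstZero x → 0 < x t := fun t ht ht' => by
    by_contra hcon
    exact absurd (csInf_le hbb (show t ∈ S from ⟨ht, not_lt.1 hcon⟩)) (not_le.2 ht')
  have hp : 0 < firstZero x := by
    refine lt_of_le_of_ne hmem.1 fun h => ?_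
    have := hmem.2
    rw [← h] at this
    linarith
  refine ⟨hp, csInf_le hbb ⟨hZ, hxZ⟩, le_antisymm hmem.2 ?_, hpos⟩
  refine ge_of_tendsto (hc.continuousWithinAt (s := Iio (firstZero x))) ?_
  filter_upwards [Ioo_mem_nhdsLT hp] with t ht
  exact (hpos t ht.1.le ht.2).le

/-! ### Half-cycles -/

lemma sub_le_mul_of_hasDerivAt {x x' : ℝ → ℝ} {a b c : ℝ} (hab : a ≤ b)
    (hx : ContinuousOn x (Icc a b)) (hd : ∀ t ∈ Ioo a b, HasDerivAt x (x' t) t)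
    (hle : ∀ t ∈ Ioo a b, x' t ≤ c) : x b - x a ≤ c * (b - a) := by
  refine (convex_Icc a b).image_sub_le_mul_sub_of_deriv_le hx ?_ ?_ a
    ⟨le_rfl, hab⟩ b ⟨hab, le_rfl⟩ hab
  · rw [interior_Icc]
    exact fun t ht => (hd t ht).differentiableAt.differentiableWithinAt
  · rw [interior_Icc]
    exact fun t ht => (hd t ht).deriv ▸ hle t ht

lemma mul_le_sub_of_hasDerivAt {x x' : ℝ → ℝ} {a b c : ℝ} (hab : a ≤ b)
    (hx : ContinuousOn x (Icc a b)) (hd : ∀ t ∈ Ioo a b, HasDerivAt x (x' t) t)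
    (hle : ∀ t ∈ Ioo a b, c ≤ x' t) : c * (b - a) ≤ x b - x a := by
  have := sub_le_mul_of_hasDerivAt hab hx.neg (fun t ht => (hd t ht).neg) (c := -c)
    fun t ht => neg_le_neg (hle t ht)
  simp only [Pi.neg_apply] at this
  linarith

/-- Continuous nonlinearities with negative feedback: `g` has the sign opposite to its argument. -/
structure NegativeFeedback (g : ℝ → ℝ) : Prop where
  cont : Continuous g
  mul_neg : ∀ v, v ≠ 0 → v * g v < 0

section NegativeFeedback

variable {g : ℝ → ℝ}

lemma NegativeFeedback.neg (h : NegativeFeedback g) {v : ℝ} (hv : 0 < v) : g v < 0 :=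
  (pos_iff_neg_of_mul_neg (h.mul_neg v hv.ne')).1 hv

lemma NegativeFeedback.pos (h : NegativeFeedback g) {v : ℝ} (hv : v < 0) : 0 < g v :=
  (neg_iff_pos_of_mul_neg (h.mul_neg v hv.ne)).1 hv

lemma NegativeFeedback.zero (h : NegativeFeedback g) : g 0 = 0 := by
  apply le_antisymm
  · refine le_of_tendsto (h.cont.continuousWithinAt (s := Ioi 0)) ?_
    filter_upwards [self_mem_nhdsWithin] with t ht using (h.neg ht).le
  · refine ge_of_tendsto (h.cont.continuousWithinAt (s := Iio 0)) ?_
    filter_upwards [self_mem_nhdsWithin] with t ht using (h.pos ht).le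

lemma NegativeFeedback.nonpos (h : NegativeFeedback g) {v : ℝ} (hv : 0 ≤ v) : g v ≤ 0 := by
  rcases hv.eq_or_lt with rfl | hv
  · exact h.zero.le
  · exact (h.neg hv).le

lemma NegativeFeedback.nonneg (h : NegativeFeedback g) {v : ℝ} (hv : v ≤ 0) : 0 ≤ g v := by
  rcases hv.eq_or_lt with rfl | hv
  · exact h.zero.ge
  · exact (h.pos hv).le

lemma IsSolution.antitoneOn {x : ℝ → ℝ} {T : ℝ} (h : IsSolution g x) (hg : NegativeFeedback g)
    (hnn : ∀ t ∈ Icc (-1) T, 0 ≤ x t) : AntitoneOn x (Icc 0 (T + 1)) := fun s hs t ht hst => by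
  have := sub_le_mul_of_hasDerivAt (c := 0) hst h.cont.continuousOn
    (fun u hu => h.deriv u (hs.1.trans_lt hu.1))
    (fun u hu => hg.nonpos (hnn _ ⟨by linarith [hs.1, hu.1], by linarith [ht.2, hu.2]⟩))
  linarith

end NegativeFeedback

/-- A positive half-cycle: the solution `x` rises on `[-1,0]` from `0` to a positive value, and `z`
is its first zero after that. -/
structure HalfCycle (g x : ℝ → ℝ) (z : ℝ) : Prop extends IsSolution g x where
  start : x (-1) = 0
  mono : MonotoneOn x (Icc (-1) 0)
  pos_start : 0 < x 0
  zpos : 0 < z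
  zero : x z = 0
  pos : ∀ t, 0 ≤ t → t < z → 0 < x t

section HalfCycle

variable {g x : ℝ → ℝ} {z : ℝ}

lemma HalfCycle.nonneg (h : HalfCycle g x z) {t : ℝ} (h1 : -1 ≤ t) (h2 : t ≤ z) : 0 ≤ x t := by
  rcases le_total t 0 with h3 | h3
  · rw [← h.start]
    exact h.mono ⟨le_rfl, by norm_num⟩ ⟨h1, h3⟩ h1
  · rcases h2.eq_or_lt with rfl | h2
    · exact h.zero.ge
    · exact (h.pos t h3 h2).le

lemma HalfCycle.antitoneOn (h : HalfCycle g x z) (hg : NegativeFeedback g) :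
    AntitoneOn x (Icc 0 (z + 1)) :=
  h.toIsSolution.antitoneOn hg fun _ ht => h.nonneg ht.1 ht.2

lemma HalfCycle.le_zero (h : HalfCycle g x z) (hg : NegativeFeedback g) {t : ℝ} (h1 : -1 ≤ t)
    (h2 : t ≤ z + 1) : x t ≤ x 0 := by
  have hz := h.zpos
  rcases le_total t 0 with h3 | h3
  · exact h.mono ⟨h1, h3⟩ ⟨by norm_num, le_rfl⟩ h3
  · exact h.antitoneOn hg ⟨le_rfl, by linarith⟩ ⟨h3, h2⟩ h3

/-- If `x` vanished at `z - 1`, then it would vanish on `[-1, z - 1]`, hence be constant on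
`[0, z]`. -/
lemma HalfCycle.pos_sub_one (h : HalfCycle g x z) (hg : NegativeFeedback g) : 0 < x (z - 1) := by
  have hz := h.zpos
  rcases le_or_gt 1 z with h1 | h1
  · exact h.pos _ (by linarith) (by linarith)
  · refine lt_of_le_of_ne (h.nonneg (by linarith) (by linarith)) fun h0 => ?_
    have hzero : ∀ s ∈ Icc (-1 : ℝ) (z - 1), x s = 0 := fun s hs => by
      refine le_antisymm ?_ (h.nonneg hs.1 (by linarith [hs.2]))
      rw [h0]
      exact h.mono ⟨hs.1, by linarith [hs.2]⟩ ⟨by linarith, by linarith⟩ hs.2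
    have hconst : 0 * (z - 0) ≤ x z - x 0 := mul_le_sub_of_hasDerivAt hz.le h.cont.continuousOn
      (fun u hu => h.deriv u hu.1) fun u hu => by
        rw [hzero (u - 1) ⟨by linarith [hu.1], by linarith [hu.2]⟩, hg.zero]
    linarith [h.pos_start, h.zero]

lemma HalfCycle.pos_of_sub_one_le (h : HalfCycle g x z) (hg : NegativeFeedback g) {t : ℝ}
    (h1 : z - 1 ≤ t) (h2 : t < z) : 0 < x t := by
  rcases le_or_gt 0 t with h3 | h3
  · exact h.pos t h3 h2
  · exact (h.pos_sub_one hg).trans_le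
      (h.mono ⟨by linarith [h.zpos], by linarith⟩ ⟨by linarith [h.zpos], h3.le⟩ h1)

lemma HalfCycle.strictAntiOn (h : HalfCycle g x z) (hg : NegativeFeedback g) :
    StrictAntiOn x (Icc z (z + 1)) := by
  refine strictAntiOn_of_deriv_neg (convex_Icc _ _) h.cont.continuousOn fun t ht => ?_
  rw [interior_Icc] at ht
  rw [(h.deriv t (h.zpos.trans ht.1)).deriv]
  exact hg.neg (h.pos_of_sub_one_le hg (by linarith [ht.1]) (by linarith [ht.2]))

lemma HalfCycle.neg (h : HalfCycle g x z) (hg : NegativeFeedback g) {t : ℝ} (h1 : z < t)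
    (h2 : t ≤ z + 1) : x t < 0 := by
  rw [← h.zero]
  exact h.strictAntiOn hg ⟨le_rfl, by linarith⟩ ⟨h1.le, h2⟩ h1

lemma HalfCycle.tendsto_zero {xs gs : ℕ → ℝ → ℝ} {zs : ℕ → ℝ} {Z : ℝ} {K : NNReal}
    (hg : NegativeFeedback g) (hx : HalfCycle g x z) (hlip : ∀ n, LipschitzWith K (xs n))
    (hlim : ∀ t, Tendsto (fun n => xs n t) atTop (nhds (x t)))
    (hH : ∀ n, HalfCycle (gs n) (xs n) (zs n)) (hZ : ∀ n, zs n ≤ Z) :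
    Tendsto zs atTop (nhds z) := by
  refine tendsto_of_subseq_tendsto fun ns hns => ?_
  obtain ⟨z', hz', k, hk, hlim_sub⟩ := (isCompact_Icc (a := (0 : ℝ)) (b := Z)).tendsto_subseq
    (x := fun n => zs (ns n)) fun n => ⟨(hH _).zpos.le, hZ _⟩
  refine ⟨k, ?_⟩
  have hcomp : Tendsto (fun n => ns (k n)) atTop atTop := hns.comp hk.tendsto_atTop
  have h0 : x z' = 0 := by
    refine tendsto_nhds_unique (tendsto_apply_of_lipschitzWith (φ := fun n => xs (ns (k n)))
      (fun n => hlip _) ((hlim z').comp hcomp) hlim_sub) ?_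
    simpa only [Function.comp_def, (hH _).zero] using tendsto_const_nhds
  have hge : z ≤ z' := by
    by_contra! hc
    exact (hx.pos z' hz'.1 hc).ne' h0
  have hle : z' ≤ z := by
    by_contra! hc
    obtain ⟨w, hw1, hw2⟩ := exists_between (lt_min hc (lt_add_one z))
    refine (hx.neg hg hw1 (hw2.le.trans (min_le_right _ _))).not_ge ?_
    refine ge_of_tendsto ((hlim w).comp hcomp) ?_
    filter_upwards [hlim_sub.eventually_const_lt (hw2.trans_le (min_le_left _ _))] with n hn
    exact ((hH _).pos w (hx.zpos.trans hw1).le hn).le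
  rw [le_antisymm hge hle]
  exact hlim_sub

/-- Once at the level `β`, the solution decreases at rate `σ` for one time unit: by then it has been
above `β` for one time unit. -/
lemma HalfCycle.exists_decrease (h : HalfCycle g x z) (hg : NegativeFeedback g) {μ β σ θ : ℝ}
    (hμ : 0 < μ) (hbdd : ∀ v, -μ ≤ g v) (hβ : 0 < β) (hgσ : ∀ v, β ≤ v → g v ≤ -σ)
    (hθ : 0 < θ) (h0 : β + μ * θ ≤ x 0) (hθβ : β ≤ x (-1 + θ)) :
    ∃ τ, 0 ≤ τ ∧ τ < z ∧ x τ = β ∧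
      ∀ a b, τ ≤ a → a ≤ b → b ≤ τ + 1 → x b - x a ≤ -σ * (b - a) := by
  have hz := h.zpos
  obtain ⟨τ, hτ, hxτ⟩ : β ∈ x '' Icc 0 z := by
    refine intermediate_value_Icc' hz.le h.cont.continuousOn ⟨?_, ?_⟩
    · rw [h.zero]; exact hβ.le
    · linarith [mul_pos hμ hθ]
  have hτz : τ < z := by
    refine lt_of_le_of_ne hτ.2 fun he => ?_
    rw [he, h.zero] at hxτ
    linarith
  have hθτ : θ ≤ τ := by
    have := mul_le_sub_of_hasDerivAt (c := -μ) hτ.1 h.cont.continuousOn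
      (fun u hu => h.deriv u hu.1) (fun u _ => hbdd _)
    exact le_of_mul_le_mul_left (by linarith) hμ
  have hbig : ∀ s, -1 + θ ≤ s → s ≤ τ → β ≤ x s := fun s h1 h2 => by
    rcases le_total s 0 with h3 | h3
    · exact hθβ.trans (h.mono ⟨by linarith, by linarith⟩ ⟨by linarith, h3⟩ h1)
    · rw [← hxτ]
      exact h.antitoneOn hg ⟨h3, by linarith⟩ ⟨hτ.1, by linarith⟩ h2
  exact ⟨τ, hτ.1, hτz, hxτ, fun a b h1 h2 h3 =>
    sub_le_mul_of_hasDerivAt h2 h.cont.continuousOn (fun u hu => h.deriv u (by linarith [hu.1]))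
      (fun u hu => hgσ _ (hbig _ (by linarith [hu.1]) (by linarith [hu.2])))⟩

lemma HalfCycle.add_one_le (h : HalfCycle g x z) (hg : NegativeFeedback g) {μ β σ θ : ℝ}
    (hμ : 0 < μ) (hbdd : ∀ v, -μ ≤ g v) (hβ : 0 < β) (hgσ : ∀ v, β ≤ v → g v ≤ -σ)
    (hθ : 0 < θ) (h0 : β + μ * θ ≤ x 0) (hθβ : β ≤ x (-1 + θ)) {t : ℝ} (ht : t ∈ Icc (-1 : ℝ) 0) :
    x (z + 1 + t) ≤ -min (σ * (t + 1)) (σ - β) := by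
  obtain ⟨τ, hτ0, hτz, hxτ, hdec⟩ := h.exists_decrease hg hμ hbdd hβ hgσ hθ h0 hθβ
  rcases le_total (z + 1 + t) (τ + 1) with h1 | h1
  · have := hdec z (z + 1 + t) hτz.le (by linarith [ht.1]) h1
    rw [h.zero] at this
    linarith [min_le_left (σ * (t + 1)) (σ - β)]
  · have := h.antitoneOn hg (a := τ + 1) (b := z + 1 + t) ⟨by linarith, by linarith⟩
      ⟨by linarith, by linarith [ht.2]⟩ h1
    linarith [hdec τ (τ + 1) le_rfl (by linarith) le_rfl, min_le_right (σ * (t + 1)) (σ - β)]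

end HalfCycle

/-! ### The half-return map -/

/-- The nonlinearity `v ↦ -g (-v)`, whose solutions are the functions `-x` for the solutions `x`
of the equation for `g`. -/
def reflected (g : ℝ → ℝ) (v : ℝ) : ℝ := -g (-v)

lemma reflected_reflected (g : ℝ → ℝ) : reflected (reflected g) = g := by ext v; simp [reflected]

lemma NegativeFeedback.reflect {g : ℝ → ℝ} (h : NegativeFeedback g) :
    NegativeFeedback (reflected g) where
  cont := (h.cont.comp continuous_neg).neg
  mul_neg v hv := by simpa [reflected] using h.mul_neg (-v) (neg_ne_zero.2 hv)

/-- Bounded nonlinearities with negative feedback, normalized to be `v ↦ -v` near `0`. For these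
the half-return map extends continuously to the zero profile, which is attracting. -/
structure NormalizedFeedback (g : ℝ → ℝ) (μ r : ℝ) : Prop extends NegativeFeedback g where
  bdd : ∀ v, |g v| ≤ μ
  rpos : 0 < r
  lin : ∀ v, |v| ≤ r → g v = -v

section NormalizedFeedback

variable {g φ x : ℝ → ℝ} {μ r L T : ℝ}

lemma NormalizedFeedback.reflect (h : NormalizedFeedback g μ r) :
    NormalizedFeedback (reflected g) μ r where
  toNegativeFeedback := h.toNegativeFeedback.reflect
  bdd v := by rw [reflected, abs_neg]; exact h.bdd _
  rpos := h.rpos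
  lin v hv := by rw [reflected, h.lin (-v) (by rwa [abs_neg]), neg_neg]

lemma NormalizedFeedback.mu_pos (h : NormalizedFeedback g μ r) : 0 < μ := by
  have := h.bdd r
  rw [h.lin r (abs_of_pos h.rpos).le, abs_neg, abs_of_pos h.rpos] at this
  exact h.rpos.trans_le this

lemma NegativeFeedback.exists_le_neg (h : NegativeFeedback g) (hr : 0 < r) (L : ℝ) :
    ∃ m, 0 < m ∧ ∀ v ∈ Icc r L, g v ≤ -m := by
  rcases (Icc r L).eq_empty_or_nonempty with he | hne
  · exact ⟨1, one_pos, by simp [he]⟩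
  · obtain ⟨w, hw, hmax⟩ := isCompact_Icc.exists_isMaxOn hne h.cont.continuousOn
    exact ⟨-g w, neg_pos.2 (h.neg (hr.trans_le hw.1)), fun v hv => by
      rw [neg_neg]; exact hmax hv⟩

lemma IsSolution.apply_add_one_le (hx : IsSolution g x) (hg : NegativeFeedback g) (hT : 0 ≤ T)
    (hnn : ∀ t ∈ Icc (-1) T, 0 ≤ x t) (h0 : x 0 ≤ L) (hr : r ≤ x T) {m : ℝ}
    (hm : ∀ v ∈ Icc r L, g v ≤ -m) : x (T + 1) ≤ L - m * T := by
  have hanti := hx.antitoneOn hg hnn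
  have := sub_le_mul_of_hasDerivAt (a := 1) (b := T + 1) (c := -m) (by linarith)
    hx.cont.continuousOn (fun u hu => hx.deriv u (by linarith [hu.1])) (fun u hu => hm _
      ⟨hr.trans (hanti ⟨by linarith [hu.1], by linarith [hu.2]⟩ ⟨hT, by linarith⟩
        (by linarith [hu.2])),
      (hanti ⟨le_rfl, by linarith⟩ ⟨by linarith [hu.1], by linarith [hu.2]⟩
        (by linarith [hu.1])).trans h0⟩)
  linarith [hanti ⟨le_rfl, by linarith⟩ ⟨zero_le_one, by linarith⟩ (zero_le_one' ℝ)]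

lemma IsSolution.apply_add_two_nonpos (hx : IsSolution g x) (h : NormalizedFeedback g μ r)
    (hT : 0 ≤ T) (hnn : ∀ t ∈ Icc (-1) (T + 2), 0 ≤ x t) (hr : x T ≤ r) : x (T + 2) ≤ 0 := by
  have hanti := hx.antitoneOn h.toNegativeFeedback hnn
  have := sub_le_mul_of_hasDerivAt (a := T + 1) (b := T + 2) (c := -x (T + 1)) (by linarith)
    hx.cont.continuousOn (fun u hu => hx.deriv u (by linarith [hu.1])) (fun u hu => by
      have h1 := hanti ⟨hT, by linarith⟩ ⟨by linarith [hu.1], by linarith [hu.2]⟩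
        (show T ≤ u - 1 by linarith [hu.1])
      rw [h.lin _ (abs_le.2 ⟨by linarith [h.rpos, hnn (u - 1) ⟨by linarith [hu.1],
        by linarith [hu.2]⟩], h1.trans hr⟩)]
      exact neg_le_neg (hanti ⟨by linarith [hu.1], by linarith [hu.2]⟩
        ⟨by linarith, by linarith⟩ (by linarith [hu.2])))
  linarith

/-- While `x ≥ r` the solution decreases at a uniform rate, and after that the equation is
`x'(t) = -x(t-1)`, which forces `x` to `0` within two more time units. -/
lemma NormalizedFeedback.exists_time (h : NormalizedFeedback g μ r) (hL : 0 ≤ L) :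
    ∃ Z, ∀ φ, IsProfile L φ → ∃ t, 0 ≤ t ∧ t ≤ Z ∧ solution g φ t ≤ 0 := by
  obtain ⟨m, hm, hgm⟩ := h.toNegativeFeedback.exists_le_neg h.rpos L
  have hLm : 0 ≤ L / m := by positivity
  refine ⟨L / m + 2, fun φ hφ => ?_⟩
  have hS := isSolution_solution h.cont hφ.continuous
  by_contra! hcon
  have hnn : ∀ t ∈ Icc (-1) (L / m + 2), 0 ≤ solution g φ t := fun t ht => by
    rcases le_total t 0 with h1 | h1
    · rw [solution_of_nonpos h1]; exact hφ.nonneg t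
    · exact (hcon t h1 ht.2).le
  rcases le_total r (solution g φ (L / m)) with hr | hr
  · have := hS.apply_add_one_le h.toNegativeFeedback hLm
      (fun t ht => hnn t ⟨ht.1, by linarith [ht.2]⟩)
      (by rw [solution_of_nonpos le_rfl]; exact hφ.le_const 0) hr hgm
    rw [mul_div_cancel₀ L hm.ne', sub_self] at this
    exact this.not_gt (hcon _ (by linarith) (by linarith))
  · exact (hS.apply_add_two_nonpos h hLm hnn hr).not_gt (hcon _ (by linarith) le_rfl)

lemma NormalizedFeedback.halfCycle (h : NormalizedFeedback g μ r) (hφ : IsProfile L φ)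
    (h0 : 0 < φ 0) : HalfCycle g (solution g φ) (firstZero (solution g φ)) := by
  obtain ⟨Z, H⟩ := h.exists_time hφ.const_nonneg
  obtain ⟨t, ht, -, hxt⟩ := H φ hφ
  have hS := isSolution_solution h.cont hφ.continuous
  have h0' : 0 < solution g φ 0 := by rwa [solution_of_nonpos le_rfl]
  obtain ⟨hzpos, -, hzero, hpos⟩ := firstZero_spec hS.cont h0' ht hxt
  refine ⟨hS, ?_, ?_, h0', hzpos, hzero, hpos⟩
  · rw [solution_of_nonpos (by norm_num)]; exact hφ.left _ le_rfl
  · intro s hs t ht hst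
    rw [solution_of_nonpos hs.2, solution_of_nonpos ht.2]
    exact hφ.mono hst

lemma lipschitzWith_solution (hg : Continuous g) (hbdd : ∀ v, |g v| ≤ μ) (hφ : IsProfile L φ) :
    LipschitzWith (L.toNNReal + μ.toNNReal) (solution g φ) := by
  have hleft := hφ.lipschitzWith.comp (LipschitzWith.id.min_const (0 : ℝ))
  have hright : LipschitzWith μ.toNNReal (solution g φ ∘ fun t => max t 0) := by
    simpa using ((isSolution_solution hg hφ.continuous).lipschitzOnWith hbdd).comp
      (LipschitzWith.id.max_const (0 : ℝ)).lipschitzOnWith (s := univ)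
      fun t _ => mem_Ici.2 (le_max_right _ _)
  have key : solution g φ = fun t => φ (min t 0) + (solution g φ (max t 0) - φ 0) := by
    ext t
    rcases le_total t 0 with ht | ht
    · simp [ht, solution_of_nonpos]
    · simp [ht]
  rw [key]
  simpa using hleft.add (hright.sub (LipschitzWith.const (φ 0)))

lemma tendsto_solution (hg : Continuous g) (hbdd : ∀ v, |g v| ≤ μ) {φs : ℕ → ℝ → ℝ}
    (hs : ∀ n, Continuous (φs n)) (hφ : Continuous φ)
    (hlim : ∀ t, Tendsto (fun n => φs n t) atTop (nhds (φ t))) (t : ℝ) :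
    Tendsto (fun n => solution g (φs n) t) atTop (nhds (solution g φ t)) := by
  have hleft : ∀ t ≤ 0,
      Tendsto (fun n => solution g (φs n) t) atTop (nhds (solution g φ t)) := fun t ht => by
    simpa only [solution_of_nonpos ht] using hlim t
  rcases le_total t 0 with ht | ht
  · exact hleft t ht
  · exact IsSolution.tendsto hg hbdd (fun n => isSolution_solution hg (hs n))
      (isSolution_solution hg hφ) (fun s hs => hleft s hs.2) t (by linarith)

end NormalizedFeedback

/-- The half-return map: minus the segment on `[z, z+1]` of the solution started at `φ`, where
`z` is its first zero, as a profile. -/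
noncomputable def halfReturn (g φ : ℝ → ℝ) (t : ℝ) : ℝ :=
  if φ 0 = 0 then 0
  else -solution g φ (firstZero (solution g φ) + 1 + projIcc (-1 : ℝ) 0 (by norm_num) t)

section HalfReturn

variable {g φ : ℝ → ℝ} {μ r L : ℝ}

lemma halfReturn_of_eq_zero (h0 : φ 0 = 0) : halfReturn g φ = 0 := by
  ext t; rw [halfReturn, if_pos h0, Pi.zero_apply]

lemma halfReturn_of_pos (h0 : 0 < φ 0) (t : ℝ) : halfReturn g φ t =
    -solution g φ (firstZero (solution g φ) + 1 + projIcc (-1 : ℝ) 0 (by norm_num) t) := by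
  rw [halfReturn, if_neg h0.ne']

lemma halfReturn_of_mem (h0 : 0 < φ 0) {t : ℝ} (ht : t ∈ Icc (-1 : ℝ) 0) : halfReturn g φ t =
    -solution g φ (firstZero (solution g φ) + 1 + t) := by
  rw [halfReturn_of_pos h0, projIcc_of_mem _ ht]

lemma isProfile_halfReturn (h : NormalizedFeedback g μ r) (hφ : IsProfile L φ) :
    IsProfile μ (halfReturn g φ) := by
  rcases (hφ.nonneg 0).eq_or_lt' with h0 | h0
  · exact halfReturn_of_eq_zero h0 ▸ isProfile_zero h.mu_pos.le
  have hH := h.halfCycle hφ h0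
  have hz := hH.zpos
  have hmem (t : ℝ) := (projIcc (-1 : ℝ) 0 (by norm_num) t).2
  have hproj {s t : ℝ} (hst : s ≤ t) : (projIcc (-1 : ℝ) 0 (by norm_num) s : ℝ)
      ≤ projIcc (-1 : ℝ) 0 (by norm_num) t := monotone_projIcc _ hst
  refine ⟨fun s t hst => ?_, fun t ht => ?_, fun t ht => ?_, fun s t hst => ?_⟩
  · rw [halfReturn_of_pos h0, halfReturn_of_pos h0]
    refine neg_le_neg (hH.antitoneOn h.toNegativeFeedback ⟨?_, ?_⟩ ⟨?_, ?_⟩ ?_) <;>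
      linarith [(hmem s).1, (hmem s).2, (hmem t).1, (hmem t).2, hproj hst]
  · simp [halfReturn_of_pos h0, projIcc_of_le_left _ ht, hH.zero]
  · simp [halfReturn_of_pos h0, projIcc_of_right_le _ ht]
  · rw [halfReturn_of_pos h0, halfReturn_of_pos h0]
    have hsub := mul_le_sub_of_hasDerivAt
      (add_le_add_right (hproj hst) (firstZero (solution g φ) + 1)) hH.cont.continuousOn
      (fun u hu => hH.deriv u (by linarith [hu.1, (hmem s).1])) (fun u _ => (abs_le.1 (h.bdd _)).1)
    have hle := mul_le_mul_of_nonneg_left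
      (projIcc_sub_projIcc_le (by norm_num : (-1 : ℝ) ≤ 0) hst) h.mu_pos.le
    linarith

lemma halfReturn_pos (h : NormalizedFeedback g μ r) (hφ : IsProfile L φ) (h0 : 0 < φ 0) :
    0 < halfReturn g φ 0 := by
  rw [halfReturn_of_mem h0 (by simp), add_zero]
  exact neg_pos.2 ((h.halfCycle hφ h0).neg h.toNegativeFeedback (by linarith) le_rfl)

lemma halfReturn_lt (h : NormalizedFeedback g μ r) (hφ : IsProfile L φ) (h0 : 0 < φ 0)
    (hr : φ 0 ≤ r) : halfReturn g φ 0 < φ 0 := by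
  have hH := h.halfCycle hφ h0
  have e0 : solution g φ 0 = φ 0 := solution_of_nonpos le_rfl
  rw [halfReturn_of_mem h0 (by simp), add_zero, ← e0]
  rw [← e0] at h0 hr
  set x := solution g φ
  set z := firstZero x
  have hz := hH.zpos
  have hle : ∀ u ∈ Icc z (z + 1), x (u - 1) ≤ x 0 := fun u hu =>
    hH.le_zero h.toNegativeFeedback (by linarith [hu.1]) (by linarith [hu.2])
  have hcont : Continuous fun u => x (u - 1) := hH.cont.comp (by fun_prop)
  have hx : ∀ u ∈ Ioo z (z + 1), HasDerivAt x (-x (u - 1)) u := fun u hu => by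
    rw [← h.lin (x (u - 1))]
    · exact hH.deriv u (hz.trans hu.1)
    · rw [abs_of_nonneg (hH.nonneg (by linarith [hu.1]) (by linarith [hu.2]))]
      exact (hle u ⟨hu.1.le, hu.2.le⟩).trans hr
  calc -x (z + 1) = ∫ u in z..z + 1, x (u - 1) := by
        have := intervalIntegral.integral_eq_sub_of_hasDerivAt_of_le (by linarith)
          hH.cont.continuousOn hx (hcont.neg.intervalIntegrable _ _)
        rw [hH.zero, intervalIntegral.integral_neg] at this
        linarith
    _ < ∫ _ in z..z + 1, x 0 :=
        intervalIntegral.integral_lt_integral_of_continuousOn_of_le_of_exists_lt (by linarith)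
          hcont.continuousOn continuousOn_const (fun u hu => hle u ⟨hu.1.le, hu.2⟩)
          ⟨z + 1, ⟨by linarith, le_rfl⟩, by rw [add_sub_cancel_right, hH.zero]; exact h0⟩
    _ = x 0 := by simp

lemma halfReturn_le (h : NormalizedFeedback g μ r) (hφ : IsProfile L φ) (hr : φ 0 ≤ r) (t : ℝ) :
    halfReturn g φ t ≤ φ 0 := by
  refine ((isProfile_halfReturn h hφ).le_zero t).trans ?_
  rcases (hφ.nonneg 0).eq_or_lt' with h0 | h0
  · rw [halfReturn_of_eq_zero h0, h0, Pi.zero_apply]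
  · exact (halfReturn_lt h hφ h0 hr).le

lemma tendsto_firstZero (h : NormalizedFeedback g μ r) {φs : ℕ → ℝ → ℝ}
    (hs : ∀ n, IsProfile L (φs n)) (hφ : IsProfile L φ)
    (hlim : ∀ t, Tendsto (fun n => φs n t) atTop (nhds (φ t))) (hs0 : ∀ n, 0 < φs n 0)
    (h0 : 0 < φ 0) : Tendsto (fun n => firstZero (solution g (φs n))) atTop
      (nhds (firstZero (solution g φ))) := by
  obtain ⟨Z, H⟩ := h.exists_time hφ.const_nonneg
  refine HalfCycle.tendsto_zero (Z := Z) h.toNegativeFeedback (h.halfCycle hφ h0)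
    (fun n => lipschitzWith_solution h.cont h.bdd (hs n))
    (tendsto_solution h.cont h.bdd (fun n => (hs n).continuous) hφ.continuous hlim)
    (fun n => h.halfCycle (hs n) (hs0 n)) fun n => ?_
  obtain ⟨t, ht, htZ, hxt⟩ := H _ (hs n)
  refine (firstZero_spec (h.halfCycle (hs n) (hs0 n)).cont ?_ ht hxt).2.1.trans htZ
  exact (h.halfCycle (hs n) (hs0 n)).pos_start

lemma tendsto_halfReturn (h : NormalizedFeedback g μ r) {φs : ℕ → ℝ → ℝ}
    (hs : ∀ n, IsProfile L (φs n)) (hφ : IsProfile L φ)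
    (hlim : ∀ t, Tendsto (fun n => φs n t) atTop (nhds (φ t))) (t : ℝ) :
    Tendsto (fun n => halfReturn g (φs n) t) atTop (nhds (halfReturn g φ t)) := by
  rcases (hφ.nonneg 0).eq_or_lt' with h0 | h0
  · rw [halfReturn_of_eq_zero h0, Pi.zero_apply]
    have h0lim := hlim 0
    rw [h0] at h0lim
    refine squeeze_zero' (.of_forall fun n => (isProfile_halfReturn h (hs n)).nonneg t) ?_ h0lim
    filter_upwards [h0lim.eventually_lt_const h.rpos] with n hn
    exact halfReturn_le h (hs n) hn.le t
  · obtain ⟨N, hN⟩ := eventually_atTop.1 ((hlim 0).eventually_const_lt h0)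
    have hN' : ∀ n, 0 < φs (n + N) 0 := fun n => hN _ (Nat.le_add_left N n)
    have hlim' := fun t => (hlim t).comp (tendsto_add_atTop_nat N)
    rw [← tendsto_add_atTop_iff_nat N]
    simp_rw [fun n => halfReturn_of_pos (g := g) (hN' n) t, halfReturn_of_pos (g := g) h0 t]
    exact (tendsto_apply_of_lipschitzWith
      (fun n => lipschitzWith_solution h.cont h.bdd (hs (n + N)))
      (tendsto_solution h.cont h.bdd (fun n => (hs (n + N)).continuous) hφ.continuous hlim' _)
      (((tendsto_firstZero h (fun n => hs (n + N)) hφ hlim' hN' h0).add_const 1).add_const _)).neg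

end HalfReturn

/-! ### Cycles -/

/-- A slowly oscillating periodic solution, normalized so that it is positive on `(-1, z₁)`,
negative on `(z₁, z₂)`, and has period `z₂ + 1`. -/
structure Cycle (g p : ℝ → ℝ) (z₁ z₂ : ℝ) : Prop where
  deriv : ∀ t, HasDerivAt p (g (p (t - 1))) t
  zpos : 0 < z₁
  gap : z₁ + 1 < z₂
  start : p (-1) = 0
  pos : ∀ t, -1 < t → t < z₁ → 0 < p t
  zero : p z₁ = 0
  neg : ∀ t, z₁ < t → t < z₂ → p t < 0
  periodic : Function.Periodic p (z₂ + 1)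

/-- The closed conditions satisfied by pointwise limits of cycles. -/
structure WeakCycle (g p : ℝ → ℝ) (z₁ z₂ : ℝ) : Prop where
  deriv : ∀ t, HasDerivAt p (g (p (t - 1))) t
  znonneg : 0 ≤ z₁
  gap : z₁ + 1 ≤ z₂
  start : p (-1) = 0
  nonneg : ∀ t, -1 < t → t < z₁ → 0 ≤ p t
  zero : p z₁ = 0
  nonpos : ∀ t, z₁ < t → t < z₂ → p t ≤ 0
  periodic : Function.Periodic p (z₂ + 1)

section WeakCycle

variable {g p : ℝ → ℝ} {z₁ z₂ : ℝ}

lemma WeakCycle.cont (h : WeakCycle g p z₁ z₂) : Continuous p :=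
  continuous_iff_continuousAt.2 fun t => (h.deriv t).continuousAt

lemma WeakCycle.zero₂ (h : WeakCycle g p z₁ z₂) : p z₂ = 0 := by
  rw [← h.start, ← h.periodic (-1), neg_add_cancel_comm_assoc]

lemma WeakCycle.mono (h : WeakCycle g p z₁ z₂) (hg : NegativeFeedback g) :
    MonotoneOn p (Icc (-1) 0) := by
  have hgap := h.gap
  refine monotoneOn_of_deriv_nonneg (convex_Icc _ _) h.cont.continuousOn
    (fun t _ => (h.deriv t).differentiableAt.differentiableWithinAt) fun t ht => ?_
  rw [interior_Icc] at ht
  rw [(h.deriv t).deriv, ← h.periodic (t - 1)]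
  exact hg.nonneg (h.nonpos _ (by linarith [ht.1]) (by linarith [ht.2]))

lemma WeakCycle.halfCycle (h : WeakCycle g p z₁ z₂) (hg : NegativeFeedback g) (h0 : 0 < p 0) :
    HalfCycle g p z₁ := by
  obtain ⟨hzpos, hle, hzero, hpos⟩ := firstZero_spec h.cont h0 h.znonneg h.zero.le
  have hH : HalfCycle g p (firstZero p) :=
    ⟨⟨h.cont, fun t _ => h.deriv t⟩, h.start, h.mono hg, h0, hzpos, hzero, hpos⟩
  rcases hle.eq_or_lt with heq | hlt
  · rwa [heq] at hH
  · obtain ⟨w, hw1, hw2⟩ := exists_between (lt_min hlt (lt_add_one (firstZero p)))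
    have hneg := hH.neg hg hw1 (hw2.le.trans (min_le_right _ _))
    exact absurd (h.nonneg w (by linarith) (hw2.trans_le (min_le_left _ _))) hneg.not_ge

lemma hasDerivAt_neg_shift {x : ℝ → ℝ} {a t : ℝ} (h : HasDerivAt x (g (x (a + t - 1))) (a + t)) :
    HasDerivAt (fun t => -x (a + t)) (reflected g (-x (a + (t - 1)))) t := by
  rw [reflected, neg_neg, ← add_sub_assoc]
  exact (HasDerivAt.comp_const_add a t h).neg

lemma WeakCycle.reflect (h : WeakCycle g p z₁ z₂) :
    WeakCycle (reflected g) (fun t => -p (z₁ + 1 + t)) (z₂ - z₁ - 1) z₂ where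
  deriv t := hasDerivAt_neg_shift (h.deriv _)
  znonneg := by linarith [h.gap]
  gap := by linarith [h.znonneg]
  start := by rw [add_neg_cancel_right, h.zero, neg_zero]
  nonneg t h1 h2 := neg_nonneg.2 (h.nonpos _ (by linarith) (by linarith))
  zero := by rw [show z₁ + 1 + (z₂ - z₁ - 1) = z₂ by ring, h.zero₂, neg_zero]
  nonpos t h1 h2 := by
    rw [show z₁ + 1 + t = z₁ + t - z₂ + (z₂ + 1) by ring, h.periodic]
    exact neg_nonpos.2 (h.nonneg _ (by linarith) (by linarith))
  periodic t := congrArg Neg.neg (by rw [← add_assoc]; exact h.periodic _)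

lemma WeakCycle.cycle (h : WeakCycle g p z₁ z₂) (hg : NegativeFeedback g) (h0 : 0 < p 0) :
    Cycle g p z₁ z₂ := by
  have hH := h.halfCycle hg h0
  have hz := hH.zpos
  have hH' := h.reflect.halfCycle hg.reflect
    (neg_pos.2 (hH.neg hg (by linarith) (by linarith)))
  refine ⟨h.deriv, hz, by linarith [hH'.zpos], h.start, fun t h1 h2 => ?_, h.zero,
    fun t h1 h2 => ?_, h.periodic⟩
  · rcases le_or_gt 0 t with h3 | h3
    · exact hH.pos t h3 h2
    · have hneg := hH'.neg hg.reflect (t := z₂ - z₁ + t) (by linarith) (by linarith)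
      simp only [show z₁ + 1 + (z₂ - z₁ + t) = t + (z₂ + 1) by ring, h.periodic t] at hneg
      linarith
  · rcases le_or_gt t (z₁ + 1) with h3 | h3
    · exact hH.neg hg h1 h3
    · have hpos := hH'.pos (t - (z₁ + 1)) (by linarith) (by linarith)
      simp only [add_sub_cancel] at hpos
      linarith

end WeakCycle

section Cycle

variable {g p q : ℝ → ℝ} {z₁ z₂ w₁ w₂ : ℝ}

lemma Cycle.weakCycle (h : Cycle g p z₁ z₂) : WeakCycle g p z₁ z₂ :=
  ⟨h.deriv, h.zpos.le, h.gap.le, h.start, fun t h1 h2 => (h.pos t h1 h2).le, h.zero,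
    fun t h1 h2 => (h.neg t h1 h2).le, h.periodic⟩

lemma Cycle.halfCycle (h : Cycle g p z₁ z₂) (hg : NegativeFeedback g) : HalfCycle g p z₁ :=
  h.weakCycle.halfCycle hg (h.pos 0 (by norm_num) h.zpos)

lemma Cycle.reflect (h : Cycle g p z₁ z₂) (hg : NegativeFeedback g) :
    Cycle (reflected g) (fun t => -p (z₁ + 1 + t)) (z₂ - z₁ - 1) z₂ :=
  h.weakCycle.reflect.cycle hg.reflect
    (neg_pos.2 (h.neg _ (by linarith) (by linarith [h.gap])))

lemma Cycle.exists_int_of_eq_zero (h : Cycle g p z₁ z₂) {t : ℝ} (ht : p t = 0) :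
    ∃ k : ℤ, t = -1 + k * (z₂ + 1) ∨ t = z₁ + k * (z₂ + 1) := by
  have hT : 0 < z₂ + 1 := by linarith [h.zpos, h.gap]
  have hmem := sub_toIcoDiv_zsmul_mem_Ico hT (-1) t
  rw [zsmul_eq_mul] at hmem
  refine ⟨toIcoDiv hT (-1) t, ?_⟩
  rw [← h.periodic.sub_int_mul_eq (toIcoDiv hT (-1) t)] at ht
  rcases lt_trichotomy (t - toIcoDiv hT (-1) t * (z₂ + 1)) z₁ with h1 | h1 | h1
  · rcases hmem.1.eq_or_lt with h2 | h2
    · left; linarith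
    · exact absurd ht (h.pos _ h2 h1).ne'
  · right; linarith
  · exact absurd ht (h.neg _ h1 (by linarith [hmem.2])).ne

lemma Cycle.add_one_lt_of_eq_zero (h : Cycle g p z₁ z₂) {a b : ℝ} (ha : p a = 0) (hb : p b = 0)
    (hab : a < b) : a + 1 < b := by
  have hz := h.zpos
  have hgap := h.gap
  by_contra! hle
  obtain ⟨k, hk⟩ := h.exists_int_of_eq_zero ha
  rw [← h.periodic.sub_int_mul_eq k] at hb
  rcases hk with rfl | rfl
  · exact (h.pos _ (by linarith) (by linarith)).ne' hb
  · exact (h.neg _ (by linarith) (by linarith)).ne hb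

lemma Cycle.isSOP (h : Cycle g p z₁ z₂) : IsSOP g p := by
  have hz := h.zpos
  refine ⟨h.deriv, ⟨z₂ + 1, by linarith [h.gap], h.periodic⟩, ⟨0, -1, ?_⟩,
    fun a b ha hb hab => ?_⟩
  · rw [h.start]
    exact (h.pos 0 (by norm_num) hz).ne'
  · rcases hab.lt_or_gt with hab | hab
    · rw [lt_abs]; right; linarith [h.add_one_lt_of_eq_zero ha hb hab]
    · rw [lt_abs]; left; linarith [h.add_one_lt_of_eq_zero hb ha hab]

lemma Cycle.periodThreeZeros (h : Cycle g p z₁ z₂) : PeriodThreeZeros p := by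
  have hz := h.zpos
  have hgap := h.gap
  refine ⟨-1, z₁, z₂, by linarith, by linarith, h.start, h.zero, h.weakCycle.zero₂, ?_, ?_⟩
  · rintro t (ht | ht)
    · exact (h.pos t ht.1 ht.2).ne'
    · exact (h.neg t ht.1 ht.2).ne
  · rw [sub_neg_eq_add]
    refine ⟨by linarith, h.periodic, fun T' hT' hper => ?_⟩
    by_contra! hc
    have hzero : p (-1 + T') = 0 := by rw [hper, h.start]
    have hpos : 0 < p (0 + T') := by rw [hper]; exact h.pos 0 (by norm_num) hz
    rcases lt_trichotomy (-1 + T') z₁ with h1 | h1 | h1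
    · exact (h.pos _ (by linarith) h1).ne' hzero
    · exact hpos.not_gt (h.neg _ (by linarith) (by linarith))
    · exact (h.neg _ h1 (by linarith)).ne hzero

lemma Cycle.eq_of_translate (h : Cycle g p z₁ z₂) (hq : Cycle g q w₁ w₂) {s : ℝ}
    (hs : ∀ t, q t = p (t + s)) : q = p := by
  have h0 : p (-1 + s) = 0 := by rw [← hs, hq.start]
  obtain ⟨k, hk | hk⟩ := h.exists_int_of_eq_zero h0
  · ext t
    rw [hs, show t + s = t + k * (z₂ + 1) by linarith]
    exact h.periodic.int_mul k t
  · have hpos := hq.pos 0 (by norm_num) hq.zpos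
    rw [hs, show 0 + s = z₁ + 1 + k * (z₂ + 1) by linarith, h.periodic.int_mul k] at hpos
    exact absurd (h.neg (z₁ + 1) (by linarith) h.gap) hpos.not_gt

end Cycle

section Gluing

variable {g x y : ℝ → ℝ} {z w T a μ r : ℝ}

lemma exists_periodic_extension (hT : 0 < T) (hper : ∀ t, -1 ≤ t → x (t + T) = x t) :
    ∃ p, Function.Periodic p T ∧ ∀ (n : ℕ) t, -1 ≤ t + n * T → p t = x (t + n * T) := by
  have hnat : ∀ (n : ℕ) t, -1 ≤ t → x (t + n * T) = x t := fun n t ht => by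
    induction n with
    | zero => simp
    | succ n ih =>
      have : 0 ≤ (n : ℝ) * T := by positivity
      rw [← ih, ← hper (t + n * T) (by linarith)]
      push_cast
      ring_nf
  refine ⟨fun t => x (toIcoMod hT (-1) t), fun t => by simp, fun n t ht => ?_⟩
  have hmod : t = toIcoMod hT (-1) t + toIcoDiv hT (-1) t * T := by
    rw [← zsmul_eq_mul, toIcoMod_add_toIcoDiv_zsmul]
  have hmem := toIcoMod_mem_Ico hT (-1) t
  have hk : 0 ≤ toIcoDiv hT (-1) t + n := by
    have : (-1 : ℝ) < (toIcoDiv hT (-1) t + n : ℤ) := by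
      push_cast
      refine lt_of_mul_lt_mul_right ?_ hT.le
      linarith [hmem.2]
    exact_mod_cast this
  obtain ⟨m, hm⟩ := Int.eq_ofNat_of_zero_le hk
  have hm' : (toIcoDiv hT (-1) t : ℝ) + n = m := by exact_mod_cast hm
  refine (hnat m _ hmem.1).symm.trans (congrArg x ?_)
  rw [← hm']
  linarith

lemma IsSolution.exists_periodic (hx : IsSolution g x) (hT : 0 < T)
    (hper : ∀ t, -1 ≤ t → x (t + T) = x t) :
    ∃ p, Function.Periodic p T ∧ (∀ t, -1 ≤ t → p t = x t) ∧
      ∀ t, HasDerivAt p (g (p (t - 1))) t := by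
  obtain ⟨p, hp, hpx⟩ := exists_periodic_extension hT hper
  refine ⟨p, hp, fun t ht => by simpa using hpx 0 t (by simpa using ht), fun t => ?_⟩
  obtain ⟨n, hn⟩ := exists_nat_gt (-t / T)
  rw [div_lt_iff₀ hT] at hn
  have hd : HasDerivAt (fun s => x (s + n * T)) (g (p (t - 1))) t := by
    rw [hpx n (t - 1) (by linarith), show t - 1 + n * T = t + n * T - 1 by ring]
    exact HasDerivAt.comp_add_const t (n * T) (hx.deriv _ (by linarith))
  refine hd.congr_of_eventuallyEq ?_
  filter_upwards [lt_mem_nhds (show t - 1 < t by linarith)] with s hs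
  exact hpx n s (by linarith)

lemma IsSolution.neg_shift (hx : IsSolution g x) (ha : 0 ≤ a) :
    IsSolution (reflected g) fun t => -x (a + t) where
  cont := (hx.cont.comp (continuous_const.add continuous_id)).neg
  deriv t ht := hasDerivAt_neg_shift (hx.deriv _ (by linarith))

lemma NormalizedFeedback.exists_cycle_of_halfCycles (h : NormalizedFeedback g μ r)
    (hx : HalfCycle g x z) (hy : HalfCycle (reflected g) y w)
    (hxy : ∀ t ∈ Icc (-1 : ℝ) 0, y t = -x (z + 1 + t))
    (hyx : ∀ t ∈ Icc (-1 : ℝ) 0, x t = -y (w + 1 + t)) :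
    ∃ p, Cycle g p z (z + 1 + w) ∧ ∀ t, -1 ≤ t → p t = x t := by
  have hz := hx.zpos
  have hw := hy.zpos
  replace hxy : ∀ t, -1 ≤ t → y t = -x (z + 1 + t) := fun t ht =>
    hy.unique h.reflect.cont (hx.neg_shift (by linarith)) hxy t ht
  replace hyx : ∀ t, -1 ≤ t → x t = -y (w + 1 + t) := fun t ht =>
    hx.unique h.cont (reflected_reflected g ▸ hy.neg_shift (by linarith)) hyx t ht
  have hper : ∀ t, -1 ≤ t → x (t + (z + 1 + w + 1)) = x t := fun t ht => by
    rw [hyx t ht, hxy _ (by linarith), neg_neg]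
    congr 1
    ring
  obtain ⟨p, hp, hpx, hd⟩ := hx.exists_periodic (by linarith) hper
  refine ⟨p, ⟨hd, hz, by linarith, ?_, fun t h1 h2 => ?_, ?_, fun t h1 h2 => ?_, hp⟩, hpx⟩
  · rw [hpx _ le_rfl, hx.start]
  · rw [hpx t h1.le]
    rcases le_or_gt 0 t with h3 | h3
    · exact hx.pos t h3 h2
    · rw [hyx t h1.le]
      exact neg_pos.2 (hy.neg h.reflect.toNegativeFeedback (by linarith) (by linarith))
  · rw [hpx _ (by linarith), hx.zero]
  · rw [hpx t (by linarith)]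
    rcases le_or_gt t (z + 1) with h3 | h3
    · exact hx.neg h.toNegativeFeedback h1 h3
    · have hpos := hy.pos (t - (z + 1)) (by linarith) (by linarith)
      rwa [hxy _ (by linarith), add_sub_cancel, neg_pos] at hpos

end Gluing

/-! ### The return map -/

/-- The return map on profiles: a half-return for `g` followed by one for the reflection of `g`.
Its fixed points other than `0` are the initial segments of cycles. -/
noncomputable def returnMap (g φ : ℝ → ℝ) : ℝ → ℝ := halfReturn (reflected g) (halfReturn g φ)

section ReturnMap

variable {g φ : ℝ → ℝ} {μ r L : ℝ}

lemma isProfile_returnMap (h : NormalizedFeedback g μ r) (hφ : IsProfile L φ) :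
    IsProfile μ (returnMap g φ) :=
  isProfile_halfReturn h.reflect (isProfile_halfReturn h hφ)

lemma continuousOn_returnMap (h : NormalizedFeedback g μ r) (L : ℝ) :
    ContinuousOn (returnMap g) {φ | IsProfile L φ} := by
  refine continuousOn_pi.2 fun t => continuousOn_of_isCompact_of_continuous
    (isCompact_setOf_isProfile L) (fun _ hφ => hφ.continuous) fun _ _ hs hφ hlim => ?_
  exact tendsto_halfReturn h.reflect (fun n => isProfile_halfReturn h (hs n))
    (isProfile_halfReturn h hφ) (tendsto_halfReturn h hs hφ hlim) t

lemma returnMap_apply_zero_eq_zero (h0 : φ 0 = 0) : returnMap g φ 0 = 0 := by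
  rw [returnMap, halfReturn_of_eq_zero (by rw [halfReturn_of_eq_zero h0, Pi.zero_apply]),
    Pi.zero_apply]

lemma returnMap_lt (h : NormalizedFeedback g μ r) (hφ : IsProfile L φ) (h0 : 0 < φ 0)
    (hr : φ 0 ≤ r) : returnMap g φ 0 < φ 0 := by
  have hlt := halfReturn_lt h hφ h0 hr
  exact (halfReturn_lt h.reflect (isProfile_halfReturn h hφ) (halfReturn_pos h hφ h0)
    (hlt.le.trans hr)).trans hlt

lemma exists_cycle_of_returnMap_eq (h : NormalizedFeedback g μ r) (hφ : IsProfile L φ)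
    (h0 : 0 < φ 0) (hfix : returnMap g φ = φ) :
    ∃ p z₁ z₂, Cycle g p z₁ z₂ ∧ ∀ t ∈ Icc (-1 : ℝ) 0, p t = φ t := by
  have hψ := isProfile_halfReturn h hφ
  have hψ0 := halfReturn_pos h hφ h0
  obtain ⟨p, hp, hpx⟩ := h.exists_cycle_of_halfCycles (h.halfCycle hφ h0)
    (h.reflect.halfCycle hψ hψ0)
    (fun t ht => by rw [solution_of_nonpos ht.2, halfReturn_of_mem h0 ht])
    (fun t ht => by
      rw [solution_of_nonpos ht.2, ← halfReturn_of_mem hψ0 ht]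
      exact (congrFun hfix t).symm)
  exact ⟨p, _, _, hp, fun t ht => by rw [hpx t ht.1, solution_of_nonpos ht.2]⟩

end ReturnMap

/-! ### Two fixed points of the return map -/

/-- Constants for which profiles of height at least `β + μ θ` at `0` and at least `β` at `-1 + θ`
are mapped strictly above these levels by the half-return maps of `g` and of its reflection. -/
structure Thresholds (g : ℝ → ℝ) (μ β σ θ : ℝ) : Prop where
  beta_pos : 0 < β
  sigma_pos : 0 < σ
  le_neg_of_le : ∀ v, β ≤ v → g v ≤ -σ
  le_of_le_neg : ∀ v, v ≤ -β → σ ≤ g v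
  beta_lt : β < σ * θ
  lt_sub : β + μ * θ < σ - β

section Thresholds

variable {g φ ψ : ℝ → ℝ} {μ r L β σ θ s : ℝ}

lemma Thresholds.theta_pos (hb : Thresholds g μ β σ θ) : 0 < θ :=
  pos_of_mul_pos_right (hb.beta_pos.trans hb.beta_lt) hb.sigma_pos.le

lemma Thresholds.sigma_le (hb : Thresholds g μ β σ θ) (h : NormalizedFeedback g μ r) : σ ≤ μ := by
  linarith [(abs_le.1 (h.bdd β)).1, hb.le_neg_of_le β le_rfl]

lemma Thresholds.level_lt (hb : Thresholds g μ β σ θ) (h : NormalizedFeedback g μ r) :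
    β + μ * θ < μ := by
  linarith [hb.sigma_le h, hb.beta_pos, hb.lt_sub]

lemma Thresholds.theta_lt_one (hb : Thresholds g μ β σ θ) (h : NormalizedFeedback g μ r) :
    θ < 1 :=
  lt_of_mul_lt_mul_left (by linarith [hb.level_lt h, hb.beta_pos]) h.mu_pos.le

lemma Thresholds.level_pos (hb : Thresholds g μ β σ θ) (h : NormalizedFeedback g μ r) :
    0 < β + μ * θ :=
  add_pos hb.beta_pos (mul_pos h.mu_pos hb.theta_pos)

lemma Thresholds.reflect (hb : Thresholds g μ β σ θ) : Thresholds (reflected g) μ β σ θ where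
  beta_pos := hb.beta_pos
  sigma_pos := hb.sigma_pos
  le_neg_of_le v hv := neg_le_neg (hb.le_of_le_neg _ (neg_le_neg hv))
  le_of_le_neg v hv := le_neg.2 (hb.le_neg_of_le _ (by linarith))
  beta_lt := hb.beta_lt
  lt_sub := hb.lt_sub

lemma Thresholds.min_le_halfReturn (hb : Thresholds g μ β σ θ) (h : NormalizedFeedback g μ r)
    (hφ : IsProfile L φ) (h0 : β + μ * θ ≤ φ 0) (hθ : β ≤ φ (-1 + θ)) {t : ℝ}
    (ht : t ∈ Icc (-1 : ℝ) 0) : min (σ * (t + 1)) (σ - β) ≤ halfReturn g φ t := by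
  have hφ0 : 0 < φ 0 := (hb.level_pos h).trans_le h0
  rw [halfReturn_of_mem hφ0 ht]
  refine le_neg.1 ((h.halfCycle hφ hφ0).add_one_le h.toNegativeFeedback h.mu_pos
    (fun v => (abs_le.1 (h.bdd v)).1) hb.beta_pos hb.le_neg_of_le hb.theta_pos ?_ ?_ ht)
  · rwa [solution_of_nonpos le_rfl]
  · rwa [solution_of_nonpos (by linarith [hb.theta_lt_one h])]

lemma Thresholds.lt_halfReturn (hb : Thresholds g μ β σ θ) (h : NormalizedFeedback g μ r)
    (hφ : IsProfile L φ) (h0 : β + μ * θ ≤ φ 0) (hθ : β ≤ φ (-1 + θ)) :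
    β + μ * θ < halfReturn g φ 0 ∧ β < halfReturn g φ (-1 + θ) := by
  have hlow {t : ℝ} := hb.min_le_halfReturn h hφ h0 hθ (t := t)
  have hp := mul_pos h.mu_pos hb.theta_pos
  constructor
  · refine lt_of_lt_of_le (lt_min ?_ hb.lt_sub) (hlow (by simp))
    linarith [hb.lt_sub, hb.beta_pos]
  · refine lt_of_lt_of_le (lt_min ?_ ?_)
      (hlow ⟨by linarith [hb.theta_pos], by linarith [hb.theta_lt_one h]⟩)
    · rw [neg_add_cancel_comm]; exact hb.beta_lt
    · linarith [hb.lt_sub]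

lemma Thresholds.lt_returnMap (hb : Thresholds g μ β σ θ) (h : NormalizedFeedback g μ r)
    (hφ : IsProfile L φ) (h0 : β + μ * θ ≤ φ 0) (hθ : β ≤ φ (-1 + θ)) :
    β + μ * θ < returnMap g φ 0 ∧ β < returnMap g φ (-1 + θ) := by
  obtain ⟨h0', hθ'⟩ := hb.lt_halfReturn h hφ h0 hθ
  exact hb.reflect.lt_halfReturn h.reflect (isProfile_halfReturn h hφ) h0'.le hθ'.le

lemma Thresholds.min_le_returnMap (hb : Thresholds g μ β σ θ) (h : NormalizedFeedback g μ r)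
    (hφ : IsProfile L φ) (h0 : β + μ * θ ≤ φ 0) (hθ : β ≤ φ (-1 + θ)) {t : ℝ}
    (ht : t ∈ Icc (-1 : ℝ) 0) : min (σ * (t + 1)) (σ - β) ≤ returnMap g φ t := by
  obtain ⟨h0', hθ'⟩ := hb.lt_halfReturn h hφ h0 hθ
  exact hb.reflect.min_le_halfReturn h.reflect (isProfile_halfReturn h hφ) h0'.le hθ'.le ht

lemma Thresholds.exists_large_fixedPoint (hb : Thresholds g μ β σ θ)
    (h : NormalizedFeedback g μ r) : ∃ φ, IsProfile μ φ ∧ returnMap g φ = φ ∧ σ - β ≤ φ 0 ∧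
      min (σ * θ) (σ - β) ≤ φ (-1 + θ) := by
  have hθ : -1 + θ ∈ Icc (-1 : ℝ) 0 := ⟨by linarith [hb.theta_pos], by linarith [hb.theta_lt_one h]⟩
  have hramp : β ≤ ramp μ (-1 + θ) := by
    rw [ramp_of_mem μ hθ, neg_add_cancel_comm]
    exact hb.beta_lt.le.trans (mul_le_mul_of_nonneg_right (hb.sigma_le h) hb.theta_pos.le)
  let K : Set (ℝ → ℝ) := {φ | IsProfile μ φ} ∩ ({φ | β + μ * θ ≤ φ 0} ∩ {φ | β ≤ φ (-1 + θ)})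
  have hne : K.Nonempty := ⟨ramp μ, isProfile_ramp h.mu_pos.le,
    by simpa [ramp_of_mem] using (hb.level_lt h).le, hramp⟩
  have hK : IsCompact K := (isCompact_setOf_isProfile μ).inter_right
    ((isClosed_le continuous_const (continuous_apply 0)).inter
      (isClosed_le continuous_const (continuous_apply (-1 + θ))))
  have hconv : Convex ℝ K := (convex_setOf_isProfile μ).inter
    ((convex_halfSpace_ge (LinearMap.proj (R := ℝ) (φ := fun _ : ℝ => ℝ) 0).isLinear _).inter
      (convex_halfSpace_ge (LinearMap.proj (R := ℝ) (φ := fun _ : ℝ => ℝ) (-1 + θ)).isLinear _))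
  have hmaps : MapsTo (returnMap g) K K := fun φ ⟨hφ, h0, hβ⟩ =>
    have hlt := hb.lt_returnMap h hφ h0 hβ
    ⟨isProfile_returnMap h hφ, hlt.1.le, hlt.2.le⟩
  obtain ⟨φ, ⟨hφ, h0, hβ⟩, hfix⟩ := exists_fixedPoint_of_isCompact_convex hne hK hconv
    ((continuousOn_returnMap h μ).mono inter_subset_left) hmaps
  have hlow {t : ℝ} (ht : t ∈ Icc (-1 : ℝ) 0) := hfix ▸ hb.min_le_returnMap h hφ h0 hβ ht
  refine ⟨φ, hφ, hfix, le_trans (le_min ?_ le_rfl) (hlow (by simp)), ?_⟩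
  · linarith [hb.beta_pos]
  · simpa only [neg_add_cancel_comm] using hlow hθ

/-- A functional which separates the two attracting regions of the return map: it is small near
the zero profile and, among profiles of height below `4 μ`, at least `1` exactly on those with
`ψ 0 ≥ β + μ θ` and `ψ (-1 + θ) ≥ β`. The term `1 / 2 + ψ 0 / (8 μ)` makes it strictly monotone
also for profiles vanishing at `-1 + θ`. -/
noncomputable def level (μ β θ : ℝ) (ψ : ℝ → ℝ) : ℝ :=
  min (ψ 0 / (β + μ * θ)) (max (ψ (-1 + θ) / β) (1 / 2 + ψ 0 / (8 * μ)))

lemma continuous_level (μ β θ : ℝ) : Continuous (level μ β θ) := by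
  unfold level
  fun_prop

lemma one_le_level_iff (hμ : 0 < μ) (hβ : 0 < β) (hc : 0 < β + μ * θ)
    (hψ : IsProfile (2 * μ) ψ) :
    1 ≤ level μ β θ ψ ↔ β + μ * θ ≤ ψ 0 ∧ β ≤ ψ (-1 + θ) := by
  have hsmall : 1 / 2 + ψ 0 / (8 * μ) < 1 := by
    have : ψ 0 / (8 * μ) ≤ 1 / 4 := by
      rw [div_le_iff₀ (by positivity)]
      linarith [hψ.le_const 0]
    linarith
  rw [level, le_min_iff, one_le_div hc, le_max_iff, one_le_div hβ, or_iff_left hsmall.not_ge]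

lemma one_lt_level (hβ : 0 < β) (hc : 0 < β + μ * θ) (h0 : β + μ * θ < ψ 0)
    (hθ : β < ψ (-1 + θ)) : 1 < level μ β θ ψ :=
  lt_min ((one_lt_div hc).2 h0) (lt_max_of_lt_left ((one_lt_div hβ).2 hθ))

lemma level_lt_level (hμ : 0 < μ) (hβ : 0 < β) (hc : 0 < β + μ * θ) (h0 : ψ 0 < φ 0)
    (hφ : 0 ≤ φ 0) (hθ : ψ (-1 + θ) ≤ 0 ∨ ψ (-1 + θ) < φ (-1 + θ)) :
    level μ β θ ψ < level μ β θ φ := by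
  refine min_lt_min (div_lt_div_of_pos_right h0 hc) (max_lt ?_ (lt_max_of_lt_right ?_))
  · rcases hθ with hθ | hθ
    · refine lt_max_of_lt_right ((div_nonpos_of_nonpos_of_nonneg hθ hβ.le).trans_lt ?_)
      positivity
    · exact lt_max_of_lt_left (div_lt_div_of_pos_right hθ hβ)
  · gcongr

lemma pos_of_level_pos (hc : 0 < β + μ * θ) (hψ : 0 < level μ β θ ψ) : 0 < ψ 0 :=
  (div_pos_iff_of_pos_right hc).1 (hψ.trans_le (min_le_left _ _))

lemma level_add_smul_zero_sub_lt (hμ : 0 < μ) (hβ : 0 < β) (hc : 0 < β + μ * θ)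
    (hψ : IsProfile L ψ) (h0 : 0 < ψ 0) {t : ℝ} (ht : t ∈ Ioo (0 : ℝ) 1) :
    level μ β θ (ψ + t • (0 - ψ)) < level μ β θ ψ := by
  have happly (u : ℝ) : (ψ + t • (0 - ψ)) u = ψ u - t * ψ u := by simp [sub_eq_add_neg]
  refine level_lt_level hμ hβ hc ?_ h0.le ?_
  · rw [happly]
    exact sub_lt_self _ (mul_pos ht.1 h0)
  · rw [happly]
    rcases (hψ.nonneg (-1 + θ)).eq_or_lt' with hz | hpos
    · exact Or.inl (by rw [hz, mul_zero, sub_zero])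
    · exact Or.inr (sub_lt_self _ (mul_pos ht.1 hpos))

lemma level_lt_level_add_smul_ramp_sub (hμ : 0 < μ) (hβ : 0 < β) (hc : 0 < β + μ * θ)
    (hθ : θ ∈ Ioc (0 : ℝ) 1) (hψ : IsProfile μ ψ) {t : ℝ} (ht : t ∈ Ioo (0 : ℝ) 1) :
    level μ β θ ψ < level μ β θ (ψ + t • (ramp (2 * μ) - ψ)) := by
  have hlt : ∀ u ∈ Ioc (-1 : ℝ) 0, ψ u < (ψ + t • (ramp (2 * μ) - ψ)) u := fun u hu => by
    have h1 := hψ.le_mul hu.1.le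
    have h2 : 0 < μ * (u + 1) := mul_pos hμ (by linarith [hu.1])
    rw [Pi.add_apply, Pi.smul_apply, Pi.sub_apply, ramp_of_mem _ ⟨hu.1.le, hu.2⟩, smul_eq_mul]
    exact lt_add_of_pos_right _ (mul_pos ht.1 (by linarith))
  have h0 := hlt 0 (by simp)
  exact level_lt_level hμ hβ hc h0 ((hψ.nonneg 0).trans h0.le)
    (Or.inr (hlt _ ⟨by linarith [hθ.1], by linarith [hθ.2]⟩))

lemma level_returnMap_lt (h : NormalizedFeedback g μ r) (hc : 0 < β + μ * θ) (hs0 : 0 < s)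
    (hs : s < 1 / 2) (hsr : s ≤ r / (β + μ * θ)) (hψ : IsProfile L ψ)
    (hle : level μ β θ ψ ≤ s) : level μ β θ (returnMap g ψ) < s := by
  refine (min_le_left _ _).trans_lt ?_
  have hψ0 : ψ 0 / (β + μ * θ) ≤ s := by
    refine (min_le_iff.1 hle).resolve_right fun hle => ?_
    have := div_nonneg (hψ.nonneg 0) (mul_pos (by norm_num : (0 : ℝ) < 8) h.mu_pos).le
    linarith [(le_max_right _ _).trans hle]
  rcases (hψ.nonneg 0).eq_or_lt' with h0 | h0
  · rwa [returnMap_apply_zero_eq_zero h0, zero_div]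
  · exact (div_lt_div_of_pos_right (returnMap_lt h hψ h0
      ((div_le_div_iff_of_pos_right hc).1 (hψ0.trans hsr))) hc).trans_le hψ0

lemma Thresholds.exists_small_fixedPoint (hb : Thresholds g μ β σ θ)
    (h : NormalizedFeedback g μ r) : ∃ φ, IsProfile (2 * μ) φ ∧ returnMap g φ = φ ∧ 0 < φ 0 ∧
      (φ 0 < β + μ * θ ∨ φ (-1 + θ) < β) := by
  have hμ := h.mu_pos
  have hβ := hb.beta_pos
  have hc := hb.level_pos h
  have hθ : θ ∈ Ioc (0 : ℝ) 1 := ⟨hb.theta_pos, (hb.theta_lt_one h).le⟩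
  have hs0 : 0 < min (1 / 4) (r / (β + μ * θ)) := lt_min (by norm_num) (div_pos h.rpos hc)
  have hs1 : min (1 / 4) (r / (β + μ * θ)) < 1 / 2 := (min_le_left _ _).trans_lt (by norm_num)
  have hhigh : ∀ ψ, IsProfile (2 * μ) ψ → 1 ≤ level μ β θ ψ →
      1 < level μ β θ (returnMap g ψ) := fun ψ hψ hle => by
    obtain ⟨h0, h1⟩ := (one_le_level_iff hμ hβ hc hψ).1 hle
    obtain ⟨h0', h1'⟩ := hb.lt_returnMap h hψ h0 h1
    exact one_lt_level hβ hc h0' h1'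
  have hrampP := isProfile_ramp (mul_pos two_pos hμ).le
  have hramp : 1 ≤ level μ β θ (ramp (2 * μ)) := by
    have hβθ := hb.beta_lt.trans_le (mul_le_mul_of_nonneg_right (hb.sigma_le h) hθ.1.le)
    refine (one_le_level_iff hμ hβ hc hrampP).2 ⟨?_, ?_⟩
    · rw [ramp_of_mem _ (by simp)]
      linarith [hb.level_lt h]
    · rw [ramp_of_mem _ ⟨by linarith [hθ.1], by linarith [hθ.2]⟩, neg_add_cancel_comm]
      linarith
  obtain ⟨φ, hφ, hfix, hsφ, hφ1⟩ := exists_fixedPoint_between_levels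
    (isCompact_setOf_isProfile (2 * μ)) (convex_setOf_isProfile (2 * μ))
    (continuousOn_returnMap h _) (fun φ hφ => (isProfile_returnMap h hφ).weaken (by linarith))
    (continuous_level μ β θ).continuousOn (hs1.trans (by norm_num))
    (fun ψ hψ => level_returnMap_lt h hc hs0 hs1 (min_le_right _ _) hψ) hhigh
    (isProfile_zero (by linarith)) (by simpa [level] using hs0.le) hrampP hramp
    (fun ψ hψ hs t ht => level_add_smul_zero_sub_lt hμ hβ hc (isProfile_returnMap h hψ)
      (pos_of_level_pos hc (hs0.trans hs)) ht)
    (fun ψ hψ _ t ht => level_lt_level_add_smul_ramp_sub hμ hβ hc hθ (isProfile_returnMap h hψ) ht)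
  refine ⟨φ, hφ, hfix, pos_of_level_pos hc (hs0.trans hsφ), ?_⟩
  contrapose! hφ1
  exact (one_le_level_iff hμ hβ hc hφ).2 hφ1

lemma Thresholds.exists_large_cycle (hb : Thresholds g μ β σ θ) (h : NormalizedFeedback g μ r) :
    ∃ p z₁ z₂, Cycle g p z₁ z₂ ∧ σ - β ≤ p 0 ∧ min (σ * θ) (σ - β) ≤ p (-1 + θ) := by
  obtain ⟨φ, hφ, hfix, h0, hθ⟩ := hb.exists_large_fixedPoint h
  obtain ⟨p, z₁, z₂, hp, hpφ⟩ := exists_cycle_of_returnMap_eq h hφ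
    (by linarith [hb.lt_sub, hb.level_pos h]) hfix
  refine ⟨p, z₁, z₂, hp, ?_, ?_⟩
  · rwa [hpφ 0 (by simp)]
  · rwa [hpφ _ ⟨by linarith [hb.theta_pos], by linarith [hb.theta_lt_one h]⟩]

lemma Thresholds.exists_small_cycle (hb : Thresholds g μ β σ θ) (h : NormalizedFeedback g μ r) :
    ∃ p z₁ z₂, Cycle g p z₁ z₂ ∧ (p 0 < β + μ * θ ∨ p (-1 + θ) < β) := by
  obtain ⟨φ, hφ, hfix, h0, hsmall⟩ := hb.exists_small_fixedPoint h
  obtain ⟨p, z₁, z₂, hp, hpφ⟩ := exists_cycle_of_returnMap_eq h hφ h0 hfix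
  refine ⟨p, z₁, z₂, hp, ?_⟩
  rwa [hpφ 0 (by simp), hpφ _ ⟨by linarith [hb.theta_pos], by linarith [hb.theta_lt_one h]⟩]

end Thresholds

/-! ### Uniform bounds for cycles -/

/-- Bounded negative feedback nonlinearities lying between two lines through the origin on
`[-μ, μ]`, which contains the range of `g`, and below the steeper line everywhere. -/
structure LinearBounds (g : ℝ → ℝ) (μ κ C : ℝ) : Prop extends NegativeFeedback g where
  bdd : ∀ v, |g v| ≤ μ
  kappa_pos : 0 < κ
  one_le : 1 ≤ C
  upper : ∀ v, |g v| ≤ C * |v|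
  lower : ∀ v, |v| ≤ μ → κ * |v| ≤ |g v|

section LinearBounds

variable {g p : ℝ → ℝ} {μ κ C M z₁ z₂ : ℝ}

lemma LinearBounds.reflect (h : LinearBounds g μ κ C) : LinearBounds (reflected g) μ κ C where
  toNegativeFeedback := h.toNegativeFeedback.reflect
  bdd v := by rw [reflected, abs_neg]; exact h.bdd _
  kappa_pos := h.kappa_pos
  one_le := h.one_le
  upper v := by rw [reflected, abs_neg, ← abs_neg v]; exact h.upper _
  lower v hv := by
    rw [reflected, abs_neg, ← abs_neg v]
    exact h.lower _ (by rwa [abs_neg])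

lemma LinearBounds.cycle_zero_le (h : LinearBounds g μ κ C) (hp : Cycle g p z₁ z₂) :
    p 0 ≤ μ := by
  have := sub_le_mul_of_hasDerivAt (a := -1) (b := 0) (c := μ) (by norm_num)
    hp.weakCycle.cont.continuousOn (fun u _ => hp.deriv u) fun u _ => (abs_le.1 (h.bdd _)).2
  rw [hp.start] at this
  linarith

lemma LinearBounds.neg_cycle_le (h : LinearBounds g μ κ C) (hp : Cycle g p z₁ z₂)
    (hM : ∀ s, z₁ - 1 < s → s < z₁ → p s ≤ M) : -p (z₁ + 1) ≤ C * M := by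
  have hz := hp.zpos
  have hslope : -(C * M) * (z₁ + 1 - z₁) ≤ p (z₁ + 1) - p z₁ :=
    mul_le_sub_of_hasDerivAt (by linarith) hp.weakCycle.cont.continuousOn
      (fun u _ => hp.deriv u) fun u hu => by
      have hnn : 0 ≤ p (u - 1) := (hp.halfCycle h.toNegativeFeedback).nonneg
        (by linarith [hu.1]) (by linarith [hu.2])
      calc -(C * M) ≤ -(C * p (u - 1)) := neg_le_neg (mul_le_mul_of_nonneg_left
            (hM _ (by linarith [hu.1]) (by linarith [hu.2])) (by linarith [h.one_le]))
        _ = -(C * |p (u - 1)|) := by rw [abs_of_nonneg hnn]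
        _ ≤ g (p (u - 1)) := (abs_le.1 (h.upper _)).1
  rw [hp.zero] at hslope
  linarith

lemma LinearBounds.neg_cycle_le_zero (h : LinearBounds g μ κ C) (hp : Cycle g p z₁ z₂) :
    -p (z₁ + 1) ≤ C * p 0 :=
  h.neg_cycle_le hp fun _ h1 h2 => (hp.halfCycle h.toNegativeFeedback).le_zero
    h.toNegativeFeedback (by linarith [hp.zpos]) (by linarith)

lemma LinearBounds.cycle_zero_le_neg (h : LinearBounds g μ κ C) (hp : Cycle g p z₁ z₂) :
    p 0 ≤ C * -p (z₁ + 1) := by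
  have := h.reflect.neg_cycle_le_zero (hp.reflect h.toNegativeFeedback)
  rwa [show z₁ + 1 + (z₂ - z₁ - 1 + 1) = 0 + (z₂ + 1) by ring, hp.periodic, add_zero,
    neg_neg] at this

lemma LinearBounds.cycle_zero_le_sub_one (h : LinearBounds g μ κ C) (hp : Cycle g p z₁ z₂)
    (h1 : 1 ≤ z₁) : p 0 ≤ C ^ 2 * p (z₁ - 1) := by
  have hanti := (hp.halfCycle h.toNegativeFeedback).antitoneOn h.toNegativeFeedback
  have hneg : -p (z₁ + 1) ≤ C * p (z₁ - 1) := h.neg_cycle_le hp fun s h2 h3 =>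
    hanti ⟨by linarith, by linarith⟩ ⟨by linarith, by linarith⟩ h2.le
  calc p 0 ≤ C * -p (z₁ + 1) := h.cycle_zero_le_neg hp
    _ ≤ C * (C * p (z₁ - 1)) := mul_le_mul_of_nonneg_left hneg (by linarith [h.one_le])
    _ = C ^ 2 * p (z₁ - 1) := by ring

/-- On `[1, z₁]` the solution falls at rate at least `κ * p (z₁ - 1)`, starting from at most
`C ^ 2 * p (z₁ - 1)`. -/
lemma LinearBounds.first_zero_le (h : LinearBounds g μ κ C) (hp : Cycle g p z₁ z₂) :
    z₁ ≤ 1 + C ^ 2 / κ := by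
  have hκ := h.kappa_pos
  have hquot : 0 ≤ C ^ 2 / κ := by positivity
  rcases le_total z₁ 1 with h1 | h1
  · linarith
  have hH := hp.halfCycle h.toNegativeFeedback
  have hanti := hH.antitoneOn h.toNegativeFeedback
  have hm : 0 < p (z₁ - 1) := hp.pos _ (by linarith) (by linarith)
  have hfall : p z₁ - p 1 ≤ -(κ * p (z₁ - 1)) * (z₁ - 1) :=
    sub_le_mul_of_hasDerivAt h1 hp.weakCycle.cont.continuousOn (fun u _ => hp.deriv u)
      fun u hu => by
      have hle : p (z₁ - 1) ≤ p (u - 1) := hanti ⟨by linarith [hu.1], by linarith [hu.2]⟩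
        ⟨by linarith, by linarith⟩ (by linarith [hu.2])
      have hpos := hm.trans_le hle
      have hμ : p (u - 1) ≤ μ := (hH.le_zero h.toNegativeFeedback (by linarith [hu.1])
        (by linarith [hu.2])).trans (h.cycle_zero_le hp)
      have hlower := h.lower (p (u - 1)) (by rwa [abs_of_pos hpos])
      rw [abs_of_pos hpos, abs_of_neg (h.neg hpos)] at hlower
      linarith [mul_le_mul_of_nonneg_left hle hκ.le]
  have h10 : p 1 ≤ p 0 := hanti ⟨le_rfl, by linarith⟩ ⟨by linarith, by linarith⟩ (by norm_num)
  rw [hp.zero] at hfall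
  have hmul : (z₁ - 1) * κ ≤ C ^ 2 := le_of_mul_le_mul_right
    (by linarith [h.cycle_zero_le_sub_one hp h1]) hm
  linarith [(le_div_iff₀ hκ).2 hmul]

lemma LinearBounds.second_zero_le (h : LinearBounds g μ κ C) (hp : Cycle g p z₁ z₂) :
    z₂ ≤ 3 + 2 * (C ^ 2 / κ) := by
  linarith [h.first_zero_le hp, h.reflect.first_zero_le (hp.reflect h.toNegativeFeedback)]

lemma LinearBounds.abs_cycle_le (h : LinearBounds g μ κ C) (hp : Cycle g p z₁ z₂) (t : ℝ) :
    |p t| ≤ C * p 0 := by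
  have hg := h.toNegativeFeedback
  have h0 := hp.pos 0 (by norm_num) hp.zpos
  obtain ⟨s, ⟨hs1, hs2⟩, hs⟩ := hp.periodic.exists_mem_Ico
    (by linarith [hp.zpos, hp.gap] : 0 < z₂ + 1) t (-1)
  rw [hs]
  rcases le_total s z₁ with h1 | h1
  · have hH := hp.halfCycle hg
    rw [abs_of_nonneg (hH.nonneg hs1 h1)]
    exact (hH.le_zero hg hs1 (by linarith)).trans (le_mul_of_one_le_left h0.le h.one_le)
  · have hH := (hp.reflect hg).halfCycle hg.reflect
    have hnn := hH.nonneg (t := s - (z₁ + 1)) (by linarith) (by linarith)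
    have hle := hH.le_zero hg.reflect (t := s - (z₁ + 1)) (by linarith) (by linarith)
    simp only [add_sub_cancel, add_zero] at hnn hle
    rw [abs_of_nonpos (by linarith)]
    exact hle.trans (h.neg_cycle_le_zero hp)

end LinearBounds

/-! ### Limits of cycles -/

lemma exists_subseq_tendsto_of_lipschitzWith {φ : ℕ → ℝ → ℝ} {L : NNReal} {M : ℝ}
    (hlip : ∀ n, LipschitzWith L (φ n)) (hM : ∀ n t, |φ n t| ≤ M) :
    ∃ (ψ : ℝ → ℝ) (k : ℕ → ℕ), LipschitzWith L ψ ∧ StrictMono k ∧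
      ∀ t, Tendsto (fun n => φ (k n) t) atTop (nhds (ψ t)) := by
  have hK := isCompact_setOf_lipschitzWith_mapsTo (X := ℝ) L (isCompact_Icc (a := -M) (b := M))
  obtain ⟨ψ, hψ, k, hk, hlim⟩ := isSeqCompact_of_isCompact_of_continuous hK
    (fun _ hφ => hφ.1.continuous) fun n => ⟨hlip n, fun t => abs_le.1 (hM n t)⟩
  exact ⟨ψ, k, hψ.1, hk, tendsto_pi_nhds.1 hlim⟩

section Limits

variable {gs xs : ℕ → ℝ → ℝ} {g x : ℝ → ℝ} {zs ws : ℕ → ℝ} {a b L M Z : ℝ}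

lemma hasDerivAt_of_tendsto_delay (hgs : ∀ n, Continuous (gs n)) (hg : Continuous g)
    (hlim : ∀ v, Tendsto (fun q : ℕ × ℝ => gs q.1 q.2) (atTop ×ˢ nhds v) (nhds (g v)))
    (hd : ∀ n t, HasDerivAt (xs n) (gs n (xs n (t - 1))) t)
    (hL : ∀ n t, |gs n (xs n t)| ≤ L) (hx : Continuous x)
    (hxs : ∀ t, Tendsto (fun n => xs n t) atTop (nhds (x t))) (t : ℝ) :
    HasDerivAt x (g (x (t - 1))) t := by
  have hxsc : ∀ n, Continuous (xs n) := fun n =>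
    continuous_iff_continuousAt.2 fun t => (hd n t).continuousAt
  have hcont : ∀ n, Continuous fun s => gs n (xs n (s - 1)) := fun n => by
    have := hgs n
    have := hxsc n
    fun_prop
  refine hasDerivAt_of_eq_add_integral (c := x 0) (y := fun s => g (x (s - 1)))
    (by fun_prop) (Eventually.of_forall fun u => ?_)
  have hint : ∀ n, xs n u = xs n 0 + ∫ s in (0 : ℝ)..u, gs n (xs n (s - 1)) := fun n => by
    rw [intervalIntegral.integral_eq_sub_of_hasDerivAt (fun s _ => hd n s)
      ((hcont n).intervalIntegrable _ _), add_sub_cancel]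
  refine tendsto_nhds_unique ((hxs u).congr hint) ((hxs 0).add
    (intervalIntegral.tendsto_integral_filter_of_dominated_convergence (fun _ => L)
      (Eventually.of_forall fun n => (hcont n).aestronglyMeasurable)
      (Eventually.of_forall fun n => Eventually.of_forall fun s _ => hL n _)
      intervalIntegrable_const (Eventually.of_forall fun s _ => ?_)))
  exact (hlim (x (s - 1))).comp (tendsto_id.prodMk (hxs (s - 1)))

lemma WeakCycle.of_tendsto {K : NNReal} (hcyc : ∀ n, WeakCycle (gs n) (xs n) (zs n) (ws n))
    (hlip : ∀ n, LipschitzWith K (xs n)) (hd : ∀ t, HasDerivAt x (g (x (t - 1))) t)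
    (hx : ∀ t, Tendsto (fun n => xs n t) atTop (nhds (x t)))
    (hz : Tendsto zs atTop (nhds a)) (hw : Tendsto ws atTop (nhds b)) : WeakCycle g x a b where
  deriv := hd
  znonneg := ge_of_tendsto' hz fun n => (hcyc n).znonneg
  gap := le_of_tendsto_of_tendsto' (hz.add_const 1) hw fun n => (hcyc n).gap
  start := tendsto_nhds_unique (hx (-1)) (by simp only [(hcyc _).start, tendsto_const_nhds])
  nonneg t h1 h2 := by
    refine ge_of_tendsto (hx t) ?_
    filter_upwards [hz.eventually_const_lt h2] with n hn using (hcyc n).nonneg t h1 hn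
  zero := tendsto_nhds_unique (tendsto_apply_of_lipschitzWith hlip (hx a) hz)
    (by simp only [(hcyc _).zero, tendsto_const_nhds])
  nonpos t h1 h2 := by
    refine le_of_tendsto (hx t) ?_
    filter_upwards [hz.eventually_lt_const h1, hw.eventually_const_lt h2] with n hn hn'
      using (hcyc n).nonpos t hn hn'
  periodic t := tendsto_nhds_unique
    (tendsto_apply_of_lipschitzWith hlip (hx _) ((hw.add_const 1).const_add t))
    (by simpa only [(hcyc _).periodic t] using hx t)

lemma exists_subseq_tendsto_weakCycle (hgs : ∀ n, Continuous (gs n)) (hg : Continuous g)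
    (hlim : ∀ v, Tendsto (fun q : ℕ × ℝ => gs q.1 q.2) (atTop ×ˢ nhds v) (nhds (g v)))
    (hcyc : ∀ n, WeakCycle (gs n) (xs n) (zs n) (ws n)) (hM : ∀ n t, |xs n t| ≤ M)
    (hL : ∀ n v, |v| ≤ M → |gs n v| ≤ L) (hZ : ∀ n, ws n ≤ Z) :
    ∃ (y : ℝ → ℝ) (a b : ℝ) (k : ℕ → ℕ), StrictMono k ∧
      (∀ t, Tendsto (fun n => xs (k n) t) atTop (nhds (y t))) ∧ WeakCycle g y a b := by
  have hL0 : 0 ≤ L := (abs_nonneg _).trans (hL 0 _ (hM 0 0))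
  have hlip : ∀ n, LipschitzWith ⟨L, hL0⟩ (xs n) := fun n =>
    lipschitzWith_of_nnnorm_deriv_le (fun t => ((hcyc n).deriv t).differentiableAt) fun t => by
      rw [((hcyc n).deriv t).deriv]
      exact hL n _ (hM n _)
  obtain ⟨y, k₁, hy, hk₁, hxy⟩ := exists_subseq_tendsto_of_lipschitzWith hlip hM
  have hbox : ∀ n, (zs n, ws n) ∈ Icc 0 Z ×ˢ Icc 0 Z := fun n => by
    have := (hcyc n).znonneg
    have := (hcyc n).gap
    have := hZ n
    exact ⟨⟨by linarith, by linarith⟩, ⟨by linarith, hZ n⟩⟩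
  obtain ⟨⟨a, b⟩, -, k₂, hk₂, hab⟩ :=
    (isCompact_Icc.prod isCompact_Icc).tendsto_subseq fun n => hbox (k₁ n)
  have hk := hk₁.comp hk₂
  have hxk : ∀ t, Tendsto (fun n => xs (k₁ (k₂ n)) t) atTop (nhds (y t)) := fun t =>
    (hxy t).comp hk₂.tendsto_atTop
  rw [nhds_prod_eq] at hab
  refine ⟨y, a, b, k₁ ∘ k₂, hk, hxk, WeakCycle.of_tendsto (fun n => hcyc _) (fun n => hlip _)
    (hasDerivAt_of_tendsto_delay (gs := fun n => gs (k₁ (k₂ n))) (fun n => hgs _) hg (fun v => ?_)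
      (fun n => (hcyc _).deriv) (fun n t => hL _ _ (hM _ t)) hy.continuous hxk) hxk hab.fst hab.snd⟩
  exact (hlim v).comp (hk.tendsto_atTop.prodMap tendsto_id)

end Limits

/-! ### The linear equation -/

section Linear

variable {y : ℝ → ℂ} {κ ω T : ℝ}

lemma characteristic_ne_zero (hκ : 0 < κ) (hκ' : κ < Real.pi / 2) :
    ω * Complex.I + κ * Complex.exp (-(ω * Complex.I)) ≠ 0 := fun h => by
  have hre : κ * Real.cos ω = 0 := by
    have := congrArg Complex.re h
    simpa [Complex.exp_re, Complex.exp_im] using this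
  have him : ω - κ * Real.sin ω = 0 := by
    have := congrArg Complex.im h
    simpa [Complex.exp_re, Complex.exp_im, sub_eq_add_neg] using this
  have hω : |ω| ≤ κ := by
    rw [sub_eq_zero.1 him, abs_mul, abs_of_pos hκ]
    exact mul_le_of_le_one_right hκ.le (Real.abs_sin_le_one ω)
  have hcos : 0 < Real.cos ω := Real.cos_pos_of_mem_Ioo
    ⟨by linarith [neg_le_of_abs_le hω], by linarith [le_of_abs_le hω]⟩
  exact (mul_pos hκ hcos).ne' hre

lemma integral_exp_mul_comp_sub_one (hT : Function.Periodic y T)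
    (hω : Function.Periodic (fun t : ℝ => Complex.exp (-(ω * Complex.I * t))) T) :
    ∫ t in (0 : ℝ)..T, Complex.exp (-(ω * Complex.I * t)) * y (t - 1) =
      Complex.exp (-(ω * Complex.I)) *
        ∫ t in (0 : ℝ)..T, Complex.exp (-(ω * Complex.I * t)) * y t := by
  set e : ℝ → ℂ := fun t => Complex.exp (-(ω * Complex.I * t)) with he
  have hadd : ∀ t : ℝ, e t = Complex.exp (-(ω * Complex.I)) * e (t - 1) := fun t => by
    rw [he, ← Complex.exp_add]
    push_cast
    ring_nf
  have hper : ∫ t in (-1 : ℝ)..(-1 + T), e t * y t = ∫ t in (0 : ℝ)..(0 + T), e t * y t :=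
    (hω.mul hT).intervalIntegral_add_eq (-1) 0
  calc ∫ t in (0 : ℝ)..T, e t * y (t - 1)
      = Complex.exp (-(ω * Complex.I)) * ∫ t in (0 : ℝ)..T, e (t - 1) * y (t - 1) := by
        rw [← intervalIntegral.integral_const_mul]
        exact intervalIntegral.integral_congr fun t _ => by simp only [hadd t, mul_assoc]
    _ = Complex.exp (-(ω * Complex.I)) * ∫ t in (0 : ℝ)..T, e t * y t := by
        rw [intervalIntegral.integral_comp_sub_right (fun t => e t * y t), zero_sub,
          sub_eq_neg_add, hper, zero_add]

lemma characteristic_mul_integral_eq_zero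
    (hd : ∀ t, HasDerivAt y (-(κ * y (t - 1))) t) (hT : Function.Periodic y T)
    (hω : Function.Periodic (fun t : ℝ => Complex.exp (-(ω * Complex.I * t))) T) :
    (ω * Complex.I + κ * Complex.exp (-(ω * Complex.I))) *
      ∫ t in (0 : ℝ)..T, Complex.exp (-(ω * Complex.I * t)) * y t = 0 := by
  have hy : Continuous y := continuous_iff_continuousAt.2 fun t => (hd t).continuousAt
  have hshift := integral_exp_mul_comp_sub_one hT hω
  set e : ℝ → ℂ := fun t => Complex.exp (-(ω * Complex.I * t)) with he
  have hec : Continuous e := by fun_prop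
  have hed : ∀ t, HasDerivAt e (-(ω * Complex.I) * e t) t := fun t => by
    have := ((hasDerivAt_id t).ofReal_comp.const_mul (ω * Complex.I)).neg.cexp
    simpa [he, mul_comm] using this
  have hparts : ∫ t in (0 : ℝ)..T,
      (-(ω * Complex.I) * e t * y t + e t * -(κ * y (t - 1))) = 0 := by
    rw [intervalIntegral.integral_eq_sub_of_hasDerivAt (fun t _ => (hed t).mul (hd t))
      ((by fun_prop : Continuous _).intervalIntegrable _ _)]
    simpa [sub_eq_zero] using hω.mul hT 0
  have hsplit : ∀ t, -(ω * Complex.I) * e t * y t + e t * -(κ * y (t - 1)) =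
      -(ω * Complex.I) * (e t * y t) - κ * (e t * y (t - 1)) := fun t => by ring
  simp only [hsplit] at hparts
  rw [intervalIntegral.integral_sub ((by fun_prop : Continuous _).intervalIntegrable _ _)
    ((by fun_prop : Continuous _).intervalIntegrable _ _), intervalIntegral.integral_const_mul,
    intervalIntegral.integral_const_mul, hshift] at hparts
  linear_combination -hparts

/-- All Fourier coefficients vanish, since the characteristic function has no imaginary zero. -/
lemma eq_zero_of_periodic_of_linear_delay (hκ : 0 < κ) (hκ' : κ < Real.pi / 2) (hT : 0 < T)
    (hd : ∀ t, HasDerivAt y (-(κ * y (t - 1))) t) (hper : Function.Periodic y T) : y = 0 := by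
  have hy : Continuous y := continuous_iff_continuousAt.2 fun t => (hd t).continuousAt
  have : Fact (0 < T) := ⟨hT⟩
  let Y : C(AddCircle T, ℂ) := ⟨hper.lift, continuous_coinduced_dom.2 hy⟩
  have hcoeff : ∀ n, fourierCoeff Y n = 0 := fun n => by
    have hexp : ∀ t : ℝ, fourier (-n) (t : AddCircle T) =
        Complex.exp (-((2 * Real.pi * n / T : ℝ) * Complex.I * t)) := fun t => by
      rw [fourier_coe_apply]
      push_cast
      ring_nf
    have hω : Function.Periodic (fun t : ℝ =>
        Complex.exp (-((2 * Real.pi * n / T : ℝ) * Complex.I * t))) T := fun t => by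
      simp only [← hexp, AddCircle.coe_add_period]
    have hint := (mul_eq_zero.1 (characteristic_mul_integral_eq_zero hd hper hω)).resolve_left
      (characteristic_ne_zero hκ hκ')
    rw [fourierCoeff_eq_intervalIntegral _ _ 0, zero_add]
    simp only [hexp, smul_eq_mul]
    change (1 / T) • ∫ t in (0 : ℝ)..T, _ * y t = 0
    rw [hint, smul_zero]
  funext t
  have hsum := has_pointwise_sum_fourier_series_of_summable (f := Y)
    (by simp only [funext hcoeff]; exact summable_zero) t
  simp only [hcoeff, zero_smul] at hsum
  exact hsum.unique hasSum_zero

end Linear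

/-! ### Approximating nonlinearities -/

/-- A logarithmic cutoff: `0` for `|x| ≥ exp (-m)`, `1` for `|x| ≤ exp (-2 * m)`, and affine in
`log |x|` in between, so that it varies slowly under rescaling of `x`. The value at `0` is set
separately because of the convention `Real.log 0 = 0`. -/
noncomputable def cutoff (m x : ℝ) : ℝ :=
  if x = 0 then 1 else max 0 (min 1 (-Real.log x / m - 1))

section Cutoff

variable {m h x : ℝ}

lemma cutoff_of_ne_zero (hx : x ≠ 0) : cutoff m x = max 0 (min 1 (-Real.log x / m - 1)) :=
  if_neg hx

lemma cutoff_mem_Icc (m x : ℝ) : cutoff m x ∈ Icc (0 : ℝ) 1 := by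
  unfold cutoff
  split_ifs
  · exact ⟨zero_le_one, le_rfl⟩
  · exact ⟨le_max_left _ _, max_le zero_le_one (min_le_left _ _)⟩

lemma cutoff_eq_zero (hm : 0 < m) (hx : Real.exp (-m) ≤ |x|) : cutoff m x = 0 := by
  have hx0 : 0 < |x| := (Real.exp_pos _).trans_le hx
  have hlog : -m ≤ Real.log x := by rwa [← Real.log_abs, Real.le_log_iff_exp_le hx0]
  have hle : -Real.log x / m ≤ 1 := by rw [div_le_one hm]; linarith
  rw [cutoff_of_ne_zero (abs_pos.1 hx0)]
  exact max_eq_left ((min_le_right _ _).trans (by linarith))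

lemma cutoff_eq_one (hm : 0 < m) (hx : |x| ≤ Real.exp (-(2 * m))) : cutoff m x = 1 := by
  rcases eq_or_ne x 0 with rfl | hx0
  · exact if_pos rfl
  · have hlog : Real.log x ≤ -(2 * m) := by
      rwa [← Real.log_abs, Real.log_le_iff_le_exp (abs_pos.2 hx0)]
    have hle : 2 ≤ -Real.log x / m := by rw [le_div_iff₀ hm]; linarith
    rw [cutoff_of_ne_zero hx0, min_eq_left (by linarith), max_eq_right zero_le_one]

lemma continuous_cutoff (hm : 0 < m) : Continuous (cutoff m) := by
  refine continuous_iff_continuousAt.2 fun x => ?_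
  rcases eq_or_ne x 0 with rfl | hx
  · have hsmall : ∀ᶠ x in nhds (0 : ℝ), |x| < Real.exp (-(2 * m)) :=
      continuous_abs.tendsto' 0 0 abs_zero |>.eventually_lt_const (Real.exp_pos _)
    refine continuousAt_const.congr (f := fun _ => 1) ?_
    filter_upwards [hsmall] with x hx using (cutoff_eq_one hm hx.le).symm
  · have := Real.continuousAt_log hx
    have hcont : ContinuousAt (fun x => max 0 (min 1 (-Real.log x / m - 1))) x := by fun_prop
    refine hcont.congr ?_
    filter_upwards [eventually_ne_nhds hx] with y hy using (cutoff_of_ne_zero hy).symm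

lemma abs_cutoff_mul_sub_le (hm : 0 < m) (hh : h ≠ 0) (hx : x ≠ 0) :
    |cutoff m (h * x) - cutoff m h| ≤ |Real.log x| / m := by
  rw [cutoff_of_ne_zero (mul_ne_zero hh hx), cutoff_of_ne_zero hh]
  refine (abs_max_sub_max_le_max _ _ _ _).trans (max_le (by rw [sub_self, abs_zero]; positivity) ?_)
  refine (abs_min_sub_min_le_max _ _ _ _).trans (max_le (by rw [sub_self, abs_zero]; positivity) ?_)
  rw [Real.log_mul hh hx, show -(Real.log h + Real.log x) / m - 1 - (-Real.log h / m - 1)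
    = -(Real.log x / m) by ring, abs_neg, abs_div, abs_of_pos hm]

end Cutoff

/-- The nonlinearity `f` with its germ at `0` replaced by that of `v ↦ -v`. -/
noncomputable def approx (f : ℝ → ℝ) (m x : ℝ) : ℝ := AffineMap.lineMap (f x) (-x) (cutoff m x)

lemma approx_of_exp_le {f : ℝ → ℝ} {m x : ℝ} (hm : 0 < m) (hx : Real.exp (-m) ≤ |x|) :
    approx f m x = f x := by
  rw [approx, cutoff_eq_zero hm hx, AffineMap.lineMap_apply_zero]

/-- A factorization `f x = -(x * q x)` with `q` continuous and positive, together with bounds. -/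
structure QuotientBounds (f q : ℝ → ℝ) (μ κ C : ℝ) : Prop where
  cont : Continuous q
  eq : ∀ x, f x = -(x * q x)
  mem : ∀ x, q x ∈ Ioc 0 C
  bdd : ∀ x, |f x| ≤ μ
  kappa_pos : 0 < κ
  kappa_le_one : κ ≤ 1
  one_le : 1 ≤ C
  lower : ∀ x, |x| ≤ μ → κ ≤ q x

section QuotientBounds

variable {f q : ℝ → ℝ} {μ κ C m : ℝ}

lemma NegativeFeedback.eq_neg_mul_neg_dslope (hf : NegativeFeedback f) (x : ℝ) :
    f x = -(x * -dslope f 0 x) := by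
  simpa [hf.zero] using (sub_smul_dslope f 0 x).symm

lemma NegativeFeedback.neg_dslope_pos (hf : NegativeFeedback f) (hd : deriv f 0 < 0) (x : ℝ) :
    0 < -dslope f 0 x := by
  rcases eq_or_ne x 0 with rfl | hx
  · rwa [dslope_same, neg_pos]
  · have hneg := hf.mul_neg x hx
    rw [hf.eq_neg_mul_neg_dslope x, _root_.mul_neg, ← mul_assoc, neg_lt_zero] at hneg
    exact pos_of_mul_pos_right hneg (mul_self_nonneg x)

lemma continuous_dslope_zero (hf : Continuous f) (hd : DifferentiableAt ℝ f 0) :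
    Continuous (dslope f 0) :=
  continuous_iff_continuousAt.2 fun x => by
    rcases eq_or_ne x 0 with rfl | hx
    · exact continuousAt_dslope_same.2 hd
    · exact (continuousAt_dslope_of_ne hx).2 hf.continuousAt

lemma NegativeFeedback.exists_quotientBounds (hf : NegativeFeedback f) (hd : deriv f 0 < 0)
    (hb : ∀ x, |f x| ≤ μ) : ∃ κ C, QuotientBounds f (fun x => -dslope f 0 x) μ κ C := by
  have hq := (continuous_dslope_zero hf.cont (differentiableAt_of_deriv_ne_zero hd.ne)).neg
  have hpos := hf.neg_dslope_pos hd
  have hμ : 0 ≤ μ := (abs_nonneg _).trans (hb 0)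
  obtain ⟨a, -, ha⟩ := (isCompact_Icc (a := -μ) (b := μ)).exists_isMinOn
    ⟨0, by linarith, hμ⟩ hq.continuousOn
  obtain ⟨b, -, hb'⟩ := (isCompact_Icc (a := (-1 : ℝ)) (b := 1)).exists_isMaxOn
    ⟨0, by norm_num⟩ hq.continuousOn
  refine ⟨min 1 (-dslope f 0 a), max 1 (max (-dslope f 0 b) μ), hq, hf.eq_neg_mul_neg_dslope,
    fun x => ⟨hpos x, ?_⟩, hb, lt_min one_pos (hpos a), min_le_left _ _, le_max_left _ _,
    fun x hx => (min_le_right _ _).trans (ha (abs_le.1 hx))⟩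
  rcases le_total |x| 1 with hx | hx
  · exact (hb' (abs_le.1 hx)).trans ((le_max_left _ _).trans (le_max_right _ _))
  · have hle := hb x
    rw [hf.eq_neg_mul_neg_dslope x, abs_neg, abs_mul, abs_of_pos (hpos x)] at hle
    exact (le_mul_of_one_le_left (hpos x).le hx).trans
      (hle.trans ((le_max_right _ _).trans (le_max_right _ _)))

lemma QuotientBounds.negativeFeedback (h : QuotientBounds f q μ κ C) : NegativeFeedback f where
  cont := by
    rw [funext h.eq]
    exact (continuous_id.mul h.cont).neg
  mul_neg x hx := by
    rw [h.eq, _root_.mul_neg, ← mul_assoc, neg_lt_zero]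
    exact mul_pos (mul_self_pos.2 hx) (h.mem x).1

lemma QuotientBounds.abs_eq (h : QuotientBounds f q μ κ C) (x : ℝ) : |f x| = q x * |x| := by
  rw [h.eq, abs_neg, abs_mul, abs_of_pos (h.mem x).1, mul_comm]

lemma QuotientBounds.mu_pos (h : QuotientBounds f q μ κ C) : 0 < μ := by
  have hle := h.bdd 1
  rw [h.abs_eq, abs_one, mul_one] at hle
  exact (h.mem 1).1.trans_le hle

lemma QuotientBounds.linearBounds (h : QuotientBounds f q μ κ C) : LinearBounds f μ κ C where
  toNegativeFeedback := h.negativeFeedback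
  bdd := h.bdd
  kappa_pos := h.kappa_pos
  one_le := h.one_le
  upper x := by
    rw [h.abs_eq]
    exact mul_le_mul_of_nonneg_right (h.mem x).2 (abs_nonneg x)
  lower x hx := by
    rw [h.abs_eq]
    exact mul_le_mul_of_nonneg_right (h.lower x hx) (abs_nonneg x)

lemma QuotientBounds.approx_eq (h : QuotientBounds f q μ κ C) (m x : ℝ) :
    approx f m x = -(x * AffineMap.lineMap (q x) 1 (cutoff m x)) := by
  rw [approx, h.eq, AffineMap.lineMap_apply_ring', AffineMap.lineMap_apply_ring']
  ring

lemma QuotientBounds.lineMap_mem (h : QuotientBounds f q μ κ C) (m x : ℝ) :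
    AffineMap.lineMap (q x) 1 (cutoff m x) ∈ Ioc 0 C :=
  (convex_Ioc 0 C).lineMap_mem (h.mem x) ⟨one_pos, h.one_le⟩ (cutoff_mem_Icc m x)

lemma QuotientBounds.abs_lineMap_le (h : QuotientBounds f q μ κ C) (m x : ℝ) :
    |AffineMap.lineMap (q x) 1 (cutoff m x)| ≤ C :=
  (abs_of_pos (h.lineMap_mem m x).1).trans_le (h.lineMap_mem m x).2

lemma QuotientBounds.quotientBounds_approx (h : QuotientBounds f q μ κ C) (hm : 0 < m)
    (hmμ : Real.exp (-m) ≤ μ) :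
    QuotientBounds (approx f m) (fun x => AffineMap.lineMap (q x) 1 (cutoff m x)) μ κ C where
  cont := by
    have := h.cont
    have := continuous_cutoff hm
    simp only [AffineMap.lineMap_apply_ring']
    fun_prop
  eq := h.approx_eq m
  mem := h.lineMap_mem m
  bdd x := by
    rcases le_total (Real.exp (-m)) |x| with hx | hx
    · rw [approx_of_exp_le hm hx]
      exact h.bdd x
    · exact abs_le.2 ((convex_Icc (-μ) μ).lineMap_mem (abs_le.1 (h.bdd x))
        (abs_le.1 (by rw [abs_neg]; exact hx.trans hmμ)) (cutoff_mem_Icc m x))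
  kappa_pos := h.kappa_pos
  kappa_le_one := h.kappa_le_one
  one_le := h.one_le
  lower x hx := (convex_Ici κ).lineMap_mem (h.lower x hx) h.kappa_le_one (cutoff_mem_Icc m x)

lemma QuotientBounds.normalizedFeedback_approx (h : QuotientBounds f q μ κ C) (hm : 0 < m)
    (hmμ : Real.exp (-m) ≤ μ) :
    NormalizedFeedback (approx f m) μ (Real.exp (-(2 * m))) where
  toNegativeFeedback := (h.quotientBounds_approx hm hmμ).negativeFeedback
  bdd := (h.quotientBounds_approx hm hmμ).bdd
  rpos := Real.exp_pos _
  lin x hx := by rw [approx, cutoff_eq_one hm hx, AffineMap.lineMap_apply_one]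

end QuotientBounds

/-! ### Limits of the approximations -/

section Tendsto

variable {ι : Type*} {l : Filter ι} {f q : ℝ → ℝ} {μ κ C v w : ℝ} {ms hs vs : ι → ℝ}

lemma tendsto_mul_of_bounded {u r : ι → ℝ} {a k C : ℝ} (hu : Tendsto u l (nhds a))
    (hC : ∀ i, |r i| ≤ C) (hr : a ≠ 0 → Tendsto r l (nhds k)) :
    Tendsto (fun i => u i * r i) l (nhds (a * k)) := by
  rcases eq_or_ne a 0 with rfl | ha
  · rw [zero_mul]
    exact hu.zero_mul_isBoundedUnder_le (isBoundedUnder_of ⟨C, hC⟩)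
  · exact hu.mul (hr ha)

lemma QuotientBounds.tendsto_approx (h : QuotientBounds f q μ κ C) (hms : Tendsto ms l atTop)
    (hvs : Tendsto vs l (nhds v)) :
    Tendsto (fun i => approx f (ms i) (vs i)) l (nhds (f v)) := by
  simp only [h.approx_eq]
  rw [h.eq]
  refine (tendsto_mul_of_bounded hvs (fun i => h.abs_lineMap_le _ _) fun hv => ?_).neg
  have hexp : Tendsto (fun i => Real.exp (-ms i)) l (nhds 0) :=
    Real.tendsto_exp_neg_atTop_nhds_zero.comp hms
  refine ((h.cont.tendsto v).comp hvs).congr' ?_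
  filter_upwards [hexp.eventually_lt hvs.abs (abs_pos.2 hv), hms.eventually_gt_atTop 0]
    with i hi hi'
  rw [cutoff_eq_zero hi' hi.le, AffineMap.lineMap_apply_zero, Function.comp_apply]

lemma tendsto_cutoff_mul (hms : Tendsto ms l atTop) (hpos : ∀ i, 0 < hs i)
    (hw : Tendsto (fun i => cutoff (ms i) (hs i)) l (nhds w)) (hv : v ≠ 0)
    (hvs : Tendsto vs l (nhds v)) :
    Tendsto (fun i => cutoff (ms i) (hs i * vs i)) l (nhds w) := by
  have hlog : Tendsto (fun i => |Real.log (vs i)| / ms i) l (nhds 0) :=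
    ((Real.continuousAt_log hv).tendsto.comp hvs).abs.div_atTop hms
  have hdiff : Tendsto (fun i => cutoff (ms i) (hs i * vs i) - cutoff (ms i) (hs i)) l
      (nhds 0) := by
    refine squeeze_zero_norm' ?_ hlog
    filter_upwards [hvs.eventually_ne hv, hms.eventually_gt_atTop 0] with i h1 h2
    exact abs_cutoff_mul_sub_le h2 (hpos i).ne' h1
  simpa using hdiff.add hw

/-- The slow variation of the cutoff makes the blow-ups of the approximations at `0` linear. -/
lemma QuotientBounds.tendsto_approx_mul_div (h : QuotientBounds f q μ κ C)
    (hms : Tendsto ms l atTop) (hhs : Tendsto hs l (nhds 0)) (hpos : ∀ i, 0 < hs i)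
    (hw : Tendsto (fun i => cutoff (ms i) (hs i)) l (nhds w)) (hvs : Tendsto vs l (nhds v)) :
    Tendsto (fun i => approx f (ms i) (hs i * vs i) / hs i) l
      (nhds (-(AffineMap.lineMap (q 0) 1 w * v))) := by
  have hquot : ∀ i, approx f (ms i) (hs i * vs i) / hs i =
      -(vs i * AffineMap.lineMap (q (hs i * vs i)) 1 (cutoff (ms i) (hs i * vs i))) := fun i => by
    rw [h.approx_eq, mul_assoc, neg_div, mul_div_cancel_left₀ _ (hpos i).ne']
  simp only [hquot]
  rw [mul_comm _ v]
  refine (tendsto_mul_of_bounded hvs (fun i => h.abs_lineMap_le _ _) fun hv => ?_).neg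
  have hq : Tendsto (fun i => q (hs i * vs i)) l (nhds (q 0)) :=
    (h.cont.tendsto 0).comp (by simpa using hhs.mul hvs)
  have hcut := tendsto_cutoff_mul hms hpos hw hv hvs
  simp only [AffineMap.lineMap_apply_ring']
  exact (hcut.mul (hq.const_sub 1)).add hq

end Tendsto

lemma WeakCycle.div_const {g p : ℝ → ℝ} {z₁ z₂ h : ℝ} (hp : WeakCycle g p z₁ z₂) (hh : 0 < h) :
    WeakCycle (fun v => g (h * v) / h) (fun t => p t / h) z₁ z₂ where
  deriv t := by
    rw [mul_div_cancel₀ _ hh.ne']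
    exact (hp.deriv t).div_const h
  znonneg := hp.znonneg
  gap := hp.gap
  start := by rw [hp.start, zero_div]
  nonneg t h1 h2 := div_nonneg (hp.nonneg t h1 h2) hh.le
  zero := by rw [hp.zero, zero_div]
  nonpos t h1 h2 := div_nonpos_of_nonpos_of_nonneg (hp.nonpos t h1 h2) hh.le
  periodic t := by simp only [hp.periodic t]

lemma WeakCycle.eq_zero_of_linear {p : ℝ → ℝ} {k z₁ z₂ : ℝ}
    (hp : WeakCycle (fun v => -(k * v)) p z₁ z₂) (hk : k ∈ Ioo 0 (Real.pi / 2)) : p = 0 := by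
  have hzero : (fun t => (p t : ℂ)) = 0 := eq_zero_of_periodic_of_linear_delay hk.1 hk.2
    (by linarith [hp.znonneg, hp.gap] : 0 < z₂ + 1)
    (fun t => by simpa using (hp.deriv t).ofReal_comp) fun t => by rw [hp.periodic]
  exact funext fun t => Complex.ofReal_eq_zero.1 (congrFun hzero t)

lemma LinearBounds.abs_comp_mul_div_le {g : ℝ → ℝ} {μ κ C h : ℝ} (hg : LinearBounds g μ κ C)
    (hh : 0 < h) (v : ℝ) : |g (h * v) / h| ≤ C * |v| := by
  rw [abs_div, abs_of_pos hh, div_le_iff₀ hh]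
  calc |g (h * v)| ≤ C * |h * v| := hg.upper _
    _ = C * |v| * h := by rw [abs_mul, abs_of_pos hh]; ring

section BlowUp

variable {f q : ℝ → ℝ} {μ κ C : ℝ}

/-- Otherwise the cycles rescaled to height `1` would converge to a periodic solution of
`y'(t) = -k * y (t - 1)` with `k` between `1` and `q 0`. -/
lemma QuotientBounds.not_tendsto_cycle_zero (h : QuotientBounds f q μ κ C)
    (hq : q 0 < Real.pi / 2) {ms zs ws : ℕ → ℝ} {ys : ℕ → ℝ → ℝ} (hms : Tendsto ms atTop atTop)
    (hlb : ∀ n, LinearBounds (approx f (ms n)) μ κ C)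
    (hcyc : ∀ n, Cycle (approx f (ms n)) (ys n) (zs n) (ws n)) :
    ¬ Tendsto (fun n => ys n 0) atTop (nhds 0) := fun hlim => by
  have hy0 : ∀ n, 0 < ys n 0 := fun n => (hcyc n).pos 0 (by norm_num) (hcyc n).zpos
  obtain ⟨w, hw, j, hj, hjw⟩ :=
    isCompact_Icc.tendsto_subseq fun n => cutoff_mem_Icc (ms n) (ys n 0)
  have hk : AffineMap.lineMap (q 0) 1 w ∈ Ioo 0 (Real.pi / 2) :=
    (convex_Ioo _ _).lineMap_mem ⟨(h.mem 0).1, hq⟩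
      ⟨one_pos, by linarith [Real.pi_gt_three]⟩ hw
  obtain ⟨u, a, b, i, -, hu, hcu⟩ := exists_subseq_tendsto_weakCycle (M := C) (L := C * C)
    (gs := fun n v => approx f (ms (j n)) (ys (j n) 0 * v) / ys (j n) 0)
    (xs := fun n t => ys (j n) t / ys (j n) 0)
    (g := fun v => -(AffineMap.lineMap (q 0) 1 w * v))
    (fun n => ((hlb (j n)).cont.comp (continuous_const_mul _)).div_const _) (by fun_prop)
    (fun v => h.tendsto_approx_mul_div ((hms.comp hj.tendsto_atTop).comp tendsto_fst)
      ((hlim.comp hj.tendsto_atTop).comp tendsto_fst) (fun p => hy0 (j p.1))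
      (hjw.comp tendsto_fst) tendsto_snd)
    (fun n => (hcyc (j n)).weakCycle.div_const (hy0 (j n)))
    (fun n t => by
      rw [abs_div, abs_of_pos (hy0 _), div_le_iff₀ (hy0 _)]
      exact (hlb (j n)).abs_cycle_le (hcyc (j n)) t)
    (fun n v hv => ((hlb (j n)).abs_comp_mul_div_le (hy0 (j n)) v).trans
      (mul_le_mul_of_nonneg_left hv (zero_le_one.trans h.one_le)))
    (fun n => (hlb (j n)).second_zero_le (hcyc (j n)))
  have hu1 : u 0 = 1 := tendsto_nhds_unique (hu 0) (by
    simp only [div_self (hy0 _).ne', tendsto_const_nhds])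
  rw [hcu.eq_zero_of_linear hk] at hu1
  exact zero_ne_one hu1

lemma QuotientBounds.eventually_linearBounds_approx (h : QuotientBounds f q μ κ C) :
    ∀ᶠ m in atTop, LinearBounds (approx f m) μ κ C := by
  filter_upwards [eventually_gt_atTop 0,
    Real.tendsto_exp_neg_atTop_nhds_zero.eventually_le_const h.mu_pos] with m hm hmμ
    using (h.quotientBounds_approx hm hmμ).linearBounds

lemma QuotientBounds.exists_cycle_of_eventually (h : QuotientBounds f q μ κ C)
    (hq : q 0 < Real.pi / 2) {S : Set (ℝ → ℝ)} (hS : IsClosed S)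
    (hcyc : ∀ᶠ m in atTop, ∃ p ∈ S, ∃ z₁ z₂, Cycle (approx f m) p z₁ z₂) :
    ∃ p ∈ S, ∃ z₁ z₂, Cycle f p z₁ z₂ := by
  obtain ⟨N, hN⟩ := eventually_atTop.1 (h.eventually_linearBounds_approx.and hcyc)
  have hle : ∀ n : ℕ, N ≤ N + n := fun n => le_add_of_nonneg_right n.cast_nonneg
  have hms : Tendsto (fun n : ℕ => N + (n : ℝ)) atTop atTop :=
    tendsto_atTop_add_const_left _ _ tendsto_natCast_atTop_atTop
  have hlb := fun n => (hN _ (hle n)).1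
  choose ys hyS zs ws hcyc using fun n => (hN _ (hle n)).2
  obtain ⟨y, a, b, k, hk, hlim, hweak⟩ := exists_subseq_tendsto_weakCycle (M := C * μ)
    (fun n => (hlb n).cont) h.negativeFeedback.cont
    (fun v => h.tendsto_approx (hms.comp tendsto_fst) tendsto_snd)
    (fun n => (hcyc n).weakCycle)
    (fun n t => ((hlb n).abs_cycle_le (hcyc n) t).trans (mul_le_mul_of_nonneg_left
      ((hlb n).cycle_zero_le (hcyc n)) (zero_le_one.trans h.one_le)))
    (fun n v _ => (hlb n).bdd v) fun n => (hlb n).second_zero_le (hcyc n)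
  have hpos : 0 < y 0 := by
    refine lt_of_le_of_ne (ge_of_tendsto' (hlim 0) fun n =>
      ((hcyc _).pos 0 (by norm_num) (hcyc _).zpos).le) fun hzero => ?_
    have hlim0 := hlim 0
    rw [← hzero] at hlim0
    exact h.not_tendsto_cycle_zero hq (hms.comp hk.tendsto_atTop) (fun n => hlb (k n))
      (fun n => hcyc (k n)) hlim0
  exact ⟨y, hS.mem_of_tendsto (tendsto_pi_nhds.2 hlim) (Eventually.of_forall fun n => hyS _),
    a, b, hweak.cycle h.negativeFeedback hpos⟩

end BlowUp

/-! ### Two cycles -/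

section TwoCycles

variable {f q : ℝ → ℝ} {μ κ C β σ θ m : ℝ}

lemma NegativeFeedback.exists_thresholds (hf : NegativeFeedback f) (hb : ∀ x, |f x| ≤ μ)
    (hlarge : ∀ x, β ≤ |x| → σ ≤ |f x|) (hβ : 0 < β) (hσ : 0 < σ) (hβσ : β < σ / (2 + μ / σ)) :
    ∃ θ, Thresholds f μ β σ θ := by
  have hμ : 0 < μ := hσ.trans_le ((hlarge β (le_abs_self β)).trans (hb β))
  rw [lt_div_iff₀ (by positivity)] at hβσ
  obtain ⟨θ, hlt, hgt⟩ : ∃ θ, β / σ < θ ∧ θ < (σ - 2 * β) / μ := by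
    refine exists_between ((lt_div_iff₀ hμ).2 ?_)
    linarith [show β * (2 + μ / σ) = 2 * β + β / σ * μ by ring]
  rw [div_lt_iff₀ hσ] at hlt
  rw [lt_div_iff₀ hμ] at hgt
  refine ⟨θ, hβ, hσ, fun v hv => ?_, fun v hv => ?_, by linarith, by linarith⟩
  · have := hlarge v (hv.trans (le_abs_self v))
    rw [abs_of_neg (hf.neg (hβ.trans_le hv))] at this
    linarith
  · have := hlarge v (by linarith [neg_le_abs v])
    rwa [abs_of_pos (hf.pos (by linarith))] at this

lemma Thresholds.approx (hb : Thresholds f μ β σ θ) (hm : 0 < m) (hmβ : Real.exp (-m) ≤ β) :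
    Thresholds (approx f m) μ β σ θ where
  beta_pos := hb.beta_pos
  sigma_pos := hb.sigma_pos
  le_neg_of_le v hv := by
    rw [approx_of_exp_le hm (by linarith [le_abs_self v])]
    exact hb.le_neg_of_le v hv
  le_of_le_neg v hv := by
    rw [approx_of_exp_le hm (by linarith [neg_le_abs v])]
    exact hb.le_of_le_neg v hv
  beta_lt := hb.beta_lt
  lt_sub := hb.lt_sub

lemma QuotientBounds.eventually_normalizedFeedback_approx (h : QuotientBounds f q μ κ C)
    (hb : Thresholds f μ β σ θ) : ∀ᶠ m in atTop,
      NormalizedFeedback (approx f m) μ (Real.exp (-(2 * m))) ∧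
      Thresholds (approx f m) μ β σ θ := by
  filter_upwards [eventually_gt_atTop 0,
    Real.tendsto_exp_neg_atTop_nhds_zero.eventually_le_const h.mu_pos,
    Real.tendsto_exp_neg_atTop_nhds_zero.eventually_le_const hb.beta_pos] with m hm hmμ hmβ
    using ⟨h.normalizedFeedback_approx hm hmμ, hb.approx hm hmβ⟩

lemma QuotientBounds.exists_large_cycle (h : QuotientBounds f q μ κ C) (hq : q 0 < Real.pi / 2)
    (hb : Thresholds f μ β σ θ) :
    ∃ p z₁ z₂, Cycle f p z₁ z₂ ∧ σ - β ≤ p 0 ∧ min (σ * θ) (σ - β) ≤ p (-1 + θ) := by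
  have hclosed : IsClosed ({p : ℝ → ℝ | σ - β ≤ p 0} ∩ {p | min (σ * θ) (σ - β) ≤ p (-1 + θ)}) :=
    (isClosed_le continuous_const (continuous_apply _)).inter
      (isClosed_le continuous_const (continuous_apply _))
  obtain ⟨p, hp, z₁, z₂, hcyc⟩ := h.exists_cycle_of_eventually hq hclosed (by
    filter_upwards [h.eventually_normalizedFeedback_approx hb] with m hm
    obtain ⟨p, z₁, z₂, hcyc, hp⟩ := hm.2.exists_large_cycle hm.1
    exact ⟨p, hp, z₁, z₂, hcyc⟩)
  exact ⟨p, z₁, z₂, hcyc, hp⟩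

lemma QuotientBounds.exists_small_cycle (h : QuotientBounds f q μ κ C) (hq : q 0 < Real.pi / 2)
    (hb : Thresholds f μ β σ θ) :
    ∃ p z₁ z₂, Cycle f p z₁ z₂ ∧ (p 0 ≤ β + μ * θ ∨ p (-1 + θ) ≤ β) := by
  have hclosed : IsClosed ({p : ℝ → ℝ | p 0 ≤ β + μ * θ} ∪ {p | p (-1 + θ) ≤ β}) :=
    (isClosed_le (continuous_apply _) continuous_const).union
      (isClosed_le (continuous_apply _) continuous_const)
  obtain ⟨p, hp, z₁, z₂, hcyc⟩ := h.exists_cycle_of_eventually hq hclosed (by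
    filter_upwards [h.eventually_normalizedFeedback_approx hb] with m hm
    obtain ⟨p, z₁, z₂, hcyc, hp⟩ := hm.2.exists_small_cycle hm.1
    exact ⟨p, hp.imp le_of_lt le_of_lt, z₁, z₂, hcyc⟩)
  exact ⟨p, z₁, z₂, hcyc, hp⟩

end TwoCycles

end DelayEquation

open DelayEquation in
theorem statement_6_general {f : ℝ → ℝ} {μ β σ : ℝ} (hf : NegativeFeedback f)
    (hb : ∀ x, |f x| ≤ μ) (hlarge : ∀ x, β ≤ |x| → σ ≤ |f x|) (hβ : 0 < β) (hσ : 0 < σ)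
    (hd : deriv f 0 ∈ Ioo (-(Real.pi / 2)) 0) (hβσ : β < σ / (2 + μ / σ)) :
    ∃ p q : ℝ → ℝ, IsSOP f p ∧ IsSOP f q ∧ (∀ s : ℝ, ∃ t : ℝ, q t ≠ p (t + s)) ∧
      PeriodThreeZeros p ∧ PeriodThreeZeros q := by
  obtain ⟨κ, C, h⟩ := hf.exists_quotientBounds hd.2 hb
  have hslope : -dslope f 0 0 < Real.pi / 2 := by rw [dslope_same]; exact neg_lt.1 hd.1
  obtain ⟨θ, hθ⟩ := hf.exists_thresholds hb hlarge hβ hσ hβσ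
  obtain ⟨p, z₁, z₂, hp, hp0, hpθ⟩ := h.exists_large_cycle hslope hθ
  obtain ⟨q, w₁, w₂, hq, hsmall⟩ := h.exists_small_cycle hslope hθ
  refine ⟨p, q, hp.isSOP, hq.isSOP, fun s => ?_, hp.periodThreeZeros, hq.periodThreeZeros⟩
  by_contra! hs
  rw [hp.eq_of_translate hq hs] at hsmall
  have hμθ : 0 < μ * θ := mul_pos h.mu_pos hθ.theta_pos
  have hlt : β < min (σ * θ) (σ - β) := lt_min hθ.beta_lt (by linarith [hθ.lt_sub])
  rcases hsmall with hle | hle <;> linarith [hθ.lt_sub]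

theorem statement_6 (f : ℝ → ℝ) (μ β σ : ℝ) (hμ : 0 < μ) (hβ : 0 < β) (hσ : 0 < σ)
    (hH : HypH f) (hH' : HypH' f μ β σ)
    (hderiv : -(Real.pi / 2) < deriv f 0)
    (hβσ : β < σ / (2 + μ / σ)) :
    ∃ p q : ℝ → ℝ, IsSOP f p ∧ IsSOP f q ∧
      (∀ s : ℝ, ∃ t : ℝ, q t ≠ p (t + s)) ∧
      PeriodThreeZeros p ∧ PeriodThreeZeros q :=
  statement_6_general ⟨hH.1, hH.2.1⟩ hH'.1 hH'.2 hβ hσ ⟨hderiv, hH.2.2.2⟩ hβσ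
end

section
/- Suppose f satisfies (H) and (H') with constants μ, β, σ > 0, and β < σ/(2 + μ/σ). Let γ > 0 satisfy γ + β/σ < 1 and β ≤ (σ - (σ+μ)γ)/(2 + μ/σ). Let x be a solution on [-1,∞) of x'(t) = f(x(t-1)) whose initial segment φ belongs to K (with M = μ) and satisfies φ(s) ≥ σs + σ(1-γ) for all s ∈ [-1+γ, -β/σ]. Then x has at least two positive zeros, and if z₂ denotes its second positive zero, the segment ψ(s) := x(z₂ + 1 + s) for s ∈ [-1,0] belongs to K and satisfies ψ(s) > σs + σ(1-γ) for all s ∈ [-1+γ, -β/σ]. -/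
/-!
Put `r = γ + β / σ`; the condition on `γ` amounts to `β + μ r ≤ σ (1 - r)`. The line bound then
gives `x ≥ β` on `[r - 1, 0]` and `x 0 ≥ β + μ r`, so `x' ≥ -μ` keeps `x ≥ β` on the whole unit
interval `[r - 1, r]`. Let `τ` be the first time in `[r, ∞)` at which `x = β`; then `x' ≤ -σ` on
`[r, τ + 1]`. Hence `x` has its first positive zero `z` in `(τ, τ + β / σ]`, and `x t ≤ -σ (t - z)`
for `t` from `z` up to `z + 1 - β / σ`. So the segment `s ↦ -x (z + 1 + s)` lies in `K` and above
the line `σ (s + 1)`, which is strictly higher than the original line `σ s + σ (1 - γ)`. The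
reflected solution obeys the equation for `u ↦ -f (-u)`, which satisfies the same hypotheses, so
the argument applies once more and leads to the second zero.
-/

open Set Filter

lemma exists_first_hit {α δ : Type*} [ConditionallyCompleteLinearOrder α] [TopologicalSpace α]
    [OrderTopology α] [DenselyOrdered α] [LinearOrder δ] [TopologicalSpace δ]
    [OrderClosedTopology δ] {g : α → δ} {a b : α} {c : δ} (hab : a ≤ b)
    (hg : ContinuousOn g (Icc a b)) (ha : c ≤ g a) (hb : g b ≤ c) :
    ∃ t ∈ Icc a b, g t = c ∧ ∀ s ∈ Ico a t, c < g s := by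
  have hcompact : IsCompact (Icc a b ∩ g ⁻¹' {c}) :=
    isCompact_Icc.of_isClosed_subset
      (hg.preimage_isClosed_of_isClosed isClosed_Icc isClosed_singleton) inter_subset_left
  obtain ⟨t, ⟨ht, htc⟩, hleast⟩ :=
    hcompact.exists_isLeast (intermediate_value_Icc' hab hg ⟨hb, ha⟩)
  refine ⟨t, ht, htc, fun s hs => ?_⟩
  by_contra! hsc
  have hsb : s ≤ b := hs.2.le.trans ht.2
  obtain ⟨u, hu, huc⟩ :=
    intermediate_value_Icc' hs.1 (hg.mono (Icc_subset_Icc_right hsb)) ⟨hsc, ha⟩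
  exact (hu.2.trans_lt hs.2).not_ge (hleast ⟨⟨hu.1, hu.2.trans hsb⟩, huc⟩)

namespace IsSolOn

variable {f x : ℝ → ℝ} {a b C : ℝ}

lemma continuousOn_Icc (hx : IsSolOn f x) (ha : -1 ≤ a) : ContinuousOn x (Icc a b) :=
  hx.1.mono fun _ ht => ha.trans ht.1

lemma comp_const_add (hx : IsSolOn f x) (ha : 0 ≤ a) : IsSolOn f fun t => x (a + t) := by
  refine ⟨hx.1.comp (by fun_prop) fun t (ht : -1 ≤ t) => ?_, fun t ht => ?_⟩
  · exact mem_Ici.2 (by linarith)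
  · simpa only [add_sub_assoc] using (hx.2 (a + t) (by linarith)).comp_const_add a t

lemma neg (hx : IsSolOn f x) : IsSolOn (fun u => -f (-u)) fun t => -x t :=
  ⟨hx.1.neg, fun t ht => by simpa only [neg_neg] using (hx.2 t ht).fun_neg⟩

lemma sub_le (hx : IsSolOn f x) (ha : 0 ≤ a) (hab : a ≤ b)
    (h : ∀ t ∈ Ioo (a - 1) (b - 1), f (x t) ≤ C) : x b - x a ≤ C * (b - a) := by
  have hderiv : ∀ t ∈ Ioo a b, HasDerivAt x (f (x (t - 1))) t :=
    fun t ht => hx.2 t (ha.trans_lt ht.1)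
  refine (convex_Icc a b).image_sub_le_mul_sub_of_deriv_le (hx.continuousOn_Icc (by linarith))
    ?_ ?_ a (left_mem_Icc.2 hab) b (right_mem_Icc.2 hab) hab
  all_goals rw [interior_Icc]
  · exact fun t ht => (hderiv t ht).differentiableAt.differentiableWithinAt
  · intro t ht
    rw [(hderiv t ht).deriv]
    exact h (t - 1) ⟨by linarith [ht.1], by linarith [ht.2]⟩

lemma le_sub (hx : IsSolOn f x) (ha : 0 ≤ a) (hab : a ≤ b)
    (h : ∀ t ∈ Ioo (a - 1) (b - 1), C ≤ f (x t)) : C * (b - a) ≤ x b - x a := by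
  have hneg := hx.neg.sub_le (C := -C) ha hab fun t ht => by
    simpa only [neg_neg, neg_le_neg_iff] using h t ht
  linarith

lemma antitoneOn_Icc (hx : IsSolOn f x) (ha : 0 ≤ a)
    (h : ∀ t ∈ Ioo (a - 1) (b - 1), f (x t) ≤ 0) : AntitoneOn x (Icc a b) := by
  intro s hs t ht hst
  have hsub := hx.sub_le (C := 0) (ha.trans hs.1) hst fun u hu =>
    h u ⟨by linarith [hs.1, hu.1], by linarith [ht.2, hu.2]⟩
  linarith

end IsSolOn

/-- The one-sided form of (H) and (H'): a nonlinearity pulling positive solutions down at a rate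
at most `μ`, and at least `σ` above the level `β`. Passing to `u ↦ -f (-u)` gives the
corresponding conditions for negative solutions. -/
structure PullsDown (f : ℝ → ℝ) (μ β σ : ℝ) : Prop where
  neg_le : ∀ u, -μ ≤ f u
  nonpos : ∀ u, 0 < u → f u ≤ 0
  le_neg : ∀ u, β ≤ u → f u ≤ -σ

lemma HypH.mul_nonpos {f : ℝ → ℝ} (h : HypH f) (u : ℝ) : u * f u ≤ 0 := by
  rcases eq_or_ne u 0 with rfl | hu
  · exact (zero_mul _).le
  · exact (h.2.1 u hu).le

namespace HypH'

variable {f : ℝ → ℝ} {μ β σ : ℝ}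

lemma reflect (h : HypH' f μ β σ) : HypH' (fun u => -f (-u)) μ β σ :=
  ⟨fun u => by simpa only [abs_neg] using h.1 (-u),
    fun u hu => by simpa only [abs_neg] using h.2 (-u) (by rwa [abs_neg])⟩

lemma pullsDown (h : HypH' f μ β σ) (hβ : 0 < β) (hf : ∀ u, u * f u ≤ 0) :
    PullsDown f μ β σ := by
  have hnonpos : ∀ u, 0 < u → f u ≤ 0 := fun u hu => nonpos_of_mul_nonpos_right (hf u) hu
  refine ⟨fun u => (abs_le.1 (h.1 u)).1, hnonpos, fun u hu => ?_⟩
  have habs := h.2 u (hu.trans (le_abs_self u))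
  rw [abs_of_nonpos (hnonpos u (hβ.trans_le hu))] at habs
  linarith

end HypH'

section Arithmetic

variable {μ β σ γ : ℝ}

lemma add_mul_le_mul_one_sub_of_le_div (hμ : 0 ≤ μ) (hσ : 0 < σ)
    (h : β ≤ (σ - (σ + μ) * γ) / (2 + μ / σ)) :
    β + μ * (γ + β / σ) ≤ σ * (1 - (γ + β / σ)) := by
  rw [le_div_iff₀ (by positivity)] at h
  have hσρ : σ * (β / σ) = β := mul_div_cancel₀ _ hσ.ne'
  have hμρ : β * (μ / σ) = μ * (β / σ) := by ring
  linarith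

lemma sub_one_le_neg_div_of_add_mul_le (hμ : 0 ≤ μ) (hβ : 0 ≤ β) (hσ : 0 < σ) (hγ : 0 ≤ γ)
    (h : β + μ * (γ + β / σ) ≤ σ * (1 - (γ + β / σ))) : γ + β / σ - 1 ≤ -(β / σ) := by
  have hμr : 0 ≤ μ * (γ + β / σ) := by positivity
  have hρ : β / σ ≤ 1 - (γ + β / σ) := (div_le_iff₀' hσ).2 (by linarith)
  linarith

end Arithmetic

namespace PullsDown

variable {f x : ℝ → ℝ} {μ β σ γ a τ z : ℝ}

lemma nonneg (hf : PullsDown f μ β σ) : 0 ≤ μ := by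
  linarith [hf.neg_le 1, hf.nonpos 1 one_pos]

lemma sub_le_of_le (hf : PullsDown f μ β σ) (hx : IsSolOn f x) (ha : 0 ≤ a)
    (h : ∀ t ∈ Icc (a - 1) τ, β ≤ x t) {s t : ℝ} (has : a ≤ s) (hst : s ≤ t)
    (htτ : t ≤ τ + 1) : x t - x s ≤ -σ * (t - s) :=
  hx.sub_le (ha.trans has) hst fun u hu =>
    hf.le_neg _ (h u ⟨by linarith [hu.1], by linarith [hu.2]⟩)

lemma exists_exit_time (hf : PullsDown f μ β σ) (hσ : 0 < σ) (hx : IsSolOn f x) (ha : 0 ≤ a)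
    (h : ∀ t ∈ Icc (a - 1) a, β ≤ x t) :
    ∃ τ, a ≤ τ ∧ x τ = β ∧ ∀ t ∈ Icc (a - 1) τ, β ≤ x t := by
  have hxa : β ≤ x a := h a ⟨by linarith, le_rfl⟩
  have hreach : ∃ T, a ≤ T ∧ x T ≤ β := by
    by_contra! hstay
    have hge : ∀ t, a - 1 ≤ t → β ≤ x t := fun t ht =>
      (le_total t a).elim (fun hta => h t ⟨ht, hta⟩) fun hat => (hstay t hat).le
    have hT : a ≤ a + (x a - β) / σ := le_add_of_nonneg_right (by bound)
    have hdrop := hf.sub_le_of_le hx ha (fun t ht => hge t ht.1) le_rfl hT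
      (le_add_of_nonneg_right zero_le_one)
    rw [add_sub_cancel_left, neg_mul, mul_div_cancel₀ _ hσ.ne'] at hdrop
    linarith [hstay _ hT]
  obtain ⟨T, haT, hxT⟩ := hreach
  obtain ⟨τ, hτ, hxτ, hlt⟩ := exists_first_hit haT (hx.continuousOn_Icc (by linarith)) hxa hxT
  refine ⟨τ, hτ.1, hxτ, fun t ht => ?_⟩
  rcases le_total t a with hta | hat
  · exact h t ⟨ht.1, hta⟩
  · rcases ht.2.eq_or_lt with rfl | htτ
    · exact hxτ.ge
    · exact (hlt t ⟨hat, htτ⟩).le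

lemma exists_first_zero (hf : PullsDown f μ β σ) (hβ : 0 < β) (hβσ : β ≤ σ)
    (hx : IsSolOn f x) (ha : 0 ≤ a) (h : ∀ t ∈ Icc (a - 1) a, β ≤ x t) :
    ∃ z, a < z ∧ x z = 0 ∧ (∀ t ∈ Ico (a - 1) z, 0 < x t) ∧
      ∀ t ∈ Icc z (z + 1 - β / σ), σ * (t - z) ≤ -x t := by
  have hσ : 0 < σ := hβ.trans_le hβσ
  obtain ⟨τ, haτ, hxτ, hge⟩ := hf.exists_exit_time hσ hx ha h
  have hslope {s t : ℝ} := hf.sub_le_of_le hx ha hge (s := s) (t := t)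
  have hτ_le : τ ≤ τ + β / σ := le_add_of_nonneg_right (by positivity)
  have hend : x (τ + β / σ) ≤ 0 := by
    have hdrop := hslope haτ hτ_le (by gcongr; exact (div_le_one hσ).2 hβσ)
    rw [add_sub_cancel_left, neg_mul, mul_div_cancel₀ _ hσ.ne'] at hdrop
    linarith
  obtain ⟨z, ⟨hτz, hz⟩, hxz, hpos⟩ :=
    exists_first_hit hτ_le (hx.continuousOn_Icc (by linarith)) (hβ.le.trans_eq hxτ.symm) hend
  have hτz' : τ < z := hτz.lt_of_ne fun hτz => by subst hτz; linarith
  refine ⟨z, haτ.trans_lt hτz', hxz, fun t ht => ?_, fun t ht => ?_⟩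
  · rcases le_total t τ with htτ | hτt
    · exact hβ.trans_le (hge t ⟨ht.1, htτ⟩)
    · exact hpos t ⟨hτt, ht.2⟩
  · linarith [hslope (haτ.trans hτz) ht.1 (by linarith [ht.2])]

lemma memK_neg_segment (hf : PullsDown f μ β σ) (hx : IsSolOn f x) (hz : 0 ≤ z) (hxz : x z = 0)
    (hpos : ∀ t ∈ Ioo (z - 1) z, 0 < x t) : MemK μ fun s => -x (z + 1 + s) := by
  have hanti : AntitoneOn x (Icc z (z + 1)) :=
    hx.antitoneOn_Icc hz fun t ht => hf.nonpos _ (hpos t (by simpa using ht))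
  have hmem : ∀ s ∈ Icc (-1 : ℝ) 0, z + 1 + s ∈ Icc z (z + 1) := fun s hs =>
    ⟨by linarith [hs.1], by linarith [hs.2]⟩
  refine ⟨(hx.comp_const_add (by linarith)).neg.continuousOn_Icc le_rfl, by simp [hxz],
    fun s hs t ht hst => neg_le_neg (hanti (hmem s hs) (hmem t ht) (by gcongr)), fun s hs => ?_⟩
  have hupper := hanti (left_mem_Icc.2 (by linarith)) (hmem s hs) (hmem s hs).1
  have hlower := hx.le_sub hz (hmem s hs).1 fun t _ => hf.neg_le (x t)
  rw [abs_neg, abs_of_nonpos (hupper.trans_eq hxz)]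
  nlinarith [mul_nonneg hf.nonneg (neg_nonneg.2 hs.2)]

lemma le_of_line_le (hf : PullsDown f μ β σ) (hβ : 0 ≤ β) (hσ : 0 < σ) (hγ : 0 ≤ γ)
    (hthr : β + μ * (γ + β / σ) ≤ σ * (1 - (γ + β / σ))) (hx : IsSolOn f x)
    (hmono : MonotoneOn x (Icc (-1) 0))
    (hline : ∀ s ∈ Icc (-1 + γ) (-(β / σ)), σ * s + σ * (1 - γ) ≤ x s) :
    ∀ t ∈ Icc (γ + β / σ - 1) (γ + β / σ), β ≤ x t := by
  have hρ : 0 ≤ β / σ := by positivity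
  have hσρ : σ * (β / σ) = β := mul_div_cancel₀ _ hσ.ne'
  have hgap := sub_one_le_neg_div_of_add_mul_le hf.nonneg hβ hσ hγ hthr
  intro t ht
  rcases le_total t 0 with ht0 | ht0
  · have hleft := hline (γ + β / σ - 1) ⟨by linarith, hgap⟩
    have hleft_le := hmono ⟨by linarith, by linarith⟩ ⟨by linarith [ht.1], ht0⟩ ht.1
    linarith
  · have hright := hline (-(β / σ)) ⟨by linarith, le_rfl⟩
    have hright_le := hmono (a := -(β / σ)) (b := 0) ⟨by linarith, by linarith⟩
      ⟨by linarith, le_rfl⟩ (by linarith)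
    have hdrop := hx.le_sub le_rfl ht0 fun u _ => hf.neg_le (x u)
    have hμt : μ * t ≤ μ * (γ + β / σ) := mul_le_mul_of_nonneg_left ht.2 hf.nonneg
    linarith

lemma exists_half_turn (hf : PullsDown f μ β σ) (hβ : 0 < β) (hσ : 0 < σ) (hγ : 0 ≤ γ)
    (hthr : β + μ * (γ + β / σ) ≤ σ * (1 - (γ + β / σ))) (hx : IsSolOn f x)
    (hmono : MonotoneOn x (Icc (-1) 0))
    (hline : ∀ s ∈ Icc (-1 + γ) (-(β / σ)), σ * s + σ * (1 - γ) ≤ x s) :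
    ∃ z, 0 < z ∧ x z = 0 ∧ (∀ t ∈ Ico (γ + β / σ - 1) z, 0 < x t) ∧
      MemK μ (fun s => -x (z + 1 + s)) ∧
      ∀ s ∈ Icc (-1) (-(β / σ)), σ * (s + 1) ≤ -x (z + 1 + s) := by
  have hρ : 0 < β / σ := div_pos hβ hσ
  have hgap := sub_one_le_neg_div_of_add_mul_le hf.nonneg hβ.le hσ hγ hthr
  have hβσ : β ≤ σ := (div_le_one hσ).1 (by linarith)
  obtain ⟨z, hrz, hxz, hpos, hbelow⟩ := hf.exists_first_zero hβ hβσ hx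
    (by linarith) (hf.le_of_line_le hβ.le hσ hγ hthr hx hmono hline)
  refine ⟨z, by linarith, hxz, hpos, hf.memK_neg_segment hx (by linarith) hxz fun t ht =>
    hpos t ⟨by linarith [ht.1], ht.2⟩, fun s hs => ?_⟩
  have hseg := hbelow (z + 1 + s) ⟨by linarith [hs.1], by linarith [hs.2]⟩
  linarith

end PullsDown

theorem statement_7_general {f x : ℝ → ℝ} {μ β σ γ : ℝ} (hβ : 0 < β) (hσ : 0 < σ)
    (hf : ∀ u, u * f u ≤ 0) (hH' : HypH' f μ β σ) (hγ : 0 < γ)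
    (hγ2 : β ≤ (σ - (σ + μ) * γ) / (2 + μ / σ)) (hx : IsSolOn f x)
    (hmono : MonotoneOn x (Icc (-1) 0))
    (hV : ∀ s ∈ Icc (-1 + γ) (-(β / σ)), σ * s + σ * (1 - γ) ≤ x s) :
    ∃ z₁ z₂ : ℝ, 0 < z₁ ∧ z₁ < z₂ ∧ x z₁ = 0 ∧ x z₂ = 0 ∧
      (∀ t ∈ Ioo 0 z₁, x t ≠ 0) ∧ (∀ t ∈ Ioo z₁ z₂, x t ≠ 0) ∧
      MemK μ (fun s => x (z₂ + 1 + s)) ∧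
      ∀ s ∈ Icc (-1 + γ) (-(β / σ)), σ * s + σ * (1 - γ) < x (z₂ + 1 + s) := by
  have hf₁ := hH'.pullsDown hβ hf
  have hf₂ := hH'.reflect.pullsDown hβ fun u => by simpa only [neg_mul_comm] using hf (-u)
  have hthr := add_mul_le_mul_one_sub_of_le_div hf₁.nonneg hσ hγ2
  have hgap := sub_one_le_neg_div_of_add_mul_le hf₁.nonneg hβ.le hσ hγ.le hthr
  have hρ : 0 < β / σ := div_pos hβ hσ
  have hσγ : 0 < σ * γ := mul_pos hσ hγ
  obtain ⟨z, hz, hxz, hpos, hK, hline⟩ := hf₁.exists_half_turn hβ hσ hγ.le hthr hx hmono hV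
  obtain ⟨w, hw, hxw, hneg, hK', hline'⟩ := hf₂.exists_half_turn hβ hσ hγ.le hthr
    (hx.comp_const_add (a := z + 1) (by linarith)).neg hK.2.2.1
    fun s hs => by linarith [hline s ⟨by linarith [hs.1], hs.2⟩]
  simp only [neg_neg, ← add_assoc] at hxw hK' hline'
  refine ⟨z, z + 1 + w, hz, by linarith, hxz, neg_eq_zero.1 hxw,
    fun t ht => (hpos t ⟨by linarith [ht.1], ht.2⟩).ne', fun t ht => ?_, hK',
    fun s hs => by linarith [hline' s ⟨by linarith [hs.1], hs.2⟩]⟩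
  obtain ⟨s, rfl⟩ : ∃ s, t = z + 1 + s := ⟨t - (z + 1), by ring⟩
  suffices hxs : 0 < -x (z + 1 + s) from (neg_pos.1 hxs).ne
  have hs : s ∈ Ioo (-1) w := ⟨by linarith [ht.1], by linarith [ht.2]⟩
  rcases le_total s (-(β / σ)) with hsρ | hρs
  · exact (mul_pos hσ (by linarith [hs.1])).trans_le (hline s ⟨hs.1.le, hsρ⟩)
  · exact hneg s ⟨hgap.trans hρs, hs.2⟩

theorem statement_7 (f : ℝ → ℝ) (μ β σ : ℝ) (hμ : 0 < μ) (hβ : 0 < β) (hσ : 0 < σ)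
    (hH : HypH f) (hH' : HypH' f μ β σ) (hβσ : β < σ / (2 + μ / σ))
    (γ : ℝ) (hγ : 0 < γ) (hγ1 : γ + β / σ < 1)
    (hγ2 : β ≤ (σ - (σ + μ) * γ) / (2 + μ / σ))
    (x : ℝ → ℝ) (hx : IsSolOn f x) (hK : MemK μ x)
    (hV : ∀ s ∈ Icc (-1 + γ) (-(β / σ)), x s ≥ σ * s + σ * (1 - γ)) :
    ∃ z₁ z₂ : ℝ, 0 < z₁ ∧ z₁ < z₂ ∧ x z₁ = 0 ∧ x z₂ = 0 ∧
      (∀ t ∈ Ioo 0 z₁, x t ≠ 0) ∧ (∀ t ∈ Ioo z₁ z₂, x t ≠ 0) ∧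
      MemK μ (fun s => x (z₂ + 1 + s)) ∧
      ∀ s ∈ Icc (-1 + γ) (-(β / σ)), σ * s + σ * (1 - γ) < x (z₂ + 1 + s) :=
  statement_7_general hβ hσ hH.mul_nonpos hH' hγ hγ2 hx hK.2.2.1 hV
end
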